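/- Let p be a prime, n = d + m with d, m ≥ 1, and let Ψ = (ψ₁,…,ψₙ) be an n-tuple of approximation functions such that for each i the limit ψ_i* := lim_{q→∞} (−log ψ_i(q))/(log q) exists, is positive and finite. Suppose Ψ* = (ψ₁*,…,ψₙ*) satisfies Σ_{i=1}^m ψ*_{d+i} < m+1, Σ_{i=1}^n ψ_i* > n+1, and ψ_i* > 1 for all i. Then for every α ∈ ℤ_p^m with τ(α) = m+1, the Hausdorff dimension of 𝔚_n(Ψ) ∩ Π_α equals min_{1≤i≤d} ( n + 1 − Σ_{i=1}^m ψ*_{d+i} + Σ_{1≤j≤d, ψ_j* ≤ ψ_i*} (ψ_i* − ψ_j*) ) / ψ_i*. -/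

import Mathlib

/-!
The map `x ↦ (x, α)` is an isometry of `ℤ_p^d` onto `Π_α`, so the theorem concerns the set of
`x ∈ ℤ_p^d` that are approximable together with `α`. With the denominators sorted by their size
`p ^ N`, this is up to arbitrarily small changes of the exponents the limsup of the sets
`Hit α N k k'` of the `x` that agree with a rational point of denominator at most `p ^ N` to
precision `p ^ (-k j)`, `k j ≈ ψ_j* N`, while `α` agrees with it to precision `p ^ (-k' i)`,
`k' i ≈ ψ_{d+i}* N`. Put `S = ∑ i, ψ_{d+i}*`.

**Upper bound.** The integer vectors `(q₀, q)` with `q₀ α ≡ q` to precision `k'` form a lattice, and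
`τ(α) = m + 1` says that
its shortest vector has length at least about `p ^ (N S / (m + 1))` (`no_short`).
Packing leaves at most about `p ^ (N (m + 1 - S))` lattice points of length `p ^ N`
(`card_short_le`), each of which comes with `p ^ (N d)` numerators for the free coordinates. This
gives an efficient cover by balls of radius `p ^ (-ψ_i* N)` for each `i` (`hit_cover`,
`upper_bound_core`), and the Hausdorff–Cantelli lemma (`dimH_limsup_le`) bounds the dimension by
each of the quotients in the minimum.

**Lower bound.** Let `a j ≤ ψ_j*` be truncated exponents with `∑ j, a j + S` slightly less than
`n + 1`. By the count of short vectors of the lattice of `α`, for all but a small proportion of the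
boxes with sides `p ^ (-a j N)` the lattice of vectors `(q₀, q)` approximating the box has no short
vector (`bad_card_le`), so its covering radius is small (`covering_radius`). A lattice with small
covering radius contains a vector of length less than `p ^ N` whose leading coordinate is coprime to
`p` and to all other coordinates (`exists_good_vector`); hence almost every box contains an
admissible rational point (`hit_most`). Equidistributing mass on the neighbourhoods of these points
gives a local lower bound on the cost of covering the hit set inside any ball (`local_content`,
`local_content_eventually`); the exponent condition is piecewise linear in the scale and needs to be
checked at the exponents `ψ_i*` only (`le_of_breakpoints`). Covering costs survive intersections
with hit sets at much larger scales (`CoverCost.inter`), so that a rapidly increasing sequence of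
scales produces a Cantor set of the required dimension (`exists_cantor`, `le_dimH_of_coverCost`,
`lower_bound`).
-/


open scoped BigOperators ENNReal Classical
open MeasureTheory

/-- The Diophantine exponent of `α ∈ ℤ_p^m`. -/
noncomputable def dioExp {p : ℕ} [Fact p.Prime] {m : ℕ} (α : Fin m → ℤ_[p]) : ℝ :=
  sSup {s : ℝ | ∃ τ : Fin m → ℝ, s = ∑ i, τ i ∧
    ∀ Q₀ : ℕ, ∃ Q : ℕ, Q₀ ≤ Q ∧ ∃ q₀ : ℤ, ∃ q : Fin m → ℤ,
      0 < q₀ ∧ q₀ ≤ (Q : ℤ) ∧ (∀ i, |q i| ≤ (Q : ℤ)) ∧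
      ∀ i, ‖(q₀ : ℤ_[p]) * α i - (q i : ℤ_[p])‖ < (Q : ℝ) ^ (-(τ i))}

/-- The set `𝔄_{q₀}(Ψ)` of `Ψ`-approximable points with denominator `q₀`. -/
def AsetF {p : ℕ} [Fact p.Prime] {n : ℕ} (Ψ : Fin n → ℕ → ℝ) (q₀ : ℕ) :
    Set (Fin n → ℤ_[p]) :=
  ⋃ (q : Fin n → ℤ) (_ : ∀ i, |q i| ≤ (q₀ : ℤ) ∧ Int.gcd (q i) q₀ = 1),
    {x | ∀ i, ‖(x i : ℚ_[p]) - (q i : ℚ_[p]) / (q₀ : ℚ_[p])‖ < Ψ i q₀}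

/-- The set `𝔚_n(Ψ) = limsup_{q₀ → ∞} 𝔄_{q₀}(Ψ)` of `Ψ`-approximable points. -/
def WsetF {p : ℕ} [Fact p.Prime] {n : ℕ} (Ψ : Fin n → ℕ → ℝ) :
    Set (Fin n → ℤ_[p]) :=
  ⋂ (Q : ℕ), ⋃ (q₀ : ℕ) (_ : Q ≤ q₀), AsetF Ψ q₀

/-- The coordinate hyperplane `Π_α ⊆ ℤ_p^{d+m}` determined by `α ∈ ℤ_p^m`. -/
def Pialpha {p : ℕ} [Fact p.Prime] {d m : ℕ} (α : Fin m → ℤ_[p]) :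
    Set (Fin (d + m) → ℤ_[p]) :=
  {x | ∀ i : Fin m, x (Fin.natAdd d i) = α i}

/-! ### Covering radius of a lattice -/

/-- The kernel of `π : ℤ^ι → G` is a lattice of index at most `|G|`; if it has no nonzero vector of
sup norm less than `h`, then every `x` is within `|G| / h ^ (|ι| - 1)` of it. Indeed let `y` be a
shortest element of the coset of `x`, of norm `R`. The translates of the box `{0, …, h - 1}^ι` by
the truncations of `y` at the heights `j h ≤ R` are inequivalent modulo the kernel, since a
coincidence between two translates would shorten `y` and one inside a translate would give a short
kernel vector. Hence `(R / h + 1) h ^ |ι| ≤ |G|`. -/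
theorem covering_radius {ι : Type*} [Fintype ι] {G : Type*} [AddCommGroup G] [Fintype G]
    (π : (ι → ℤ) →+ G) (h : ℕ) (hh : 0 < h)
    (hker : ∀ v, π v = 0 → (∀ i, |v i| < h) → v = 0) (x : ι → ℤ) :
    ∃ v, π v = 0 ∧ ∀ i, |v i - x i| * (h : ℤ) ^ Fintype.card ι ≤ Fintype.card G * h := by
  -- a representative of the coset of `x` of least sup norm `R`
  have hex : ∃ R : ℕ, ∃ y, π y = π x ∧ ∀ i, |y i| ≤ (R : ℤ) := by
    refine ⟨∑ i, (x i).natAbs, x, rfl, fun i => ?_⟩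
    rw [Int.abs_eq_natAbs]
    exact_mod_cast Finset.single_le_sum (f := fun i => (x i).natAbs) (fun _ _ => Nat.zero_le _)
      (Finset.mem_univ i)
  obtain ⟨y, hyx, hyR⟩ := Nat.find_spec hex
  have hmin : ∀ R' < Nat.find hex, ¬ ∃ y, π y = π x ∧ ∀ i, |y i| ≤ (R' : ℤ) :=
    fun R' h => Nat.find_min hex h
  set R := Nat.find hex with hRdef
  clear_value R
  -- `f` maps the box points attached to the truncations of `y` at multiples of `h` to `G`
  let clip : ℕ → ι → ℤ := fun r i => max (-(r : ℤ)) (min (y i) r)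
  let f : Fin (R / h + 1) × (ι → Fin h) → G :=
    fun ja => π (fun i => clip (ja.1 * h) i + ((ja.2 i : ℕ) : ℤ))
  have key : ∀ (j j' : Fin (R / h + 1)) (a a' : ι → Fin h), j' < j → f (j, a) ≠ f (j', a') := by
    intro j j' a a' hlt heq
    have hj : (j : ℕ) * h ≤ R := by
      have h1 : (j : ℕ) ≤ R / h := Nat.lt_succ_iff.mp j.2
      calc (j : ℕ) * h ≤ R / h * h := Nat.mul_le_mul_right _ h1
        _ ≤ R := Nat.div_mul_le_self _ _
    have hjj : (j' : ℕ) * h + h ≤ j * h := by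
      have : (j' : ℕ) + 1 ≤ j := hlt
      calc (j' : ℕ) * h + h = (j' + 1) * h := by ring
        _ ≤ j * h := Nat.mul_le_mul_right _ this
    have hRpos : 0 < R := by omega
    refine hmin (R - 1) (by omega) ⟨y - ((fun i => clip (j * h) i + ((a i : ℕ) : ℤ)) -
      (fun i => clip (j' * h) i + ((a' i : ℕ) : ℤ))), ?_, ?_⟩
    · rw [map_sub, map_sub, hyx]
      have : f (j, a) - f (j', a') = 0 := sub_eq_zero.mpr heq
      simp only [f] at this
      rw [this, sub_zero]
    · intro i
      have h1 := hyR i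
      have h2 := (a i).2
      have h3 := (a' i).2
      simp only [Pi.sub_apply, clip]
      generalize (j : ℕ) * h = A at *
      generalize (j' : ℕ) * h = B at *
      rw [abs_le] at h1 ⊢
      push_cast [Nat.cast_sub (show 1 ≤ R by omega)]
      omega
  have finj : Function.Injective f := by
    rintro ⟨j, a⟩ ⟨j', a'⟩ heq
    rcases lt_trichotomy j j' with hlt | rfl | hlt
    · exact absurd heq.symm (key _ _ _ _ hlt)
    · have h0 : π (fun i => (((a i : ℕ) : ℤ) - ((a' i : ℕ) : ℤ))) = 0 := by
        have h1 : f (j, a) - f (j, a') = 0 := sub_eq_zero.mpr heq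
        simp only [f] at h1
        rw [← map_sub] at h1
        convert h1 using 2
        ext i; simp
      have h2 := hker _ h0 (by
        intro i
        have h2 := (a i).2
        have h3 := (a' i).2
        rw [abs_lt]; omega)
      have : a = a' := by
        funext i
        have := congrFun h2 i
        simp only [Pi.zero_apply] at this
        exact Fin.ext (by omega)
      rw [this]
    · exact absurd heq (key _ _ _ _ hlt)
  have hcard := Fintype.card_le_of_injective f finj
  simp only [Fintype.card_prod, Fintype.card_fin, Fintype.card_fun] at hcard
  refine ⟨x - y, by rw [map_sub, hyx, sub_self], fun i => ?_⟩
  have h1 : |(x - y) i - x i| ≤ (R : ℤ) := by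
    have := hyR i
    rw [← abs_neg] at this
    simpa using this
  have h2 : R ≤ (R / h + 1) * h := by
    have := Nat.div_add_mod R h
    have h4 := Nat.mod_lt R hh
    nlinarith
  have h3 : R * h ^ Fintype.card ι ≤ Fintype.card G * h :=
    calc R * h ^ Fintype.card ι ≤ ((R / h + 1) * h) * h ^ Fintype.card ι :=
          Nat.mul_le_mul_right _ h2
      _ = ((R / h + 1) * h ^ Fintype.card ι) * h := by ring
      _ ≤ _ := Nat.mul_le_mul_right _ hcard
  calc |(x - y) i - x i| * (h : ℤ) ^ Fintype.card ι ≤ R * (h : ℤ) ^ Fintype.card ι := by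
        gcongr
    _ ≤ _ := by exact_mod_cast h3

/-! ### Lattice vectors with coprime coordinates -/

/-- Fewer than `Y` primes, all at least `Y`, leave some `t < Y` with `A + t B` divisible by none of
them, because each of the primes rules out at most one `t < Y`. -/
theorem exists_avoid (F : Finset ℕ) (Y : ℕ) (hF : ∀ l ∈ F, l.Prime ∧ Y ≤ l) (A B : ℤ)
    (hAB : ∀ l ∈ F, ¬ ((l : ℤ) ∣ A ∧ (l : ℤ) ∣ B)) (hc : F.card < Y) :
    ∃ t : ℕ, t < Y ∧ ∀ l ∈ F, ¬ (l : ℤ) ∣ A + t * B := by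
  by_contra! hcon
  choose! g hgF hg using hcon
  obtain ⟨t, ht, t', ht', hne, heq⟩ := Finset.exists_ne_map_eq_of_card_lt_of_maps_to
    (s := Finset.range Y) (t := F) (f := g) (by simpa using hc)
    (fun t ht => hgF t (Finset.mem_range.mp ht))
  rw [Finset.mem_range] at ht ht'
  have h1 := hg t ht
  have h2 := hg t' ht'
  rw [← heq] at h2
  obtain ⟨hp, hY⟩ := hF _ (hgF t ht)
  have h3 : ((g t : ℕ) : ℤ) ∣ ((t : ℤ) - t') * B := by
    have e : ((t : ℤ) - t') * B = (A + t * B) - (A + t' * B) := by ring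
    rw [e]; exact dvd_sub h1 h2
  have hpi : Prime ((g t : ℕ) : ℤ) := Nat.prime_iff_prime_int.mp hp
  rcases hpi.dvd_or_dvd h3 with h4 | h4
  · have := Int.eq_zero_of_abs_lt_dvd h4 (by rw [abs_lt]; omega)
    omega
  · refine hAB _ (hgF t ht) ⟨?_, h4⟩
    exact (dvd_add_left (Dvd.dvd.mul_left h4 _)).mp h1

theorem card_large_primes_le (x : ℤ) (hx : x ≠ 0) (Y K : ℕ) (hxK : |x| < (Y : ℤ) ^ (K + 1))
    (F : Finset ℕ) (hF : ∀ l ∈ F, l.Prime ∧ Y ≤ l ∧ (l : ℤ) ∣ x) : F.card ≤ K := by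
  by_contra! hlt
  have h1 : ∏ l ∈ F, l ∣ x.natAbs :=
    Finset.prod_primes_dvd _ (fun l hl => (hF l hl).1.prime)
      (fun l hl => Int.natCast_dvd.mp (hF l hl).2.2)
  have h2 : Y ^ F.card ≤ ∏ l ∈ F, l := Finset.pow_card_le_prod _ _ _ (fun l hl => (hF l hl).2.1)
  have h3 := Nat.le_of_dvd (Int.natAbs_pos.mpr hx) h1
  rw [Int.abs_eq_natAbs] at hxK
  have h4 : x.natAbs < Y ^ (K + 1) := by exact_mod_cast hxK
  have hY : 0 < Y := by
    rcases Nat.eq_zero_or_pos Y with rfl | h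
    · simp at h4
    · exact h
  have h5 : Y ^ (K + 1) ≤ Y ^ F.card := Nat.pow_le_pow_right hY hlt
  omega

/-- If `l` divided the head (coordinate `0`) of every short lattice vector, then the heads of lattice
points near `(j, 0, …, 0)` would be congruent modulo `l` for all `j`, as consecutive ones differ by a
short vector; walking from `0` to `(M, 0, …, 0)` would give `l ∣ M`. -/
theorem exists_not_dvd_head {n : ℕ} (Λ : AddSubgroup (Fin (n + 1) → ℤ)) (ρ : ℕ)
    (hcov : ∀ x : Fin (n + 1) → ℤ, ∃ v ∈ Λ, ∀ i, |v i - x i| ≤ (ρ : ℤ))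
    (M : ℕ) (hM : (Pi.single 0 (M : ℤ) : Fin (n + 1) → ℤ) ∈ Λ) (l : ℤ) (hl : ¬ l ∣ M) :
    ∃ u ∈ Λ, (∀ i, |u i| ≤ 2 * (ρ : ℤ) + 1) ∧ ¬ l ∣ u 0 := by
  by_contra! hcon
  have key : ∀ j : ℕ, ∃ v ∈ Λ,
      (∀ i, |v i - (Pi.single 0 (j : ℤ) : Fin (n + 1) → ℤ) i| ≤ (ρ : ℤ)) ∧ l ∣ v 0 := by
    intro j
    induction j with
    | zero => exact ⟨0, Λ.zero_mem, by simp, by simp⟩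
    | succ j ih =>
      obtain ⟨v, hv, hvn, hvl⟩ := ih
      obtain ⟨v', hv', hvn'⟩ := hcov (Pi.single 0 ((j + 1 : ℕ) : ℤ))
      refine ⟨v', hv', hvn', ?_⟩
      have := hcon (v' - v) (Λ.sub_mem hv' hv) (by
        intro i
        have h1 := hvn i
        have h2 := hvn' i
        rw [abs_le] at *
        by_cases hi : i = 0
        · subst hi
          simp only [Pi.single_eq_same, Pi.sub_apply] at *
          push_cast at *
          omega
        · simp only [Pi.single_eq_of_ne hi, Pi.sub_apply] at *
          omega)
      have h3 := dvd_add this hvl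
      simpa using h3
  obtain ⟨v, hv, hvn, hvl⟩ := key M
  have := hcon (v - Pi.single 0 (M : ℤ)) (Λ.sub_mem hv hM) (by
    intro i
    have := hvn i
    simp only [Pi.sub_apply]
    omega)
  apply hl
  have h3 := dvd_sub hvl this
  simpa using h3

/-- A single short lattice vector `u` moves `A + W u₀` off all the primes of `F` at once: the primes
are treated one after the other, adding multiples `t < Y` of a vector whose head the new prime does
not divide. -/
theorem exists_adjust {n : ℕ} (Λ : AddSubgroup (Fin (n + 1) → ℤ)) (Y U : ℕ) (W A : ℤ)
    (F : Finset ℕ) (hF : ∀ l ∈ F, l.Prime ∧ Y ≤ l)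
    (hu : ∀ l ∈ F, ∃ u ∈ Λ, (∀ i, |u i| ≤ (U : ℤ)) ∧ ¬ (l : ℤ) ∣ u 0)
    (hW : ∀ l ∈ F, ¬ (l : ℤ) ∣ W) (hc : F.card < Y) :
    ∃ u ∈ Λ, (∀ i, |u i| ≤ (F.card * Y * U : ℤ)) ∧ ∀ l ∈ F, ¬ (l : ℤ) ∣ A + W * u 0 := by
  induction F using Finset.induction_on with
  | empty => exact ⟨0, Λ.zero_mem, by simp, by simp⟩
  | insert l F hlF ih =>
    rw [Finset.card_insert_of_notMem hlF] at hc
    obtain ⟨u, huΛ, hun, hul⟩ := ih (fun l hl => hF l (Finset.mem_insert_of_mem hl))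
      (fun l hl => hu l (Finset.mem_insert_of_mem hl))
      (fun l hl => hW l (Finset.mem_insert_of_mem hl)) (by omega)
    obtain ⟨u', hu'Λ, hu'n, hu'l⟩ := hu l (Finset.mem_insert_self _ _)
    obtain ⟨t, htY, ht⟩ := exists_avoid (insert l F) Y hF (A + W * u 0) (W * u' 0) (by
      intro q hq
      rcases Finset.mem_insert.mp hq with rfl | hq
      · rintro ⟨-, h2⟩
        rcases (Nat.prime_iff_prime_int.mp (hF q (Finset.mem_insert_self _ _)).1).dvd_or_dvd h2
          with h3 | h3
        · exact hW q (Finset.mem_insert_self _ _) h3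
        · exact hu'l h3
      · exact fun h => hul q hq h.1) (by rw [Finset.card_insert_of_notMem hlF]; omega)
    refine ⟨u + t • u', Λ.add_mem huΛ (Λ.nsmul_mem hu'Λ t), ?_, ?_⟩
    · intro i
      rw [Finset.card_insert_of_notMem hlF]
      have h1 := hun i
      have h2 := hu'n i
      have h3 : |(t : ℤ) * u' i| ≤ Y * U := by
        rw [abs_mul, Nat.abs_cast]
        have : (t : ℤ) ≤ Y := by exact_mod_cast htY.le
        gcongr
      calc |(u + t • u') i| = |u i + t * u' i| := by simp
        _ ≤ |u i| + |(t : ℤ) * u' i| := abs_add_le _ _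
        _ ≤ F.card * Y * U + Y * U := add_le_add h1 h3
        _ = _ := by push_cast; ring
    · intro q hq h
      refine ht q hq ?_
      convert h using 1
      simp; ring

set_option maxHeartbeats 2000000 in
/-- A lattice of covering radius `ρ` contains a vector whose head lies in `[Δ, 3 Δ]`, is prime to `p`,
and bounds and is coprime to every other coordinate. Small primes are excluded from the head by
requiring head `≡ 1` modulo `W = p * primorial Y`. For the large primes the head is first made
coprime to the head `b 0` of an auxiliary lattice vector `b`. Along the line `v₁ + t W b` a prime
dividing both the head and coordinate `i` then divides a fixed nonzero determinant `R i`, which has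
at most `K` prime factors of size at least `Y`; since `n K < Y`, some `t < Y` avoids all of them. -/
theorem exists_good_vector {n : ℕ} (hn : 1 ≤ n) (Λ : AddSubgroup (Fin (n + 1) → ℤ)) (ρ : ℕ)
    (hρ : 1 ≤ ρ)
    (hcov : ∀ x : Fin (n + 1) → ℤ, ∃ v ∈ Λ, ∀ i, |v i - x i| ≤ (ρ : ℤ))
    (p : ℕ) (hp : p.Prime) (k : ℕ)
    (hM : (Pi.single 0 ((p ^ k : ℕ) : ℤ) : Fin (n + 1) → ℤ) ∈ Λ)
    (w : Fin (n + 1) → ℤ) (hw : w ∈ Λ) (hw0 : w 0 = 1)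
    (Y K W Δ : ℕ) (hK : n * K < Y) (hW : W = p * primorial Y) (hΔ : Δ = 14 * W * ρ * Y ^ 2)
    (hbig : 36 * Δ * ρ < Y ^ (K + 1)) :
    ∃ v ∈ Λ, (Δ : ℤ) ≤ v 0 ∧ v 0 ≤ 3 * Δ ∧ ¬ (p : ℤ) ∣ v 0 ∧
      ∀ i : Fin n, |v i.succ| ≤ v 0 ∧ Int.gcd (v i.succ) (v 0) = 1 := by
  have hKY : K < Y := lt_of_le_of_lt (by nlinarith) hK
  have hY : 1 ≤ Y := by omega
  have hWpos : 1 ≤ W := by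
    rw [hW]; exact Nat.mul_pos hp.pos (primorial_pos Y)
  have hWprime : ∀ l : ℕ, l.Prime → ¬ (l : ℤ) ∣ W → l ≠ p ∧ Y ≤ l := by
    intro l hl h
    constructor
    · rintro rfl
      exact h (by rw [hW]; exact ⟨(primorial Y : ℤ), by push_cast; rfl⟩)
    · by_contra! hlt
      apply h
      have h1 : l ∣ primorial Y := Finset.dvd_prod_of_mem _ (by
        simp only [Finset.mem_filter, Finset.mem_range]; exact ⟨by omega, hl⟩)
      rw [hW]
      exact_mod_cast Dvd.dvd.mul_left h1 p
  -- the head of `b` exceeds its other, positive coordinates; this makes the determinants `R i` below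
  -- nonzero once the heads of `b` and `v₁` are coprime
  obtain ⟨b, hbΛ, hb⟩ := hcov (Fin.cons (8 * (ρ : ℤ)) (fun _ => 3 * (ρ : ℤ)))
  have hb0 : 7 * (ρ : ℤ) ≤ b 0 ∧ b 0 ≤ 9 * ρ := by
    have := hb 0
    simp only [Fin.cons_zero, abs_le] at this; omega
  have hbi : ∀ i : Fin n, 2 * (ρ : ℤ) ≤ b i.succ ∧ b i.succ ≤ 4 * ρ := by
    intro i
    have := hb i.succ
    simp only [Fin.cons_succ, abs_le] at this; omega
  have hρ' : (1 : ℤ) ≤ ρ := by exact_mod_cast hρ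
  have hWpos' : (1 : ℤ) ≤ W := by exact_mod_cast hWpos
  have hY' : (1 : ℤ) ≤ Y := by exact_mod_cast hY
  have hK' : (K : ℤ) ≤ Y := by exact_mod_cast hKY.le
  have hΔ' : (Δ : ℤ) = 14 * W * ρ * Y ^ 2 := by exact_mod_cast hΔ
  have hbig' : 36 * (Δ : ℤ) * ρ < Y ^ (K + 1) := by exact_mod_cast hbig
  have hWρ : (1 : ℤ) ≤ W * ρ := by nlinarith
  have hY2 : (1 : ℤ) ≤ (Y : ℤ) ^ 2 := one_le_pow₀ hY'
  have hΔbig : (14 : ℤ) ≤ Δ := by rw [hΔ']; nlinarith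
  -- a first point near `(2Δ, 0, …, 0)` congruent to `1` modulo `W` in the head coordinate
  obtain ⟨y, hyΛ, hy⟩ := hcov
    (fun i => ((Pi.single 0 (2 * (Δ : ℤ)) : Fin (n + 1) → ℤ) i - w i) / W)
  have hv0 : ∀ i, |w i + W * y i - (Pi.single 0 (2 * (Δ : ℤ)) : Fin (n + 1) → ℤ) i|
      ≤ W * ρ + W := by
    intro i
    have h1 := hy i
    set c := (Pi.single 0 (2 * (Δ : ℤ)) : Fin (n + 1) → ℤ) i - w i with hc
    have h2 := Int.ediv_mul_add_emod c W
    have h3 := Int.emod_nonneg c (show (W : ℤ) ≠ 0 by omega)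
    have h4 := Int.emod_lt_of_pos c (show (0 : ℤ) < W by omega)
    have h5 : w i + W * y i - (Pi.single 0 (2 * (Δ : ℤ)) : Fin (n + 1) → ℤ) i
        = W * (y i - c / W) - c % W := by
      have : (Pi.single 0 (2 * (Δ : ℤ)) : Fin (n + 1) → ℤ) i = c + w i := by rw [hc]; ring
      rw [this]; linarith
    rw [h5]
    calc |W * (y i - c / W) - c % W| ≤ |W * (y i - c / W)| + |c % W| := abs_sub _ _
      _ ≤ W * ρ + W := by
        rw [abs_mul, Nat.abs_cast, abs_of_nonneg h3]
        gcongr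
  -- make the head coordinate coprime to `b 0`
  have hb0ne : b 0 ≠ 0 := by omega
  let F₁ : Finset ℕ := (b 0).natAbs.primeFactors.filter (fun l => ¬ (l : ℤ) ∣ W)
  have hF₁ : ∀ l ∈ F₁, l.Prime ∧ Y ≤ l ∧ (l : ℤ) ∣ b 0 := by
    intro l hl
    simp only [F₁, Finset.mem_filter, Nat.mem_primeFactors] at hl
    exact ⟨hl.1.1, (hWprime l hl.1.1 hl.2).2, Int.natCast_dvd.mpr hl.1.2.1⟩
  have hF₁c : F₁.card ≤ K := card_large_primes_le (b 0) hb0ne Y K (by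
    rw [abs_of_nonneg (by omega)]; nlinarith) F₁ hF₁
  obtain ⟨u, huΛ, hun, hul⟩ := exists_adjust Λ Y (2 * ρ + 1) W (w 0 + W * y 0) F₁
    (fun l hl => ⟨(hF₁ l hl).1, (hF₁ l hl).2.1⟩) (fun l hl => by
      have h1 : ¬ (l : ℤ) ∣ W := (Finset.mem_filter.mp hl).2
      obtain ⟨u, h2, h3, h4⟩ := exists_not_dvd_head Λ ρ hcov (p ^ k) hM l (by
        intro h
        have h5 : l ∣ p ^ k := by exact_mod_cast h
        exact (hWprime l (hF₁ l hl).1 h1).1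
          ((Nat.prime_dvd_prime_iff_eq (hF₁ l hl).1 hp).mp ((hF₁ l hl).1.dvd_of_dvd_pow h5)))
      exact ⟨u, h2, by push_cast; exact h3, h4⟩)
    (fun l hl => (Finset.mem_filter.mp hl).2) (by omega)
  set v₁ : Fin (n + 1) → ℤ := fun i => w i + W * (y i + u i) with hv₁
  have hv₁W : ∀ l : ℕ, l.Prime → (l : ℤ) ∣ W → ∀ s : ℤ, ¬ (l : ℤ) ∣ v₁ 0 + W * s := by
    intro l hl hlW s hd
    have h1 : (l : ℤ) ∣ 1 := by
      have h2 : (1 : ℤ) = (v₁ 0 + W * s) - W * (y 0 + u 0 + s) := by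
        simp only [hv₁, hw0]; ring
      rw [h2]
      exact dvd_sub hd (Dvd.dvd.mul_right hlW _)
    exact hl.one_lt.ne' (by exact_mod_cast Int.eq_one_of_dvd_one (by positivity) h1)
  have hv₁b : ∀ l : ℕ, l.Prime → (l : ℤ) ∣ b 0 → ¬ (l : ℤ) ∣ v₁ 0 := by
    intro l hl hlb
    by_cases hlW : (l : ℤ) ∣ W
    · simpa using hv₁W l hl hlW 0
    · have := hul l (Finset.mem_filter.mpr ⟨Nat.mem_primeFactors.mpr
        ⟨hl, Int.natCast_dvd.mp hlb, by omega⟩, hlW⟩)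
      convert this using 2
      simp only [hv₁]; ring
  have hcop : IsCoprime (b 0) (v₁ 0) := by
    rw [Int.isCoprime_iff_gcd_eq_one]
    by_contra hg
    obtain ⟨l, hl, hlg⟩ := Nat.exists_prime_and_dvd hg
    exact hv₁b l hl (Int.natCast_dvd.mpr (hlg.trans (Int.gcd_dvd_natAbs_left _ _)))
      (Int.natCast_dvd.mpr (hlg.trans (Int.gcd_dvd_natAbs_right _ _)))
  have hWu : ∀ i, |(W : ℤ) * u i| ≤ 3 * (W * ρ) * Y ^ 2 := by
    intro i
    rw [abs_mul, Nat.abs_cast]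
    have h1 := hun i
    have h2 : (F₁.card : ℤ) ≤ Y := by exact_mod_cast (hF₁c.trans hKY.le)
    calc (W : ℤ) * |u i| ≤ W * (F₁.card * Y * (2 * ρ + 1 : ℕ)) := by gcongr
      _ ≤ W * (Y * Y * (3 * ρ)) := by
        push_cast
        gcongr
        omega
      _ = _ := by ring
  have hv₁n : ∀ i, |v₁ i - (Pi.single 0 (2 * (Δ : ℤ)) : Fin (n + 1) → ℤ) i|
      ≤ 5 * (W * ρ) * Y ^ 2 := by
    intro i
    have h1 : v₁ i - (Pi.single 0 (2 * (Δ : ℤ)) : Fin (n + 1) → ℤ) i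
      = (w i + W * y i - (Pi.single 0 (2 * (Δ : ℤ)) : Fin (n + 1) → ℤ) i) + W * u i := by
      simp only [hv₁]; ring
    rw [h1]
    refine (abs_add_le _ _).trans ?_
    have h2 := hv0 i
    have h3 := hWu i
    nlinarith
  -- a common prime of `v₁ + t W b` at the coordinates `0, i` divides the determinant `R i`
  let R : Fin n → ℤ := fun i => v₁ 0 * b i.succ - v₁ i.succ * b 0
  have hRne : ∀ i, R i ≠ 0 := by
    intro i h0
    have h1 : b 0 ∣ v₁ 0 * b i.succ := ⟨v₁ i.succ, by simp only [R] at h0; linarith⟩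
    have h2 := Int.le_of_dvd (by have := hbi i; omega) (hcop.dvd_of_dvd_mul_left h1)
    have := hbi i
    omega
  have hWY : 5 * ((W : ℤ) * ρ) * Y ^ 2 ≤ Δ := by rw [hΔ']; nlinarith
  have hRn : ∀ i, |R i| < (Y : ℤ) ^ (K + 1) := by
    intro i
    have h1 := hv₁n 0
    have h2 := hv₁n i.succ
    have h3 := hbi i
    simp only [Pi.single_eq_same, Pi.single_eq_of_ne (Fin.succ_ne_zero i), sub_zero] at h1 h2
    have h4 : |v₁ 0| ≤ 3 * Δ := by rw [abs_le] at *; constructor <;> linarith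
    have h5 : |v₁ i.succ| ≤ Δ := h2.trans hWY
    refine lt_of_le_of_lt ?_ hbig'
    calc |R i| ≤ |v₁ 0 * b i.succ| + |v₁ i.succ * b 0| := abs_sub _ _
      _ = |v₁ 0| * b i.succ + |v₁ i.succ| * b 0 := by
        rw [abs_mul, abs_mul, abs_of_nonneg (show 0 ≤ b i.succ by omega),
          abs_of_nonneg (show 0 ≤ b 0 by omega)]
      _ ≤ (3 * Δ) * (4 * ρ) + Δ * (9 * ρ) := by
        gcongr
        · omega
        · omega
        · omega
        · omega
      _ ≤ 36 * Δ * ρ := by nlinarith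
  let F₂ : Fin n → Finset ℕ := fun i =>
    (R i).natAbs.primeFactors.filter (fun l => ¬ (l : ℤ) ∣ W ∧ ¬ (l : ℤ) ∣ b 0)
  have hF₂ : ∀ i, ∀ l ∈ F₂ i, l.Prime ∧ Y ≤ l ∧ (l : ℤ) ∣ R i := by
    intro i l hl
    simp only [F₂, Finset.mem_filter, Nat.mem_primeFactors] at hl
    exact ⟨hl.1.1, (hWprime l hl.1.1 hl.2.1).2, Int.natCast_dvd.mpr hl.1.2.1⟩
  have hF₂c : (Finset.univ.biUnion F₂).card < Y := by
    refine lt_of_le_of_lt Finset.card_biUnion_le (lt_of_le_of_lt (Finset.sum_le_sum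
      (g := fun _ => K) fun i _ => card_large_primes_le (R i) (hRne i) Y K (hRn i) _ (hF₂ i)) ?_)
    simpa using hK
  obtain ⟨t, htY, ht⟩ := exists_avoid (Finset.univ.biUnion F₂) Y (by
      intro l hl
      obtain ⟨i, -, hi⟩ := Finset.mem_biUnion.mp hl
      exact ⟨(hF₂ i l hi).1, (hF₂ i l hi).2.1⟩) (v₁ 0) (W * b 0) (by
      intro l hl
      obtain ⟨i, -, hi⟩ := Finset.mem_biUnion.mp hl
      rintro ⟨-, h2⟩
      have h3 := (Finset.mem_filter.mp hi).2
      rcases (Nat.prime_iff_prime_int.mp (hF₂ i l hi).1).dvd_or_dvd h2 with h4 | h4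
      · exact h3.1 h4
      · exact h3.2 h4) hF₂c
  set v₂ : Fin (n + 1) → ℤ := fun i => v₁ i + t * (W * b i) with hv₂
  have hv₂n : ∀ i, |v₂ i - (Pi.single 0 (2 * (Δ : ℤ)) : Fin (n + 1) → ℤ) i| ≤ Δ := by
    intro i
    have hbn : |b i| ≤ 9 * ρ := by
      rw [abs_le]
      refine Fin.cases ?_ (fun i => ?_) i
      · omega
      · have := hbi i; omega
    have h0 : |(t : ℤ) * (W * b i)| ≤ 9 * (W * ρ) * Y ^ 2 := by
      rw [abs_mul, abs_mul, Nat.abs_cast, Nat.abs_cast]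
      have : (t : ℤ) ≤ Y := by exact_mod_cast htY.le
      calc (t : ℤ) * (W * |b i|) ≤ Y * (W * (9 * ρ)) := by gcongr
        _ = 9 * (W * ρ) * Y := by ring
        _ ≤ 9 * (W * ρ) * Y ^ 2 := by
          have : (Y : ℤ) ≤ Y ^ 2 := by nlinarith
          gcongr
    have h1 : v₂ i - (Pi.single 0 (2 * (Δ : ℤ)) : Fin (n + 1) → ℤ) i
      = (v₁ i - (Pi.single 0 (2 * (Δ : ℤ)) : Fin (n + 1) → ℤ) i) + t * (W * b i) := by
      simp only [hv₂]; ring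
    rw [h1]
    refine (abs_add_le _ _).trans ?_
    have h2 := hv₁n i
    linarith
  have hhead : (Δ : ℤ) ≤ v₂ 0 ∧ v₂ 0 ≤ 3 * Δ := by
    have := hv₂n 0
    simp only [Pi.single_eq_same, abs_le] at this
    omega
  have hv₂W : ∀ l : ℕ, l.Prime → (l : ℤ) ∣ W → ¬ (l : ℤ) ∣ v₂ 0 := by
    intro l hl hlW h
    refine hv₁W l hl hlW (t * b 0) ?_
    convert h using 1
    simp only [hv₂]; ring
  refine ⟨v₂, ?_, hhead.1, hhead.2, hv₂W p hp ?_, fun i => ⟨?_, ?_⟩⟩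
  · have : v₂ = w + (W : ℤ) • (y + u) + ((t : ℤ) * W) • b := by
      ext i; simp only [hv₂, hv₁, Pi.add_apply, Pi.smul_apply, smul_eq_mul]; ring
    rw [this]
    exact Λ.add_mem (Λ.add_mem hw (Λ.zsmul_mem (Λ.add_mem hyΛ huΛ) _)) (Λ.zsmul_mem hbΛ _)
  · rw [hW]; exact ⟨(primorial Y : ℤ), by push_cast; rfl⟩
  · have := hv₂n i.succ
    simp only [Pi.single_eq_of_ne (Fin.succ_ne_zero i), sub_zero] at this
    linarith [hhead.1]
  · by_contra hg
    obtain ⟨l, hl, hlg⟩ := Nat.exists_prime_and_dvd hg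
    have hli : (l : ℤ) ∣ v₂ i.succ :=
      Int.natCast_dvd.mpr (hlg.trans (Int.gcd_dvd_natAbs_left _ _))
    have hl0 : (l : ℤ) ∣ v₂ 0 := Int.natCast_dvd.mpr (hlg.trans (Int.gcd_dvd_natAbs_right _ _))
    have hlW : ¬ (l : ℤ) ∣ W := fun h => hv₂W l hl h hl0
    have hlb : ¬ (l : ℤ) ∣ b 0 := by
      intro h
      refine hv₁b l hl h ?_
      have : v₁ 0 = v₂ 0 - b 0 * (t * W) := by simp only [hv₂]; ring
      rw [this]
      exact dvd_sub hl0 (Dvd.dvd.mul_right h _)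
    have hlR : (l : ℤ) ∣ R i := by
      have : R i = v₂ 0 * b i.succ - v₂ i.succ * b 0 := by simp only [R, hv₂]; ring
      rw [this]
      exact dvd_sub (Dvd.dvd.mul_right hl0 _) (Dvd.dvd.mul_right hli _)
    refine ht l (Finset.mem_biUnion.mpr ⟨i, Finset.mem_univ _, Finset.mem_filter.mpr
      ⟨Nat.mem_primeFactors.mpr ⟨hl, Int.natCast_dvd.mp hlR, ?_⟩, hlW, hlb⟩⟩) ?_
    · simpa using hRne i
    · convert hl0 using 1

/-! ### The exponent of `α` excludes short vectors -/

theorem dvd_iff_norm {p : ℕ} [Fact p.Prime] (x : ℤ_[p]) (n : ℕ) :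
    (p : ℤ_[p]) ^ n ∣ x ↔ ‖x‖ ≤ (p : ℝ) ^ (-(n : ℝ)) := by
  rw [← Ideal.mem_span_singleton, ← PadicInt.norm_le_pow_iff_mem_span_pow]
  rw [← Real.rpow_intCast]; push_cast; rfl

theorem pow_dvd_intCast_iff {p : ℕ} [Fact p.Prime] (n : ℕ) (x : ℤ) :
    (p : ℤ_[p]) ^ n ∣ (x : ℤ_[p]) ↔ ((p ^ n : ℕ) : ℤ) ∣ x := by
  rw [PadicInt.pow_p_dvd_int_iff]; push_cast; rfl

/-- Exponents of sum greater than `τ(α) = m + 1` are attained for boundedly many `Q` only. -/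
theorem not_frequently_of_dioExp {p : ℕ} [Fact p.Prime] {m : ℕ} (α : Fin m → ℤ_[p])
    (hα : dioExp α = (m : ℝ) + 1) (τ : Fin m → ℝ) (hτ : (m : ℝ) + 1 < ∑ i, τ i) :
    ∃ Q₀ : ℕ, ∀ Q : ℕ, Q₀ ≤ Q → ∀ q₀ : ℤ, ∀ q : Fin m → ℤ,
      0 < q₀ → q₀ ≤ (Q : ℤ) → (∀ i, |q i| ≤ (Q : ℤ)) →
      ¬ ∀ i, ‖(q₀ : ℤ_[p]) * α i - (q i : ℤ_[p])‖ < (Q : ℝ) ^ (-(τ i)) := by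
  by_contra hcon
  unfold dioExp at hα
  set S := {s : ℝ | ∃ τ : Fin m → ℝ, s = ∑ i, τ i ∧
    ∀ Q₀ : ℕ, ∃ Q : ℕ, Q₀ ≤ Q ∧ ∃ q₀ : ℤ, ∃ q : Fin m → ℤ,
      0 < q₀ ∧ q₀ ≤ (Q : ℤ) ∧ (∀ i, |q i| ≤ (Q : ℤ)) ∧
      ∀ i, ‖(q₀ : ℤ_[p]) * α i - (q i : ℤ_[p])‖ < (Q : ℝ) ^ (-(τ i))} with hSdef
  -- an unbounded `S` would have `sSup S = 0`, which is not `m + 1`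
  have hb : BddAbove S := by
    by_contra hb
    rw [Real.sSup_of_not_bddAbove hb] at hα
    have : (0 : ℝ) ≤ m := by positivity
    linarith
  have hmem : (∑ i, τ i) ∈ S := by
    refine ⟨τ, rfl, fun Q₀ => ?_⟩
    by_contra h2
    refine hcon ⟨Q₀, fun Q hQ q₀ q h3 h4 h5 h6 => h2 ⟨Q, hQ, q₀, q, h3, h4, h5, h6⟩⟩
  have := le_csSup hb hmem
  rw [hα] at this
  linarith

/-- The lattice of the vectors `(v₀, v)` with `v₀ α_i ≡ v_i` modulo `p ^ k_i`, `k_i ≥ τ_i N`, has no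
nonzero vector of norm up to `p ^ (N S / (m + 1 + η))`, where `S = ∑ i, τ i`: such a vector would be
an approximation with exponents of sum greater than `m + 1` for `Q ≈ p ^ (N S / (m + 1 + η))`. A
vector of head `0` vanishes because its other coordinates are multiples of `p ^ k_i` of smaller
size. -/
theorem no_short {p : ℕ} [Fact p.Prime] {m : ℕ} (hm : 1 ≤ m) (α : Fin m → ℤ_[p])
    (hα : dioExp α = (m : ℝ) + 1) (τ : Fin m → ℝ) (hτ1 : ∀ i, 1 < τ i)
    (hS : ∑ i, τ i ≤ (m : ℝ) + 1) (η : ℝ) (hη : 0 < η) :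
    ∃ N₀ : ℕ, ∀ N : ℕ, N₀ ≤ N → ∀ k : Fin m → ℕ, (∀ i, τ i * N ≤ k i) →
      ∀ v₀ : ℤ, ∀ v : Fin m → ℤ, (∀ i, (p : ℤ_[p]) ^ k i ∣ (v₀ : ℤ_[p]) * α i - (v i : ℤ_[p])) →
      (|v₀| : ℝ) ≤ (p : ℝ) ^ ((N : ℝ) * ((∑ i, τ i) / (m + 1 + η))) →
      (∀ i, (|v i| : ℝ) ≤ (p : ℝ) ^ ((N : ℝ) * ((∑ i, τ i) / (m + 1 + η)))) →
      v₀ = 0 ∧ v = 0 := by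
  have hp1 : (1 : ℝ) < p := by exact_mod_cast (Fact.out : p.Prime).one_lt
  have hp0 : (0 : ℝ) < p := by linarith
  set S := ∑ i, τ i with hSd
  have hm' : (1 : ℝ) ≤ m := by exact_mod_cast hm
  have hSpos : 0 < S := by
    have : ∑ i : Fin m, (1 : ℝ) ≤ S := Finset.sum_le_sum fun i _ => (hτ1 i).le
    simp at this; linarith
  set A := S / (m + 1 + η) with hA
  have hA0 : 0 < A := by positivity
  have hA1 : A < 1 := by rw [hA, div_lt_one (by positivity)]; linarith
  obtain ⟨Q₀, hQ₀⟩ := not_frequently_of_dioExp α hα (fun i => τ i * ((m + 1 + η / 2) / S)) (by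
    rw [← Finset.sum_mul, ← hSd, mul_div_cancel₀ _ hSpos.ne']; linarith)
  have htend : Filter.Tendsto (fun N : ℕ => (p : ℝ) ^ ((N : ℝ) * A)) Filter.atTop Filter.atTop := by
    have := (tendsto_pow_atTop_atTop_of_one_lt (Real.one_lt_rpow hp1 hA0))
    refine this.congr fun N => ?_
    rw [← Real.rpow_natCast, ← Real.rpow_mul hp0.le, mul_comm]
  obtain ⟨N₁, hN₁⟩ := Filter.eventually_atTop.mp (htend.eventually_ge_atTop (Q₀ + 1 : ℝ))
  refine ⟨max N₁ 1, fun N hN k hk => ?_⟩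
  have hN1 : (1 : ℝ) ≤ N := by exact_mod_cast (le_max_right _ _).trans hN
  have hH := hN₁ N ((le_max_left _ _).trans hN)
  set H := (p : ℝ) ^ ((N : ℝ) * A) with hHd
  have hH0 : 0 < H := by positivity
  have hQQ : Q₀ ≤ ⌊H⌋₊ := Nat.le_floor (by linarith)
  have hQ1 : (1 : ℝ) ≤ (⌊H⌋₊ : ℝ) := by
    exact_mod_cast Nat.le_floor (by push_cast; have : (0 : ℝ) ≤ Q₀ := by positivity
                                    linarith)
  -- positive heads are excluded by the definition of the exponent
  have key : ∀ v₀ : ℤ, ∀ v : Fin m → ℤ,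
      (∀ i, (p : ℤ_[p]) ^ k i ∣ (v₀ : ℤ_[p]) * α i - (v i : ℤ_[p])) →
      (|v₀| : ℝ) ≤ H → (∀ i, (|v i| : ℝ) ≤ H) → ¬ 0 < v₀ := by
    intro v₀ v hv h0 hi hpos
    have hfl : ∀ x : ℤ, (|x| : ℝ) ≤ H → |x| ≤ (⌊H⌋₊ : ℤ) := by
      intro x hx
      rw [Int.natCast_floor_eq_floor hH0.le]
      exact Int.le_floor.mpr (by push_cast; exact hx)
    refine hQ₀ _ hQQ v₀ v hpos ((le_abs_self _).trans (hfl _ h0)) (fun i => hfl _ (hi i)) ?_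
    intro i
    refine ((dvd_iff_norm _ _).mp (hv i)).trans_lt ?_
    have h1 : (p : ℝ) ^ (-(k i : ℝ)) ≤ (p : ℝ) ^ (-(τ i * N)) :=
      Real.rpow_le_rpow_of_exponent_le hp1.le (by linarith [hk i])
    have h2 : (p : ℝ) ^ (-(τ i * N)) < H ^ (-(τ i * ((m + 1 + η / 2) / S))) := by
      rw [hHd, ← Real.rpow_mul hp0.le]
      refine Real.rpow_lt_rpow_of_exponent_lt hp1 ?_
      have h3 : (N : ℝ) * A * -(τ i * ((m + 1 + η / 2) / S))
          = -(τ i * N) * ((m + 1 + η / 2) / (m + 1 + η)) := by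
        rw [hA]; field_simp
      rw [h3]
      have h4 : (m + 1 + η / 2) / (m + 1 + η) < 1 := by
        rw [div_lt_one (by positivity)]; linarith
      have h5 : 0 < τ i * N := by have := hτ1 i; positivity
      nlinarith
    refine h1.trans_lt (h2.trans_le ?_)
    exact Real.rpow_le_rpow_of_nonpos (by linarith) (Nat.floor_le hH0.le) (by
      have := hτ1 i
      have : 0 ≤ τ i * ((m + 1 + η / 2) / S) := by positivity
      linarith)
  intro v₀ v hv h0 hi
  have hz : v₀ = 0 := by
    rcases lt_trichotomy v₀ 0 with h | h | h
    · exfalso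
      refine key (-v₀) (-v) (fun i => ?_) (by simpa using h0) (by simpa using hi) (by omega)
      have : ((-v₀ : ℤ) : ℤ_[p]) * α i - (((-v) i : ℤ) : ℤ_[p])
          = -((v₀ : ℤ_[p]) * α i - (v i : ℤ_[p])) := by
        simp only [Pi.neg_apply]; push_cast; ring
      rw [this]
      exact (hv i).neg_right
    · exact h
    · exact absurd h (key v₀ v hv h0 hi)
  refine ⟨hz, funext fun i => ?_⟩
  subst hz
  have h1 := hv i
  simp only [Int.cast_zero, zero_mul, zero_sub, dvd_neg] at h1
  rw [pow_dvd_intCast_iff] at h1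
  refine Int.eq_zero_of_abs_lt_dvd h1 ?_
  have h2 : (|v i| : ℝ) < (p : ℝ) ^ (k i : ℝ) := by
    refine (hi i).trans_lt (Real.rpow_lt_rpow_of_exponent_lt hp1 ?_)
    have := hk i
    have := hτ1 i
    nlinarith
  rw [Real.rpow_natCast] at h2
  exact_mod_cast h2

/-- A set of `H`-separated integer points in a box of radius `R` is counted by pigeonhole into cubes
of side about `H`. -/
theorem card_le_of_separated {ι : Type*} [Fintype ι] (T : Finset (ι → ℤ)) (R H : ℝ) (hR : 0 ≤ R)
    (hH : 0 < H) (hT : ∀ v ∈ T, ∀ i, (|v i| : ℝ) ≤ R)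
    (hsep : ∀ v ∈ T, ∀ v' ∈ T, (∀ i, (|v i - v' i| : ℝ) < H) → v = v') :
    (T.card : ℝ) ≤ (2 * (R / H) + 2) ^ Fintype.card ι := by
  have hinj : Set.InjOn (fun (v : ι → ℤ) (i : ι) => ⌊(v i : ℝ) / H⌋) T := by
    intro v hv v' hv' h
    refine hsep v hv v' hv' fun i => ?_
    have h1 := Int.abs_sub_lt_one_of_floor_eq_floor (congrFun h i)
    rw [← sub_div, abs_div, abs_of_pos hH, div_lt_one hH] at h1
    exact h1
  have hmaps : Set.MapsTo (fun (v : ι → ℤ) (i : ι) => ⌊(v i : ℝ) / H⌋) (T : Set (ι → ℤ))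
      (Fintype.piFinset (fun _ : ι => Finset.Icc ⌊-R / H⌋ ⌊R / H⌋) : Finset (ι → ℤ)) := by
    intro v hv
    simp only [Finset.mem_coe, Fintype.mem_piFinset, Finset.mem_Icc]
    intro i
    have := abs_le.mp (hT v hv i)
    exact ⟨Int.floor_le_floor (by gcongr; exact this.1), Int.floor_le_floor (by gcongr; exact this.2)⟩
  have h1 := Finset.card_le_card_of_injOn _ hmaps hinj
  rw [Fintype.card_piFinset, Finset.prod_const, Int.card_Icc, Finset.card_univ] at h1
  have h2 : (T.card : ℝ) ≤ (((⌊R / H⌋ + 1 - ⌊-R / H⌋).toNat : ℕ) : ℝ) ^ Fintype.card ι := by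
    exact_mod_cast h1
  refine h2.trans (pow_le_pow_left₀ (by positivity) ?_ _)
  have h3 : (0 : ℤ) ≤ ⌊R / H⌋ + 1 - ⌊-R / H⌋ := by
    have : ⌊-R / H⌋ ≤ ⌊R / H⌋ := Int.floor_le_floor (by gcongr; linarith)
    omega
  have h4 : (((⌊R / H⌋ + 1 - ⌊-R / H⌋).toNat : ℕ) : ℝ) = ((⌊R / H⌋ + 1 - ⌊-R / H⌋ : ℤ) : ℝ) := by
    have := Int.toNat_of_nonneg h3
    exact_mod_cast this
  rw [h4]
  push_cast
  have h5 := Int.floor_le (R / H)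
  have h6 := Int.sub_one_lt_floor (-R / H)
  rw [neg_div] at h6 ⊢
  linarith

/-- For at most `5 h` residues `y` modulo `P` is `q y` within `h` of a multiple of `P`: the multiples
that occur are at most `|q| + 1` in number, and each is near `q y` for at most `2 h / |q| + 1`
values of `y`. -/
theorem card_residue_le (P h : ℕ) (q : ℤ) (hq : q ≠ 0) (hqh : |q| < h) (hhP : h ≤ P) :
    ((Finset.range P).filter (fun y : ℕ => ∃ v : ℤ, |v| < h ∧ (P : ℤ) ∣ q * y - v)).card
      ≤ 5 * h := by
  wlog hpos : 0 < q generalizing q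
  · have := this (-q) (by omega) (by simpa using hqh) (by omega)
    refine le_trans (Finset.card_le_card ?_) this
    intro y hy
    simp only [Finset.mem_filter] at hy ⊢
    obtain ⟨hy, v, hv, hd⟩ := hy
    refine ⟨hy, -v, by simpa using hv, ?_⟩
    rw [show -q * (y : ℤ) - -v = -(q * y - v) by ring]
    exact hd.neg_right
  lift q to ℕ using hpos.le with q'
  simp only [Nat.abs_cast] at hqh
  have hqh' : q' < h := by exact_mod_cast hqh
  have hpos' : 0 < q' := by exact_mod_cast hpos
  set T := (Finset.range P).filter (fun y : ℕ => ∃ v : ℤ, |v| < h ∧ (P : ℤ) ∣ (q' : ℤ) * y - v)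
  have hch : ∀ y : ℕ, ∃ v z : ℤ, y ∈ T → |v| < h ∧ (q' : ℤ) * y - v = P * z := by
    intro y
    by_cases hy : y ∈ T
    · obtain ⟨-, v, hv, z, hz⟩ := Finset.mem_filter.mp hy
      exact ⟨v, z, fun _ => ⟨hv, hz⟩⟩
    · exact ⟨0, 0, fun h => absurd h hy⟩
  choose v z hvz using hch
  have hcard := Finset.card_le_card_of_injOn (s := T)
    (t := Finset.range (q' + 1) ×ˢ Finset.range (2 * h / q' + 1))
    (fun y => ((z y).toNat, ((v y + h) / q').toNat)) (by
      intro y hy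
      have hy' := hy
      obtain ⟨h1, h2⟩ := hvz y hy
      have hyP : y < P := Finset.mem_range.mp (Finset.mem_filter.mp hy').1
      rw [abs_lt] at h1
      have hz0 : (z y) < q' + 1 := by
        by_contra! hc
        have : (P : ℤ) * (q' + 1) ≤ P * z y := by gcongr
        have : (q' : ℤ) * y ≤ q' * P := by gcongr
        have : (h : ℤ) ≤ P := by exact_mod_cast hhP
        linarith
      simp only [Finset.coe_product, Set.mem_prod, Finset.mem_coe, Finset.mem_range]
      refine ⟨by omega, ?_⟩
      have h3 : (v y + h) / q' ≤ (2 * h : ℤ) / q' := Int.ediv_le_ediv (by omega) (by omega)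
      have h4 : ((v y + h) / q').toNat ≤ 2 * h / q' := by
        rw [Int.toNat_le]; push_cast; exact h3
      exact Nat.lt_succ_of_le h4) (by
      intro y hy y' hy' heq
      obtain ⟨h1, h2⟩ := hvz y hy
      obtain ⟨h1', h2'⟩ := hvz y' hy'
      simp only [Prod.mk.injEq] at heq
      have hzpos : ∀ y ∈ T, 0 ≤ z y := by
        intro y hy
        obtain ⟨h1, h2⟩ := hvz y hy
        rw [abs_lt] at h1
        by_contra! hc
        have h3 : (P : ℤ) * z y ≤ P * (-1) := by gcongr; omega
        have : (0 : ℤ) ≤ q' * y := by positivity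
        have : (h : ℤ) ≤ P := by exact_mod_cast hhP
        linarith
      have hz : z y = z y' := by
        have := hzpos y hy; have := hzpos y' hy'
        omega
      rw [abs_lt] at h1 h1'
      have hd : (v y + h) / q' = (v y' + h) / q' := by
        have := Int.ediv_nonneg (show 0 ≤ v y + h by omega) (show (0 : ℤ) ≤ q' by omega)
        have := Int.ediv_nonneg (show 0 ≤ v y' + h by omega) (show (0 : ℤ) ≤ q' by omega)
        omega
      have e1 := Int.ediv_mul_add_emod (v y + h) q'
      have e2 := Int.ediv_mul_add_emod (v y' + h) q'
      have e3 := Int.emod_nonneg (v y + h) (show (q' : ℤ) ≠ 0 by omega)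
      have e4 := Int.emod_lt_of_pos (v y + h) (show (0 : ℤ) < q' by omega)
      have e5 := Int.emod_nonneg (v y' + h) (show (q' : ℤ) ≠ 0 by omega)
      have e6 := Int.emod_lt_of_pos (v y' + h) (show (0 : ℤ) < q' by omega)
      rw [hd] at e1
      rw [hz] at h2
      have h7 : (q' : ℤ) * ((y : ℤ) - y') = v y - v y' := by linarith
      have h8 : ((y : ℤ) - y') = 0 := by
        refine Int.eq_zero_of_abs_lt_dvd (m := 1) (by simp) ?_
        have : (q' : ℤ) * |(y : ℤ) - y'| < q' * 1 := by
          have : |(q' : ℤ) * ((y : ℤ) - y')| < q' := by rw [h7, abs_lt]; omega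
          rw [abs_mul, Nat.abs_cast] at this; simpa using this
        exact lt_of_mul_lt_mul_left this (by omega)
      omega)
  rw [Finset.card_product, Finset.card_range, Finset.card_range] at hcard
  refine hcard.trans ?_
  have h5 := Nat.div_mul_le_self (2 * h) q'
  have h6 : 2 * h / q' ≤ 2 * h := Nat.div_le_self _ _
  nlinarith

/-! ### Hits at scale `N` and the lattice attached to a point -/

/-- The point `x` is hit at scale `N` to precision `(k, k')`: some denominator `q₀` between `N` and
`p ^ N`, with numerators `q` admissible as in the definition of `𝔄_{q₀}`, satisfies
`q₀ x_j ≡ q_j` modulo `p ^ k_j` and `q₀ α_i ≡ q_{d+i}` modulo `p ^ k'_i`. As `p ∤ q₀`, these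
congruences say that `x` and `α` are close to the fractions `q / q₀`. The lower bound `N ≤ q₀` makes
`q₀` tend to infinity with `N`. -/
def Hit {p : ℕ} [Fact p.Prime] {d m : ℕ} (α : Fin m → ℤ_[p]) (N : ℕ) (k : Fin d → ℕ)
    (k' : Fin m → ℕ) (x : Fin d → ℤ_[p]) : Prop :=
  ∃ q₀ : ℕ, N ≤ q₀ ∧ q₀ ≤ p ^ N ∧ ¬ p ∣ q₀ ∧ ∃ q : Fin (d + m) → ℤ,
    (∀ i, |q i| ≤ (q₀ : ℤ) ∧ Int.gcd (q i) q₀ = 1) ∧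
    (∀ j, (p : ℤ_[p]) ^ k j ∣ (q₀ : ℤ_[p]) * x j - (q (Fin.castAdd m j) : ℤ_[p])) ∧
    (∀ i, (p : ℤ_[p]) ^ k' i ∣ (q₀ : ℤ_[p]) * α i - (q (Fin.natAdd d i) : ℤ_[p]))

/-- The homomorphism `v ↦ (v₀ aᵢ - vᵢ mod p ^ kᵢ)ᵢ`. -/
def lattHom (p : ℕ) {n : ℕ} (k : Fin n → ℕ) (a : Fin n → ℤ) :
    (Fin (n + 1) → ℤ) →+ (∀ i : Fin n, ZMod (p ^ k i)) where
  toFun v i := ((v 0 * a i - v i.succ : ℤ) : ZMod (p ^ k i))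
  map_zero' := by ext i; simp
  map_add' v w := by ext i; simp; ring

theorem lattHom_eq_zero {p : ℕ} {n : ℕ} {k : Fin n → ℕ} {a : Fin n → ℤ} {v : Fin (n + 1) → ℤ} :
    lattHom p k a v = 0 ↔ ∀ i, ((p ^ k i : ℕ) : ℤ) ∣ v 0 * a i - v i.succ := by
  rw [funext_iff]
  refine forall_congr' fun i => ?_
  exact ZMod.intCast_zmod_eq_zero_iff_dvd _ _

/-- `covering_radius` for the kernel of `lattHom`, whose target has `p ^ ∑ i, k i` elements. -/
theorem lattice_covering {p : ℕ} [Fact p.Prime] {n : ℕ} (k : Fin n → ℕ) (a : Fin n → ℤ) (B : ℕ)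
    (hB : n * B ≤ ∑ i, k i)
    (hns : ∀ v, lattHom p k a v = 0 → (∀ i, |v i| < ((p ^ B : ℕ) : ℤ)) → v = 0)
    (x : Fin (n + 1) → ℤ) :
    ∃ v ∈ (lattHom p k a).ker, ∀ i, |v i - x i| ≤ ((p ^ (∑ i, k i - n * B) : ℕ) : ℤ) := by
  have hp : 0 < p := (Fact.out : p.Prime).pos
  have : ∀ i, NeZero (p ^ k i) := fun i => ⟨(pow_pos hp _).ne'⟩
  obtain ⟨v, hv, hb⟩ := covering_radius (lattHom p k a) (p ^ B) (pow_pos hp _) hns x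
  refine ⟨v, hv, fun i => ?_⟩
  have h1 := hb i
  have h2 : Fintype.card (∀ i : Fin n, ZMod (p ^ k i)) = p ^ (∑ i, k i) := by
    rw [Fintype.card_pi]
    simp only [ZMod.card]
    exact Finset.prod_pow_eq_pow_sum _ _ _
  rw [h2, Fintype.card_fin] at h1
  have h3 : (p : ℤ) ^ (∑ i, k i) = p ^ (∑ i, k i - n * B) * p ^ (n * B) := by
    rw [← pow_add, Nat.sub_add_cancel hB]
  have hp' : (0 : ℤ) < p := by exact_mod_cast hp
  have h4 : (0 : ℤ) < (p : ℤ) ^ (n * B) * p ^ B := by positivity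
  refine le_of_mul_le_mul_right ?_ h4
  push_cast at h1 ⊢
  calc |v i - x i| * ((p : ℤ) ^ (n * B) * p ^ B) = |v i - x i| * ((p : ℤ) ^ B) ^ (n + 1) := by
        rw [← pow_mul, ← pow_add]; ring_nf
    _ ≤ _ := h1
    _ = _ := by rw [h3]; ring

/-- If the lattice attached to `y` and `α` has no nonzero vector shorter than `p ^ B`, then its covering
radius is small, and the vector of `exists_good_vector` is a denominator with numerators hitting
`y`. -/
theorem hit_of_no_short {p : ℕ} [Fact p.Prime] {d m : ℕ} (hd : 1 ≤ d) (α : Fin m → ℤ_[p])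
    (N B : ℕ) (k : Fin d → ℕ) (k' : Fin m → ℕ) (y : Fin d → ℕ)
    (hB : (d + m) * B ≤ ∑ j, k j + ∑ i, k' i)
    (hns : ∀ v, lattHom p (Fin.append k k')
        (Fin.append (fun j => (y j : ℤ)) (fun i => ((α i).appr (k' i) : ℤ))) v = 0 →
        (∀ i, |v i| < ((p ^ B : ℕ) : ℤ)) → v = 0)
    (Y K Δ : ℕ) (hK : (d + m) * K < Y)
    (hΔ : Δ = 14 * (p * primorial Y) * p ^ (∑ j, k j + ∑ i, k' i - (d + m) * B) * Y ^ 2)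
    (hbig : 36 * Δ * p ^ (∑ j, k j + ∑ i, k' i - (d + m) * B) < Y ^ (K + 1))
    (hN : N ≤ Δ) (hN' : 3 * Δ ≤ p ^ N) :
    Hit α N k k' (fun j => (y j : ℤ_[p])) := by
  have hp : p.Prime := Fact.out
  have hsum : ∑ i, (Fin.append k k') i = ∑ j, k j + ∑ i, k' i := by
    rw [Fin.sum_univ_add]; simp
  set kk := Fin.append k k' with hkk
  set a : Fin (d + m) → ℤ :=
    Fin.append (fun j => (y j : ℤ)) (fun i => ((α i).appr (k' i) : ℤ)) with ha
  rw [← hsum] at hB hΔ hbig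
  obtain ⟨v, hv, h1, h2, h3, h4⟩ := exists_good_vector (n := d + m) (by omega)
    (lattHom p kk a).ker (p ^ (∑ i, kk i - (d + m) * B)) (Nat.one_le_pow _ _ hp.pos)
    (lattice_covering kk a B hB hns) p hp (∑ i, kk i) (by
      rw [AddMonoidHom.mem_ker, lattHom_eq_zero]
      intro i
      have h5 : kk i ≤ ∑ i, kk i := Finset.single_le_sum (fun _ _ => Nat.zero_le _)
        (Finset.mem_univ i)
      simp only [Pi.single_eq_same, Pi.single_eq_of_ne (Fin.succ_ne_zero i), sub_zero]
      exact Dvd.dvd.mul_right (by exact_mod_cast pow_dvd_pow p h5) _)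
    (Fin.cons 1 a) (by
      rw [AddMonoidHom.mem_ker, lattHom_eq_zero]
      intro i
      simp) (by simp) Y K _ Δ hK rfl hΔ hbig
  rw [AddMonoidHom.mem_ker, lattHom_eq_zero] at hv
  obtain ⟨q₀, hq₀⟩ := Int.eq_ofNat_of_zero_le (show 0 ≤ v 0 by omega)
  rw [hq₀] at h1 h2 h3 hv
  simp only [hq₀] at h4
  refine ⟨q₀, by omega, by omega, by exact_mod_cast h3, fun i => v i.succ, h4, ?_, ?_⟩
  · intro j
    have h5 := hv (Fin.castAdd m j)
    simp only [hkk, ha, Fin.append_left] at h5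
    rw [← pow_dvd_intCast_iff] at h5
    push_cast at h5
    exact h5
  · intro i
    have h5 := hv (Fin.natAdd d i)
    simp only [hkk, ha, Fin.append_right] at h5
    rw [← pow_dvd_intCast_iff] at h5
    push_cast at h5
    have h6 : (p : ℤ_[p]) ^ k' i ∣ α i - ((α i).appr (k' i) : ℤ_[p]) :=
      Ideal.mem_span_singleton.mp (PadicInt.appr_spec _ _)
    have h7 : (q₀ : ℤ_[p]) * α i - (v (Fin.natAdd d i).succ : ℤ_[p])
        = q₀ * (α i - ((α i).appr (k' i) : ℤ_[p])) +
          (q₀ * ((α i).appr (k' i) : ℤ_[p]) - (v (Fin.natAdd d i).succ : ℤ_[p])) := by ring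
    rw [h7]
    exact dvd_add (Dvd.dvd.mul_left h6 _) h5

/-- If the lattice of `α` has no nonzero vector of norm at most `H`, then its vectors are
`H`-separated, and there are few of norm at most `R`. -/
theorem card_short_le {p : ℕ} [Fact p.Prime] {m : ℕ} (α : Fin m → ℤ_[p]) (R H : ℝ) (hR : 0 ≤ R)
    (hH : 0 < H) (k' : Fin m → ℕ)
    (hnsα : ∀ v₀ : ℤ, ∀ v : Fin m → ℤ,
      (∀ i, (p : ℤ_[p]) ^ k' i ∣ (v₀ : ℤ_[p]) * α i - (v i : ℤ_[p])) →
      (|v₀| : ℝ) ≤ H → (∀ i, (|v i| : ℝ) ≤ H) → v₀ = 0 ∧ v = 0)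
    (T : Finset (Fin (m + 1) → ℤ)) (hT : ∀ v ∈ T, (∀ i, (|v i| : ℝ) ≤ R) ∧
      ∀ i, (p : ℤ_[p]) ^ k' i ∣ (v 0 : ℤ_[p]) * α i - (v i.succ : ℤ_[p])) :
    (T.card : ℝ) ≤ (2 * (R / H) + 2) ^ (m + 1) := by
  have := card_le_of_separated T R H hR hH (fun v hv => (hT v hv).1) (by
    intro v hv v' hv' hlt
    have h0 := hnsα (v 0 - v' 0) (fun i => v i.succ - v' i.succ) (fun i => by
      have := dvd_sub ((hT v hv).2 i) ((hT v' hv').2 i)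
      push_cast
      convert this using 1; ring) (by push_cast; exact (hlt 0).le)
      (fun i => by push_cast; exact (hlt i.succ).le)
    funext i
    refine Fin.cases ?_ (fun i => ?_) i
    · exact sub_eq_zero.mp h0.1
    · exact sub_eq_zero.mp (congrFun h0.2 i))
  simpa using this

/-- The number of residue classes `y` whose lattice contains a nonzero vector shorter than `p ^ B`. The
head and the `α`-part of such a vector form one of the few short vectors of the lattice of `α`, and
for a given nonzero head at most `5 p ^ B` residues are possible in each coordinate of `y`. -/
theorem bad_card_le {p : ℕ} [Fact p.Prime] {d m : ℕ} (α : Fin m → ℤ_[p])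
    (B : ℕ) (H : ℝ) (hH : 0 < H) (k : Fin d → ℕ) (k' : Fin m → ℕ)
    (hk : ∀ j, B ≤ k j) (hk' : ∀ i, B ≤ k' i)
    (hnsα : ∀ v₀ : ℤ, ∀ v : Fin m → ℤ,
      (∀ i, (p : ℤ_[p]) ^ k' i ∣ (v₀ : ℤ_[p]) * α i - (v i : ℤ_[p])) →
      (|v₀| : ℝ) ≤ H → (∀ i, (|v i| : ℝ) ≤ H) → v₀ = 0 ∧ v = 0) :
    (((Fintype.piFinset fun j => Finset.range (p ^ k j)).filter (fun y : Fin d → ℕ =>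
      ¬ ∀ v, lattHom p (Fin.append k k')
        (Fin.append (fun j => (y j : ℤ)) (fun i => ((α i).appr (k' i) : ℤ))) v = 0 →
        (∀ i, |v i| < ((p ^ B : ℕ) : ℤ)) → v = 0)).card : ℝ)
      ≤ (2 * ((p : ℝ) ^ B / H) + 2) ^ (m + 1) * (5 * (p : ℝ) ^ B) ^ d := by
  have hp : p.Prime := Fact.out
  let T : Finset (Fin (m + 1) → ℤ) :=
    (Fintype.piFinset fun _ => Finset.Icc (-((p ^ B : ℕ) : ℤ)) ((p ^ B : ℕ) : ℤ)).filter
      (fun v => (∀ i, |v i| < ((p ^ B : ℕ) : ℤ)) ∧ v 0 ≠ 0 ∧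
        ∀ i : Fin m, (p : ℤ_[p]) ^ k' i ∣ (v 0 : ℤ_[p]) * α i - (v i.succ : ℤ_[p]))
  have hTc : (T.card : ℝ) ≤ (2 * ((p : ℝ) ^ B / H) + 2) ^ (m + 1) := by
    refine card_short_le α _ H (by positivity) hH k' hnsα T fun v hv => ?_
    have h1 := (Finset.mem_filter.mp hv).2
    refine ⟨fun i => ?_, h1.2.2⟩
    have := (h1.1 i).le
    exact_mod_cast this
  let g : (Fin (m + 1) → ℤ) → Finset (Fin d → ℕ) := fun u =>
    Fintype.piFinset fun j => (Finset.range (p ^ k j)).filter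
      (fun y : ℕ => ∃ v : ℤ, |v| < ((p ^ B : ℕ) : ℤ) ∧ ((p ^ k j : ℕ) : ℤ) ∣ u 0 * y - v)
  have hg : ∀ u ∈ T, (g u).card ≤ (5 * p ^ B) ^ d := by
    intro u hu
    have h1 := (Finset.mem_filter.mp hu).2
    rw [Fintype.card_piFinset]
    refine (Finset.prod_le_pow_card _ _ (5 * p ^ B) fun j _ => ?_).trans (by simp)
    exact card_residue_le (p ^ k j) (p ^ B) (u 0) h1.2.1 (h1.1 0)
      (Nat.pow_le_pow_right hp.pos (hk j))
  have hsub : ((Fintype.piFinset fun j => Finset.range (p ^ k j)).filter (fun y : Fin d → ℕ =>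
      ¬ ∀ v, lattHom p (Fin.append k k')
        (Fin.append (fun j => (y j : ℤ)) (fun i => ((α i).appr (k' i) : ℤ))) v = 0 →
        (∀ i, |v i| < ((p ^ B : ℕ) : ℤ)) → v = 0)) ⊆ T.biUnion g := by
    intro y hy
    obtain ⟨hy, hb⟩ := Finset.mem_filter.mp hy
    push Not at hb
    obtain ⟨v, hv, hvB, hv0⟩ := hb
    rw [lattHom_eq_zero] at hv
    have hvj : ∀ j : Fin d, ((p ^ k j : ℕ) : ℤ) ∣ v 0 * y j - v (Fin.castAdd m j).succ := by
      intro j; simpa using hv (Fin.castAdd m j)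
    have hvi : ∀ i : Fin m, ((p ^ k' i : ℕ) : ℤ) ∣
        v 0 * (α i).appr (k' i) - v (Fin.natAdd d i).succ := by
      intro i; simpa using hv (Fin.natAdd d i)
    have hne : v 0 ≠ 0 := by
      intro h0
      rw [h0] at hvj hvi
      apply hv0
      have hz : ∀ (x : ℤ) (l : ℕ), B ≤ l → |x| < ((p ^ B : ℕ) : ℤ) →
          ((p ^ l : ℕ) : ℤ) ∣ 0 - x → x = 0 := by
        intro x l hl hx hd
        rw [zero_sub, dvd_neg] at hd
        refine Int.eq_zero_of_abs_lt_dvd hd (hx.trans_le ?_)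
        exact_mod_cast Nat.pow_le_pow_right hp.pos hl
      funext i
      refine Fin.cases h0 (fun i => ?_) i
      refine Fin.addCases (fun j => ?_) (fun i => ?_) i
      · exact hz _ _ (hk j) (hvB _) (by simpa using hvj j)
      · exact hz _ _ (hk' i) (hvB _) (by simpa using hvi i)
    refine Finset.mem_biUnion.mpr ⟨Fin.cons (v 0) fun i => v (Fin.natAdd d i).succ, ?_, ?_⟩
    · have habs : ∀ i, |(Fin.cons (v 0) fun i => v (Fin.natAdd d i).succ : Fin (m + 1) → ℤ) i|
          < ((p ^ B : ℕ) : ℤ) := by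
        intro i
        refine Fin.cases ?_ (fun i => ?_) i
        · simpa using hvB 0
        · simpa using hvB (Fin.natAdd d i).succ
      refine Finset.mem_filter.mpr ⟨?_, habs, by simpa using hne, fun i => ?_⟩
      · rw [Fintype.mem_piFinset]
        intro i
        have := abs_lt.mp (habs i)
        rw [Finset.mem_Icc]; omega
      · simp only [Fin.cons_zero, Fin.cons_succ]
        have h5 := hvi i
        rw [← pow_dvd_intCast_iff] at h5
        push_cast at h5
        have h6 : (p : ℤ_[p]) ^ k' i ∣ α i - ((α i).appr (k' i) : ℤ_[p]) :=
          Ideal.mem_span_singleton.mp (PadicInt.appr_spec _ _)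
        have h7 : (v 0 : ℤ_[p]) * α i - (v (Fin.natAdd d i).succ : ℤ_[p])
            = v 0 * (α i - ((α i).appr (k' i) : ℤ_[p])) +
              (v 0 * ((α i).appr (k' i) : ℤ_[p]) - (v (Fin.natAdd d i).succ : ℤ_[p])) := by ring
        rw [h7]
        exact dvd_add (Dvd.dvd.mul_left h6 _) h5
    · rw [Fintype.mem_piFinset]
      intro j
      refine Finset.mem_filter.mpr ⟨(Fintype.mem_piFinset.mp hy) j, v (Fin.castAdd m j).succ,
        hvB _, ?_⟩
      simpa using hvj j
  have h1 := (Finset.card_le_card hsub).trans (Finset.card_biUnion_le.trans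
    (Finset.sum_le_card_nsmul T _ _ hg))
  rw [smul_eq_mul] at h1
  calc _ ≤ ((T.card * (5 * p ^ B) ^ d : ℕ) : ℝ) := by exact_mod_cast h1
    _ = (T.card : ℝ) * (5 * (p : ℝ) ^ B) ^ d := by push_cast; ring
    _ ≤ _ := by gcongr

/-! ### Almost every residue class is hit -/

theorem eventually_const_mul_sq_le (p : ℕ) (hp : 2 ≤ p) (C s : ℝ) (hs : 0 < s) :
    ∃ N₀ : ℕ, ∀ N : ℕ, N₀ ≤ N → C * (N : ℝ) ^ 2 ≤ (p : ℝ) ^ (s * N) := by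
  have hp1 : (1 : ℝ) < p := by exact_mod_cast hp
  have h1 := tendsto_pow_const_div_const_pow_of_one_lt 2 (Real.one_lt_rpow hp1 hs)
  have h2 := h1.const_mul C
  rw [mul_zero] at h2
  obtain ⟨N₀, hN₀⟩ := Filter.eventually_atTop.mp (h2.eventually_le_const one_pos)
  refine ⟨N₀, fun N hN => ?_⟩
  have h3 := hN₀ N hN
  have h4 : (p : ℝ) ^ (s * N) = ((p : ℝ) ^ s) ^ N := by
    rw [Real.rpow_mul (by linarith), Real.rpow_natCast]
  rw [h4]
  have h5 : 0 < ((p : ℝ) ^ s) ^ N := by positivity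
  rw [← mul_div_assoc, div_le_one h5] at h3
  exact h3

/-- Parameters admissible in `hit_of_no_short` for the covering radius `p ^ R`. With `Y` a small multiple
of `N` the primorial of `Y` is at most `4 ^ Y`, a small power of `p ^ N`, while the condition
`36 Δ p ^ R < Y ^ (K + 1)` holds with `K ≈ Y / n` because `Y ^ (Y / n)` grows faster than any
exponential in `N`. -/
theorem params_exist (p : ℕ) (hp : 2 ≤ p) (n : ℕ) (hn : 1 ≤ n) (σ : ℝ) (hσ : 0 < σ) :
    ∃ N₀ : ℕ, ∀ N : ℕ, N₀ ≤ N → ∀ R : ℕ, (R : ℝ) ≤ N * (1 - σ) + 2 * n →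
      ∃ Y K Δ : ℕ, n * K < Y ∧ Δ = 14 * (p * primorial Y) * p ^ R * Y ^ 2 ∧
        36 * Δ * p ^ R < Y ^ (K + 1) ∧ N ≤ Δ ∧ 3 * Δ ≤ p ^ N := by
  have hp1 : (1 : ℝ) < p := by exact_mod_cast hp
  obtain ⟨e, he⟩ := exists_nat_gt (4 / σ)
  have he0 : 0 < e := by
    have : (0 : ℝ) < e := lt_trans (by positivity) he
    exact_mod_cast this
  set M := n * (4 * e + 2 * n + 6) + 1 with hM
  obtain ⟨N₁, hN₁⟩ := eventually_const_mul_sq_le p hp (42 * (p : ℝ) ^ (2 * n + 1)) (σ / 2)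
    (by positivity)
  refine ⟨max N₁ (e * (p ^ M + 2 * e + 1)), fun N hN R hR => ?_⟩
  have hYbig : p ^ M + 2 * e + 1 ≤ N / e := by
    rw [Nat.le_div_iff_mul_le he0, mul_comm]
    exact (le_max_right _ _).trans hN
  -- `e > 4 / σ` makes `4 ^ Y` smaller than `p ^ (σ N / 2)`
  set Y := N / e with hY
  set K := (Y - 1) / n with hK
  have hNY : N < e * (Y + 1) := by
    rw [mul_comm]; exact Nat.lt_mul_of_div_lt (Nat.lt_succ_self _) he0
  have hYN : e * Y ≤ N := Nat.mul_div_le N e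
  have hnK : n * K ≤ Y - 1 := Nat.mul_div_le _ _
  have hnK' : Y ≤ (K + 1) * n := by
    have := Nat.lt_mul_of_div_lt (Nat.lt_succ_self ((Y - 1) / n)) hn
    rw [← hK] at this
    have h2 : (K + 1) * n = n * (K + 1) := by ring
    simp only [Nat.succ_eq_add_one] at this
    omega
  have hp0 : 0 < p := by omega
  have hprim : 1 ≤ primorial Y := primorial_pos Y
  have hprim' : primorial Y ≤ p ^ (2 * Y) := by
    calc primorial Y ≤ 4 ^ Y := primorial_le_four_pow Y
      _ = 2 ^ (2 * Y) := by rw [pow_mul]; norm_num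
      _ ≤ p ^ (2 * Y) := Nat.pow_le_pow_left hp _
  have h3Δ : 3 * (14 * (p * primorial Y) * p ^ R * Y ^ 2) ≤ p ^ N := by
    have h1 : ((3 * (14 * (p * primorial Y) * p ^ R * Y ^ 2) : ℕ) : ℝ) ≤ (p : ℝ) ^ (N : ℝ) := by
      have hYle : (Y : ℝ) ≤ N := by exact_mod_cast Nat.div_le_self N e
      have h2 : ((3 * (14 * (p * primorial Y) * p ^ R * Y ^ 2) : ℕ) : ℝ)
          ≤ 3 * (14 * (p * (p : ℝ) ^ (2 * Y)) * p ^ R * (N : ℝ) ^ 2) := by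
        push_cast
        have : (primorial Y : ℝ) ≤ (p : ℝ) ^ (2 * Y) := by exact_mod_cast hprim'
        gcongr
      refine h2.trans ?_
      have h3 := hN₁ N ((le_max_left _ _).trans hN)
      have h4 : (p : ℝ) ^ (2 * Y + R) ≤ (p : ℝ) ^ ((N : ℝ) * (1 - σ / 2) + 2 * n) := by
        rw [← Real.rpow_natCast]
        refine Real.rpow_le_rpow_of_exponent_le hp1.le ?_
        push_cast
        have h5 : (e : ℝ) * Y ≤ N := by exact_mod_cast hYN
        have h6 : 4 < e * σ := by rwa [div_lt_iff₀ hσ] at he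
        have hY0 : (0 : ℝ) ≤ Y := by positivity
        nlinarith
      calc 3 * (14 * (p * (p : ℝ) ^ (2 * Y)) * p ^ R * (N : ℝ) ^ 2)
          = (42 * p * (N : ℝ) ^ 2) * (p : ℝ) ^ (2 * Y + R) := by rw [pow_add]; ring
        _ ≤ (42 * p * (N : ℝ) ^ 2) * (p : ℝ) ^ ((N : ℝ) * (1 - σ / 2) + 2 * n) := by gcongr
        _ = (42 * (p : ℝ) ^ (2 * n + 1) * (N : ℝ) ^ 2) * (p : ℝ) ^ ((N : ℝ) * (1 - σ / 2)) := by
            rw [Real.rpow_add (by linarith), pow_succ]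
            have : (p : ℝ) ^ (2 * (n : ℝ)) = (p : ℝ) ^ (2 * n) := by
              rw [← Real.rpow_natCast]; push_cast; rfl
            rw [this]; ring
        _ ≤ (p : ℝ) ^ (σ / 2 * N) * (p : ℝ) ^ ((N : ℝ) * (1 - σ / 2)) := by gcongr
        _ = (p : ℝ) ^ (N : ℝ) := by
            rw [← Real.rpow_add (by linarith)]; congr 1; ring
    rw [Real.rpow_natCast] at h1
    exact_mod_cast h1
  refine ⟨Y, K, _, by omega, rfl, ?_, ?_, h3Δ⟩
  · set Δ := 14 * (p * primorial Y) * p ^ R * Y ^ 2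
    have hRN : R ≤ N + 2 * n := by
      have : (R : ℝ) ≤ N + 2 * n := by
        have : (0 : ℝ) ≤ N * σ := by positivity
        linarith
      exact_mod_cast this
    have h1 : 36 * Δ * p ^ R ≤ p ^ (2 * N + 2 * n + 6) := by
      calc 36 * Δ * p ^ R ≤ 2 ^ 6 * p ^ N * p ^ (N + 2 * n) := by
            have := Nat.pow_le_pow_right hp0 hRN
            have h36 : 36 * Δ ≤ 2 ^ 6 * p ^ N := by omega
            gcongr
        _ ≤ p ^ 6 * p ^ N * p ^ (N + 2 * n) := by gcongr
        _ = _ := by rw [← pow_add, ← pow_add]; congr 1; ring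
    have h2 : (36 * Δ * p ^ R) ^ n < (Y ^ (K + 1)) ^ n := by
      have hYp : p ^ M ≤ Y := by omega
      have hY1 : 1 ≤ Y := by omega
      calc (36 * Δ * p ^ R) ^ n ≤ (p ^ (2 * N + 2 * n + 6)) ^ n := by gcongr
        _ = p ^ ((2 * N + 2 * n + 6) * n) := by rw [← pow_mul]
        _ < p ^ (M * Y) := by
            refine Nat.pow_lt_pow_right hp ?_
            have h5 : 2 * N + 2 * n + 6 ≤ (4 * e + 2 * n + 6) * Y := by nlinarith
            calc (2 * N + 2 * n + 6) * n ≤ ((4 * e + 2 * n + 6) * Y) * n := by gcongr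
              _ < M * Y := by rw [hM]; nlinarith
        _ = (p ^ M) ^ Y := by rw [pow_mul]
        _ ≤ Y ^ Y := by gcongr
        _ ≤ Y ^ ((K + 1) * n) := Nat.pow_le_pow_right hY1 hnK'
        _ = _ := by rw [pow_mul]
    exact lt_of_pow_lt_pow_left₀ n (by positivity) h2
  · have h1 : N ≤ Y ^ 2 := by
      have : 2 * e ≤ Y := by omega
      nlinarith
    have h2 : 1 ≤ 14 * (p * primorial Y) * p ^ R := by
      have : 1 ≤ p ^ R := Nat.one_le_pow _ _ hp0
      have : 1 ≤ p * primorial Y := Nat.mul_pos hp0 hprim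
      nlinarith
    nlinarith

set_option maxHeartbeats 1000000 in
/-- If the exponents sum to less than `n + 1`, then for large `N` an arbitrarily small proportion of
the residue classes modulo `p ^ ⌈a j * N⌉` is not hit at scale `N`. -/
theorem hit_most {p : ℕ} [Fact p.Prime] {d m : ℕ} (hd : 1 ≤ d) (hm : 1 ≤ m)
    (α : Fin m → ℤ_[p]) (hα : dioExp α = (m : ℝ) + 1) (a : Fin d → ℝ) (τ : Fin m → ℝ)
    (ha : ∀ j, 1 < a j) (hτ : ∀ i, 1 < τ i) (hS : ∑ i, τ i ≤ (m : ℝ) + 1) (η : ℝ) (hη : 0 < η)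
    (hsum : ∑ j, a j + ∑ i, τ i = (d : ℝ) + m + 1 - η) (c : ℝ) (hc : 0 < c) :
    ∃ N₀ : ℕ, ∀ N : ℕ, N₀ ≤ N →
      (((Fintype.piFinset fun j => Finset.range (p ^ ⌈a j * N⌉₊)).filter (fun y : Fin d → ℕ =>
        ¬ Hit α N (fun j => ⌈a j * N⌉₊) (fun i => ⌈τ i * N⌉₊) (fun j => (y j : ℤ_[p])))).card : ℝ)
      ≤ c * (p : ℝ) ^ (∑ j, ⌈a j * N⌉₊) := by
  have hp : p.Prime := Fact.out
  have hp1 : (1 : ℝ) < p := by exact_mod_cast hp.one_lt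
  have hp0 : (0 : ℝ) < p := by linarith
  have hd' : (1 : ℝ) ≤ d := by exact_mod_cast hd
  have hm' : (1 : ℝ) ≤ m := by exact_mod_cast hm
  set n := d + m with hn
  have hnR : (n : ℝ) = d + m := by rw [hn]; push_cast; rfl
  set σ := η / (2 * n + 1) with hσd
  have hσ : 0 < σ := by positivity
  have hησ : η = (2 * n + 1) * σ := by rw [hσd]; field_simp
  set S := ∑ i, τ i with hSd
  have hSm : (m : ℝ) ≤ S := by
    have : ∑ i : Fin m, (1 : ℝ) ≤ S := Finset.sum_le_sum fun i _ => (hτ i).le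
    simpa using this
  have had : (d : ℝ) ≤ ∑ j, a j := by
    have : ∑ i : Fin d, (1 : ℝ) ≤ ∑ j, a j := Finset.sum_le_sum fun i _ => (ha i).le
    simpa using this
  have hη1 : η ≤ 1 := by linarith
  -- `p ^ (β N)` is the length below which the lattices of most cells have no nonzero vector
  set β := 1 - 2 * σ with hβ
  have hn1 : (1 : ℝ) ≤ n := by linarith
  have hβ0 : 0 ≤ β := by
    have : 3 * σ ≤ η := by rw [hησ]; nlinarith
    linarith
  obtain ⟨N₁, hN₁⟩ := params_exist p hp.two_le n (by omega) σ hσ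
  obtain ⟨N₂, hN₂⟩ := no_short hm α hα τ hτ hS (σ / 2) (by positivity)
  obtain ⟨N₃, hN₃⟩ := eventually_const_mul_sq_le p hp.two_le (4 ^ (m + 1) * 5 ^ d / c) (σ / 4)
    (by positivity)
  refine ⟨max (max N₁ N₂) (max N₃ 1), fun N hN => ?_⟩
  simp only [max_le_iff] at hN
  obtain ⟨⟨h1, h2⟩, h3, h4⟩ := hN
  have hN1 : (1 : ℝ) ≤ N := by exact_mod_cast h4
  set k : Fin d → ℕ := fun j => ⌈a j * N⌉₊ with hk
  set k' : Fin m → ℕ := fun i => ⌈τ i * N⌉₊ with hk'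
  have hklow : ∀ j, a j * N ≤ k j := fun j => Nat.le_ceil _
  have hk'low : ∀ i, τ i * N ≤ k' i := fun i => Nat.le_ceil _
  have hkup : ∀ j, (k j : ℝ) ≤ a j * N + 1 := fun j =>
    (Nat.ceil_lt_add_one (by have := ha j; positivity)).le
  have hk'up : ∀ i, (k' i : ℝ) ≤ τ i * N + 1 := fun i =>
    (Nat.ceil_lt_add_one (by have := hτ i; positivity)).le
  have hsk : (∑ j, a j) * N ≤ ((∑ j, k j : ℕ) : ℝ) := by
    rw [Finset.sum_mul]; push_cast; exact Finset.sum_le_sum fun j _ => hklow j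
  have hsk' : S * N ≤ ((∑ i, k' i : ℕ) : ℝ) := by
    rw [Finset.sum_mul]; push_cast; exact Finset.sum_le_sum fun j _ => hk'low j
  have hsku : ((∑ j, k j : ℕ) : ℝ) ≤ (∑ j, a j) * N + d := by
    have : ((∑ j, k j : ℕ) : ℝ) ≤ ∑ j, (a j * N + 1) := by
      push_cast; exact Finset.sum_le_sum fun j _ => hkup j
    rw [Finset.sum_add_distrib, ← Finset.sum_mul] at this
    simpa using this
  have hsku' : ((∑ i, k' i : ℕ) : ℝ) ≤ S * N + m := by
    have : ((∑ j, k' j : ℕ) : ℝ) ≤ ∑ j, (τ j * N + 1) := by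
      push_cast; exact Finset.sum_le_sum fun j _ => hk'up j
    rw [Finset.sum_add_distrib, ← Finset.sum_mul] at this
    simpa using this
  set B := ⌊β * N⌋₊ with hB
  have hBle : (B : ℝ) ≤ β * N := Nat.floor_le (by positivity)
  have hBge : β * N - 1 ≤ B := (Nat.sub_one_lt_floor _).le
  have hBN : B ≤ N := by
    have : (B : ℝ) ≤ N := hBle.trans (by nlinarith)
    exact_mod_cast this
  have hNk : ∀ j, N ≤ k j := fun j => by
    have : (N : ℝ) ≤ k j := by have := hklow j; have := ha j; nlinarith
    exact_mod_cast this
  have hNk' : ∀ j, N ≤ k' j := fun j => by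
    have : (N : ℝ) ≤ k' j := by have := hk'low j; have := hτ j; nlinarith
    exact_mod_cast this
  have hnB : (d + m) * B ≤ ∑ j, k j + ∑ i, k' i := by
    have e1 : d * B ≤ ∑ j, k j := by
      calc d * B = ∑ _j : Fin d, B := by simp
        _ ≤ _ := Finset.sum_le_sum fun j _ => hBN.trans (hNk j)
    have e2 : m * B ≤ ∑ j, k' j := by
      calc m * B = ∑ _j : Fin m, B := by simp
        _ ≤ _ := Finset.sum_le_sum fun j _ => hBN.trans (hNk' j)
    linarith
  -- a cell whose lattice has no short vector is hit
  have hRR : ((∑ j, k j + ∑ i, k' i - (d + m) * B : ℕ) : ℝ) ≤ N * (1 - σ) + 2 * n := by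
    rw [Nat.cast_sub hnB]
    have e1 : ((∑ j, k j + ∑ i, k' i : ℕ) : ℝ) ≤ (n + 1 - η) * N + n := by
      have : (n + 1 - η : ℝ) = ∑ j, a j + S := by rw [hsum, hnR]
      rw [this]
      push_cast at hsku hsku' ⊢
      linarith
    have e2 : (((d + m) * B : ℕ) : ℝ) = n * B := by push_cast; rw [hnR]
    rw [e2]
    have e3 : (n : ℝ) * (β * N - 1) ≤ n * B := by gcongr
    have e4 : (n + 1 - η : ℝ) * N + n - n * (β * N - 1) = N * (1 - σ) + 2 * n := by
      rw [hησ, hβ]; ring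
    linarith
  obtain ⟨Y, K, Δ, hY1, hY2, hY3, hY4, hY5⟩ := hN₁ N h1 _ hRR
  have hsubset : ((Fintype.piFinset fun j => Finset.range (p ^ k j)).filter (fun y : Fin d → ℕ =>
        ¬ Hit α N k k' (fun j => (y j : ℤ_[p])))) ⊆
      ((Fintype.piFinset fun j => Finset.range (p ^ k j)).filter (fun y : Fin d → ℕ =>
      ¬ ∀ v, lattHom p (Fin.append k k')
        (Fin.append (fun j => (y j : ℤ)) (fun i => ((α i).appr (k' i) : ℤ))) v = 0 →
        (∀ i, |v i| < ((p ^ B : ℕ) : ℤ)) → v = 0)) := by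
    refine Finset.monotone_filter_right _ fun y _ hy hns => hy ?_
    exact hit_of_no_short hd α N B k k' y hnB hns Y K Δ hY1 hY2 hY3 hY4 hY5
  set A := S / (m + 1 + σ / 2) with hA
  have hbad := bad_card_le α B ((p : ℝ) ^ ((N : ℝ) * A)) (by positivity) k k'
    (fun j => hBN.trans (hNk j)) (fun j => hBN.trans (hNk' j)) (hN₂ N h2 k' hk'low)
  have hcard := (Nat.cast_le (α := ℝ)).mpr (Finset.card_le_card hsubset)
  refine hcard.trans (hbad.trans ?_)
  set μ := max (β - A) 0 with hμ
  have hμ1 : 2 * ((p : ℝ) ^ B / (p : ℝ) ^ ((N : ℝ) * A)) + 2 ≤ 4 * (p : ℝ) ^ ((N : ℝ) * μ) := by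
    have e1 : (p : ℝ) ^ B / (p : ℝ) ^ ((N : ℝ) * A) ≤ (p : ℝ) ^ ((N : ℝ) * μ) := by
      rw [← Real.rpow_natCast, ← Real.rpow_sub hp0]
      refine Real.rpow_le_rpow_of_exponent_le hp1.le ?_
      have : (N : ℝ) * (β - A) ≤ N * μ := by gcongr; exact le_max_left _ _
      nlinarith
    have e2 : 1 ≤ (p : ℝ) ^ ((N : ℝ) * μ) :=
      Real.one_le_rpow hp1.le (mul_nonneg (by positivity) (le_max_right _ _))
    linarith
  have hexp : (m + 1) * μ + d * β ≤ ∑ j, a j - σ / 4 := by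
    rcases le_total (β - A) 0 with h | h
    · rw [hμ, max_eq_right h, hβ]; nlinarith
    · rw [hμ, max_eq_left h]
      have e1 : S - σ / 2 ≤ (m + 1) * A := by
        rw [hA, ← mul_div_assoc, le_div_iff₀ (by positivity)]
        have e0 : 0 ≤ σ * ((m : ℝ) + 1 - S) := mul_nonneg hσ.le (by linarith)
        have e00 := sq_nonneg σ
        linarith
      have e2 : ∑ j, a j = n + 1 - η - S := by rw [hnR]; linarith
      rw [e2, hησ]
      have e3 : (m + 1) * (β - A) + d * β = (n + 1) * β - (m + 1) * A := by rw [hnR]; ring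
      rw [e3, hβ]
      linarith
  have hfin : 4 ^ (m + 1) * 5 ^ d * (p : ℝ) ^ (-(σ / 4 * N)) ≤ c := by
    have e1 := hN₃ N h3
    have e2 : 4 ^ (m + 1) * 5 ^ d / c ≤ (p : ℝ) ^ (σ / 4 * N) := by
      refine le_trans ?_ e1
      have : (1 : ℝ) ≤ (N : ℝ) ^ 2 := one_le_pow₀ hN1
      exact le_mul_of_one_le_right (by positivity) this
    rw [Real.rpow_neg hp0.le, ← div_eq_mul_inv, div_le_iff₀ (by positivity)]
    rw [div_le_iff₀ hc] at e2
    linarith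
  calc (2 * ((p : ℝ) ^ B / (p : ℝ) ^ ((N : ℝ) * A)) + 2) ^ (m + 1) * (5 * (p : ℝ) ^ B) ^ d
      ≤ (4 * (p : ℝ) ^ ((N : ℝ) * μ)) ^ (m + 1) * (5 * (p : ℝ) ^ (β * N)) ^ d := by
        have : (p : ℝ) ^ B ≤ (p : ℝ) ^ (β * N) := by
          rw [← Real.rpow_natCast]
          exact Real.rpow_le_rpow_of_exponent_le hp1.le hBle
        gcongr
    _ = 4 ^ (m + 1) * 5 ^ d * (p : ℝ) ^ (N * ((m + 1) * μ + d * β)) := by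
        rw [mul_pow, mul_pow, ← Real.rpow_natCast ((p : ℝ) ^ ((N : ℝ) * μ)), ← Real.rpow_mul hp0.le,
          ← Real.rpow_natCast ((p : ℝ) ^ (β * N)), ← Real.rpow_mul hp0.le]
        have : (p : ℝ) ^ ((N : ℝ) * ((m + 1) * μ + d * β)) =
          (p : ℝ) ^ ((N : ℝ) * μ * ((m + 1 : ℕ) : ℝ)) * (p : ℝ) ^ (β * N * (d : ℝ)) := by
          rw [← Real.rpow_add hp0]; congr 1; push_cast; ring
        rw [this]; ring
    _ ≤ 4 ^ (m + 1) * 5 ^ d * ((p : ℝ) ^ (-(σ / 4 * N)) * (p : ℝ) ^ (∑ j, k j)) := by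
        gcongr
        rw [← Real.rpow_natCast, ← Real.rpow_add hp0]
        refine Real.rpow_le_rpow_of_exponent_le hp1.le ?_
        nlinarith
    _ = (4 ^ (m + 1) * 5 ^ d * (p : ℝ) ^ (-(σ / 4 * N))) * (p : ℝ) ^ (∑ j, k j) := by ring
    _ ≤ _ := by gcongr

/-! ### Counting hit points in balls -/

/-- The ball of centre `b.1` and level `b.2`, that is, of radius `p ^ (-b.2)`, in `ℤ_p^d`. -/
def pball {p : ℕ} [Fact p.Prime] {d : ℕ} (b : (Fin d → ℤ_[p]) × ℕ) : Set (Fin d → ℤ_[p]) :=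
  {z | ∀ j, (p : ℤ_[p]) ^ b.2 ∣ z j - b.1 j}

/-- `CoverCost s A c`: every finite cover of `A` by balls costs at least `c` in dimension `s`, where a
ball of level `l` costs `p ^ (-s l)`. -/
def CoverCost {p : ℕ} [Fact p.Prime] {d : ℕ} (s : ℝ) (A : Set (Fin d → ℤ_[p])) (c : ℝ) : Prop :=
  ∀ F : Finset ((Fin d → ℤ_[p]) × ℕ), A ⊆ ⋃ b ∈ F, pball b →
    c ≤ ∑ b ∈ F, (p : ℝ) ^ (-(s * b.2))

theorem card_le_of_congr (p u v : ℕ) (hp : 0 < p) (hvu : v ≤ u) (S : Finset ℕ)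
    (hS : ∀ y ∈ S, y < p ^ u) (hc : ∀ y ∈ S, ∀ y' ∈ S, ((p ^ v : ℕ) : ℤ) ∣ (y : ℤ) - y') :
    S.card ≤ p ^ (u - v) := by
  have hpv : 0 < p ^ v := pow_pos hp _
  have h := Finset.card_le_card_of_injOn (s := S) (t := Finset.range (p ^ (u - v)))
    (fun y => y / p ^ v) (by
      intro y hy
      simp only [Finset.coe_range, Set.mem_Iio]
      rw [Nat.div_lt_iff_lt_mul hpv, ← pow_add, Nat.sub_add_cancel hvu]
      exact hS y hy) (by
      intro y hy y' hy' heq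
      simp only at heq
      have h1 : y ≡ y' [MOD p ^ v] := by
        rw [Nat.modEq_iff_dvd]; exact hc y' hy' y hy
      rw [← Nat.div_add_mod y (p ^ v), ← Nat.div_add_mod y' (p ^ v), heq, h1])
  simpa using h

theorem natCast_pow_dvd_iff {p : ℕ} [Fact p.Prime] (v : ℕ) (y y' : ℕ) :
    (p : ℤ_[p]) ^ v ∣ (y : ℤ_[p]) - y' ↔ ((p ^ v : ℕ) : ℤ) ∣ (y : ℤ) - y' := by
  rw [← pow_dvd_intCast_iff]; push_cast; rfl

theorem card_cells_ge {p : ℕ} [Fact p.Prime] (x : ℤ_[p]) (k l : ℕ) (hl : l ≤ k) :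
    p ^ (k - l) ≤ ((Finset.range (p ^ k)).filter
      (fun y : ℕ => (p : ℤ_[p]) ^ l ∣ (y : ℤ_[p]) - x)).card := by
  have hp : 0 < p := (Fact.out : p.Prime).pos
  have h := Finset.card_le_card_of_injOn (s := Finset.range (p ^ (k - l)))
    (t := (Finset.range (p ^ k)).filter (fun y : ℕ => (p : ℤ_[p]) ^ l ∣ (y : ℤ_[p]) - x))
    (fun t => x.appr l + p ^ l * t) (by
      intro t ht
      simp only [Finset.coe_range, Set.mem_Iio] at ht
      simp only [Finset.coe_filter, Finset.mem_range, Set.mem_ofPred_eq]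
      refine ⟨?_, ?_⟩
      · calc x.appr l + p ^ l * t < p ^ l * (t + 1) := by
              have := PadicInt.appr_lt x l; rw [mul_add]; omega
          _ ≤ p ^ l * p ^ (k - l) := by gcongr; exact ht
          _ = p ^ k := by rw [← pow_add]; congr 1; omega
      · have h6 : (p : ℤ_[p]) ^ l ∣ x - (x.appr l : ℤ_[p]) :=
          Ideal.mem_span_singleton.mp (PadicInt.appr_spec _ _)
        push_cast
        have e : (x.appr l : ℤ_[p]) + p ^ l * t - x = p ^ l * t - (x - x.appr l) := by ring
        rw [e]
        exact dvd_sub (Dvd.intro _ rfl) h6) (by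
      intro t _ t' _ h
      have hpl : 0 < p ^ l := pow_pos hp _
      exact Nat.eq_of_mul_eq_mul_left hpl (by simpa using h))
  simpa using h

/-- A hit cell of precision `k` contains a rational point, namely `q / q₀`, whose neighbours to any other
precision `K` are all hit to that precision `K`. -/
theorem Hit.exists_center {p : ℕ} [Fact p.Prime] {d m : ℕ} {α : Fin m → ℤ_[p]} {N : ℕ}
    {k : Fin d → ℕ} {k' : Fin m → ℕ} {x : Fin d → ℤ_[p]} (h : Hit α N k k' x) (K : Fin d → ℕ) :
    ∃ z : Fin d → ℤ_[p], (∀ j, (p : ℤ_[p]) ^ k j ∣ z j - x j) ∧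
      ∀ w : Fin d → ℤ_[p], (∀ j, (p : ℤ_[p]) ^ K j ∣ w j - z j) → Hit α N K k' w := by
  obtain ⟨q₀, h1, h2, h3, q, h4, h5, h6⟩ := h
  have hu : IsUnit (q₀ : ℤ_[p]) := by
    rw [PadicInt.isUnit_iff]
    have := (PadicInt.norm_int_lt_one_iff_dvd (p := p) (q₀ : ℤ)).not.mpr (by exact_mod_cast h3)
    push_cast at this
    exact le_antisymm (PadicInt.norm_le_one _) (not_lt.mp this)
  obtain ⟨u, hu⟩ := hu
  refine ⟨fun j => (u⁻¹ : ℤ_[p]ˣ) * (q (Fin.castAdd m j) : ℤ_[p]), fun j => ?_, fun w hw =>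
    ⟨q₀, h1, h2, h3, q, h4, fun j => ?_, h6⟩⟩
  · have e : ((u⁻¹ : ℤ_[p]ˣ) : ℤ_[p]) * (q (Fin.castAdd m j) : ℤ_[p]) - x j
        = -((u⁻¹ : ℤ_[p]ˣ) : ℤ_[p]) * ((q₀ : ℤ_[p]) * x j - (q (Fin.castAdd m j) : ℤ_[p])) := by
      rw [← hu]
      linear_combination (x j) * u.inv_mul
    rw [e]
    exact Dvd.dvd.mul_left (h5 j) _
  · have e : (q₀ : ℤ_[p]) * w j - (q (Fin.castAdd m j) : ℤ_[p])
        = q₀ * (w j - ((u⁻¹ : ℤ_[p]ˣ) : ℤ_[p]) * (q (Fin.castAdd m j) : ℤ_[p])) := by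
      rw [← hu]
      linear_combination (q (Fin.castAdd m j) : ℤ_[p]) * u.mul_inv
    rw [e]
    exact Dvd.dvd.mul_left (hw j) _

/-- Each centre `z y` of precision `k` has its `K`-neighbourhood discretised into the points
`z y j + p ^ K j * e j` of precision `K'`. The bound counts the pairs `(y, e)` whose point falls in a
ball of level `b.2`: the first factor counts the possible `y`, the second the possible `e`. -/
theorem card_hit_points_in_ball {p : ℕ} [Fact p.Prime] {d : ℕ} (k K : Fin d → ℕ) (K' : ℕ)
    (hK' : ∀ j, K j ≤ K')
    (G : Finset (Fin d → ℕ)) (hG : ∀ y ∈ G, ∀ j, y j < p ^ k j)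
    (z : (Fin d → ℕ) → Fin d → ℤ_[p]) (hz : ∀ y ∈ G, ∀ j, (p : ℤ_[p]) ^ k j ∣ z y j - y j)
    (b : (Fin d → ℤ_[p]) × ℕ) (hkK : ∀ j, k j ≤ K j) (hb : b.2 ≤ K') :
    ((G ×ˢ Fintype.piFinset fun j => Finset.range (p ^ (K' - K j))).filter
      (fun w : (Fin d → ℕ) × (Fin d → ℕ) =>
        (fun j => z w.1 j + (p : ℤ_[p]) ^ K j * w.2 j) ∈ pball b)).card
      ≤ p ^ (∑ j, (k j - min (k j) b.2)) * p ^ (∑ j, (K' - K j - (b.2 - K j))) := by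
  have hp : 0 < p := (Fact.out : p.Prime).pos
  set Y : Finset (Fin d → ℕ) := Fintype.piFinset fun j => (Finset.range (p ^ k j)).filter
    (fun y : ℕ => (p : ℤ_[p]) ^ (min (k j) b.2) ∣ (y : ℤ_[p]) - b.1 j)
  set E : (Fin d → ℕ) → Finset (Fin d → ℕ) := fun y => Fintype.piFinset fun j =>
    (Finset.range (p ^ (K' - K j))).filter
    (fun e : ℕ => (p : ℤ_[p]) ^ b.2 ∣ z y j + (p : ℤ_[p]) ^ K j * (e : ℤ_[p]) - b.1 j)
  have hsub : ((G ×ˢ Fintype.piFinset fun j => Finset.range (p ^ (K' - K j))).filter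
      (fun w : (Fin d → ℕ) × (Fin d → ℕ) =>
        (fun j => z w.1 j + (p : ℤ_[p]) ^ K j * w.2 j) ∈ pball b))
      ⊆ Y.biUnion (fun y => (E y).image (Prod.mk y)) := by
    rintro ⟨y, e⟩ hw
    simp only [Finset.mem_filter, Finset.mem_product, Fintype.mem_piFinset,
      Finset.mem_range] at hw
    obtain ⟨⟨hy, he⟩, hmem⟩ := hw
    rw [Finset.mem_biUnion]
    refine ⟨y, ?_, Finset.mem_image.mpr ⟨e, ?_, rfl⟩⟩
    · rw [Fintype.mem_piFinset]
      intro j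
      rw [Finset.mem_filter, Finset.mem_range]
      refine ⟨hG y hy j, ?_⟩
      have h1 := (pow_dvd_pow (p : ℤ_[p]) (min_le_right (k j) b.2)).trans (hmem j)
      have h2 := (pow_dvd_pow (p : ℤ_[p]) (min_le_left (k j) b.2)).trans (hz y hy j)
      have h3 : (p : ℤ_[p]) ^ (min (k j) b.2) ∣ (p : ℤ_[p]) ^ K j * (e j : ℤ_[p]) :=
        Dvd.dvd.mul_right (pow_dvd_pow _ ((min_le_left _ _).trans (hkK j))) _
      have e1 : (y j : ℤ_[p]) - b.1 j = (z y j + (p : ℤ_[p]) ^ K j * (e j : ℤ_[p]) - b.1 j)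
        - (z y j - y j) - (p : ℤ_[p]) ^ K j * (e j : ℤ_[p]) := by ring
      rw [e1]
      exact dvd_sub (dvd_sub h1 h2) h3
    · rw [Fintype.mem_piFinset]
      intro j
      rw [Finset.mem_filter, Finset.mem_range]
      exact ⟨he j, hmem j⟩
  have hY : Y.card ≤ p ^ (∑ j, (k j - min (k j) b.2)) := by
    rw [Fintype.card_piFinset, ← Finset.prod_pow_eq_pow_sum]
    refine Finset.prod_le_prod' fun j _ => ?_
    refine card_le_of_congr p _ _ hp (min_le_left _ _) _ (fun y hy => ?_) (fun y hy y' hy' => ?_)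
    · exact Finset.mem_range.mp (Finset.mem_filter.mp hy).1
    · rw [← natCast_pow_dvd_iff]
      have := dvd_sub (Finset.mem_filter.mp hy).2 (Finset.mem_filter.mp hy').2
      rwa [sub_sub_sub_cancel_right] at this
  have hE : ∀ y, (E y).card ≤ p ^ (∑ j, (K' - K j - (b.2 - K j))) := by
    intro y
    rw [Fintype.card_piFinset, ← Finset.prod_pow_eq_pow_sum]
    refine Finset.prod_le_prod' fun j _ => ?_
    refine card_le_of_congr p _ _ hp (by omega) _ (fun y hy => ?_) (fun e he e' he' => ?_)
    · exact Finset.mem_range.mp (Finset.mem_filter.mp hy).1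
    · have h1 := dvd_sub (Finset.mem_filter.mp he).2 (Finset.mem_filter.mp he').2
      rcases le_total b.2 (K j) with h | h
      · rw [Nat.sub_eq_zero_of_le h]; simp
      · rw [← natCast_pow_dvd_iff]
        have e1 : (z y j + (p : ℤ_[p]) ^ K j * (e : ℤ_[p]) - b.1 j) -
          (z y j + (p : ℤ_[p]) ^ K j * (e' : ℤ_[p]) - b.1 j)
          = (p : ℤ_[p]) ^ K j * ((e : ℤ_[p]) - e') := by ring
        rw [e1, ← Nat.add_sub_cancel' h, pow_add] at h1
        refine (mul_dvd_mul_iff_left ?_).mp h1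
        exact pow_ne_zero _ (by exact_mod_cast hp.ne')
  refine (Finset.card_le_card hsub).trans ((Finset.card_biUnion_le_card_mul _ _ _ fun y _ =>
    Finset.card_image_le.trans (hE y)).trans ?_)
  exact Nat.mul_le_mul_right _ hY

/-- Covering the points hit to precision `K` inside a ball of level `l` costs at least as much as the
ball itself, provided most cells of precision `k` are hit. A finite cover is compared with the
uniform measure on the `K`-neighbourhoods of the centres of the hit cells in the ball, discretised
at a level `K'` finer than all balls of the cover; `hstar` says that the cost of a ball of level `r`
dominates its share of that measure. -/
theorem local_content {p : ℕ} [Fact p.Prime] {d m : ℕ} (α : Fin m → ℤ_[p])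
    (N : ℕ) (k K : Fin d → ℕ) (k' : Fin m → ℕ) (l : ℕ) (s : ℝ) (hs : 0 ≤ s)
    (hkK : ∀ j, k j ≤ K j) (hlk : ∀ j, l ≤ k j)
    (hbad : (((Fintype.piFinset fun j => Finset.range (p ^ k j)).filter (fun y : Fin d → ℕ =>
        ¬ Hit α N k k' (fun j => (y j : ℤ_[p])))).card : ℝ)
      ≤ ((1 - (p : ℝ) ^ (-(d - s))) * (p : ℝ) ^ (-(d * l : ℝ))) * (p : ℝ) ^ (∑ j, k j))
    (hstar : ∀ r : ℕ, l < r → s * (r - l) + (d - s) + d * l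
      ≤ ((∑ j, (min (k j) r + (r - K j)) : ℕ) : ℝ))
    (x : Fin d → ℤ_[p]) :
    CoverCost s ({z | Hit α N K k' z} ∩ pball (x, l)) ((p : ℝ) ^ (-(s * l))) := by
  have hp : p.Prime := Fact.out
  have hp1 : (1 : ℝ) < p := by exact_mod_cast hp.one_lt
  have hp0 : (0 : ℝ) < p := by linarith
  intro F hF
  -- a cover containing a ball of level at most `l` already has the required cost
  by_cases hsmall : ∃ b ∈ F, b.2 ≤ l
  · obtain ⟨b, hb, hbl⟩ := hsmall
    refine le_trans ?_ (Finset.single_le_sum (f := fun b : (Fin d → ℤ_[p]) × ℕ =>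
      (p : ℝ) ^ (-(s * b.2))) (fun b _ => by positivity) hb)
    refine Real.rpow_le_rpow_of_exponent_le hp1.le ?_
    have : (b.2 : ℝ) ≤ l := by exact_mod_cast hbl
    nlinarith
  push Not at hsmall
  set K' := ∑ b ∈ F, b.2 + ∑ j, K j with hK'
  have hKK' : ∀ j, K j ≤ K' := fun j =>
    (Finset.single_le_sum (f := K) (fun _ _ => Nat.zero_le _) (Finset.mem_univ j)).trans
      (Nat.le_add_left _ _)
  have hbK' : ∀ b ∈ F, b.2 ≤ K' := fun b hb =>
    (Finset.single_le_sum (f := fun b : (Fin d → ℤ_[p]) × ℕ => b.2) (fun _ _ => Nat.zero_le _)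
      hb).trans (Nat.le_add_right _ _)
  -- the cells inside the ball, and those among them that are hit
  set C : Finset (Fin d → ℕ) := Fintype.piFinset fun j => (Finset.range (p ^ k j)).filter
    (fun y : ℕ => (p : ℤ_[p]) ^ l ∣ (y : ℤ_[p]) - x j) with hC
  set G := C.filter (fun y => Hit α N k k' (fun j => (y j : ℤ_[p]))) with hGd
  have hCc : p ^ (∑ j, (k j - l)) ≤ C.card := by
    rw [hC, Fintype.card_piFinset, ← Finset.prod_pow_eq_pow_sum]
    exact Finset.prod_le_prod' fun j _ => card_cells_ge (x j) (k j) l (hlk j)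
  have hksum : ∑ j, (k j - l) + d * l = ∑ j, k j := by
    have : d * l = ∑ _j : Fin d, l := by simp
    rw [this, ← Finset.sum_add_distrib]
    exact Finset.sum_congr rfl fun j _ => Nat.sub_add_cancel (hlk j)
  have hGc : (p : ℝ) ^ (-(d - s)) * (p : ℝ) ^ (∑ j, (k j - l)) ≤ G.card := by
    have h1 : C.card ≤ G.card +
        ((Fintype.piFinset fun j => Finset.range (p ^ k j)).filter (fun y : Fin d → ℕ =>
        ¬ Hit α N k k' (fun j => (y j : ℤ_[p])))).card := by
      rw [← Finset.card_filter_add_card_filter_not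
        (s := C) (fun y => Hit α N k k' (fun j => (y j : ℤ_[p])))]
      refine Nat.add_le_add_left (Finset.card_le_card (Finset.filter_subset_filter _ ?_)) _
      exact Fintype.piFinset_subset _ _ fun j => Finset.filter_subset _ _
    have h2 : (p : ℝ) ^ (∑ j, (k j - l)) ≤ C.card := by exact_mod_cast hCc
    have h3 : (C.card : ℝ) ≤ (G.card : ℝ) +
        (((Fintype.piFinset fun j => Finset.range (p ^ k j)).filter (fun y : Fin d → ℕ =>
        ¬ Hit α N k k' (fun j => (y j : ℤ_[p])))).card : ℝ) := by exact_mod_cast h1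
    have h4 : (p : ℝ) ^ (-(d * l : ℝ)) * (p : ℝ) ^ (∑ j, k j) = (p : ℝ) ^ (∑ j, (k j - l)) := by
      rw [← hksum, pow_add, ← Real.rpow_natCast (p : ℝ) (d * l), mul_comm, mul_assoc,
        ← Real.rpow_add hp0]
      push_cast
      simp
    rw [mul_assoc, h4] at hbad
    linarith
  have hGlt : ∀ y ∈ G, ∀ j, y j < p ^ k j := fun y hy j => Finset.mem_range.mp
    (Finset.mem_filter.mp (Fintype.mem_piFinset.mp (Finset.mem_filter.mp hy).1 j)).1
  have hch : ∀ y : Fin d → ℕ, ∃ z : Fin d → ℤ_[p], y ∈ G →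
      (∀ j, (p : ℤ_[p]) ^ k j ∣ z j - y j) ∧
      ∀ w : Fin d → ℤ_[p], (∀ j, (p : ℤ_[p]) ^ K j ∣ w j - z j) → Hit α N K k' w := by
    intro y
    by_cases hy : y ∈ G
    · obtain ⟨z, hz⟩ := (Finset.mem_filter.mp hy).2.exists_center K
      exact ⟨z, fun _ => hz⟩
    · exact ⟨0, fun h => absurd h hy⟩
  choose z hz using hch
  set P := G ×ˢ Fintype.piFinset fun j => Finset.range (p ^ (K' - K j)) with hP
  have hcov : P ⊆ F.biUnion (fun b => P.filter (fun w : (Fin d → ℕ) × (Fin d → ℕ) =>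
        (fun j => z w.1 j + (p : ℤ_[p]) ^ K j * w.2 j) ∈ pball b)) := by
    rintro ⟨y, e⟩ hye
    have hy : y ∈ G := (Finset.mem_product.mp hye).1
    have hin : (fun j => z y j + (p : ℤ_[p]) ^ K j * e j) ∈
        ({z | Hit α N K k' z} ∩ pball (x, l)) := by
      refine ⟨(hz y hy).2 _ fun j => ?_, fun j => ?_⟩
      · simp
      · have h1 : (p : ℤ_[p]) ^ l ∣ (y j : ℤ_[p]) - x j :=
          (Finset.mem_filter.mp (Fintype.mem_piFinset.mp (Finset.mem_filter.mp hy).1 j)).2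
        have h2 := (pow_dvd_pow (p : ℤ_[p]) (hlk j)).trans ((hz y hy).1 j)
        have h3 : (p : ℤ_[p]) ^ l ∣ (p : ℤ_[p]) ^ K j * (e j : ℤ_[p]) :=
          Dvd.dvd.mul_right (pow_dvd_pow _ ((hlk j).trans (hkK j))) _
        have e1 : z y j + (p : ℤ_[p]) ^ K j * (e j : ℤ_[p]) - x j
          = (z y j - y j) + (y j - x j) + (p : ℤ_[p]) ^ K j * (e j : ℤ_[p]) := by ring
        simp only
        rw [e1]
        exact dvd_add (dvd_add h2 h1) h3
    obtain ⟨b, hb, hmem⟩ := Set.mem_iUnion₂.mp (hF hin)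
    exact Finset.mem_biUnion.mpr ⟨b, hb, Finset.mem_filter.mpr ⟨hye, hmem⟩⟩
  have hPc : P.card = G.card * p ^ (∑ j, (K' - K j)) := by
    rw [hP, Finset.card_product, Fintype.card_piFinset, ← Finset.prod_pow_eq_pow_sum]
    simp
  have hcount := (Finset.card_le_card hcov).trans (Finset.card_biUnion_le.trans
    (Finset.sum_le_sum fun b hb => card_hit_points_in_ball k K K' hKK' G hGlt z
      (fun y hy => (hz y hy).1) b hkK (hbK' b hb)))
  rw [hPc] at hcount
  have hcount' : (G.card : ℝ) * (p : ℝ) ^ (∑ j, (K' - K j)) ≤ ∑ b ∈ F,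
      ((p : ℝ) ^ (∑ j, (k j - min (k j) b.2)) * (p : ℝ) ^ (∑ j, (K' - K j - (b.2 - K j)))) := by
    exact_mod_cast hcount
  -- the cost of a single ball compared with its number of points
  have hterm : ∀ b ∈ F,
      (p : ℝ) ^ (∑ j, (k j - min (k j) b.2)) * (p : ℝ) ^ (∑ j, (K' - K j - (b.2 - K j)))
      ≤ (p : ℝ) ^ (-(s * b.2)) * ((p : ℝ) ^ (s * l) * ((p : ℝ) ^ (-(d - s)) *
        (p : ℝ) ^ (∑ j, (k j - l)) * (p : ℝ) ^ (∑ j, (K' - K j)))) := by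
    intro b hb
    have h1 : ∑ j, (k j - min (k j) b.2) + ∑ j, (K' - K j - (b.2 - K j)) +
        ∑ j, (min (k j) b.2 + (b.2 - K j)) = ∑ j, (k j - l) + d * l + ∑ j, (K' - K j) := by
      rw [hksum, ← Finset.sum_add_distrib, ← Finset.sum_add_distrib, ← Finset.sum_add_distrib]
      refine Finset.sum_congr rfl fun j _ => ?_
      have := hKK' j
      have := hbK' b hb
      omega
    have h2 := hstar b.2 (hsmall b hb)
    have h3 : ((∑ j, (k j - min (k j) b.2) : ℕ) : ℝ) + ((∑ j, (K' - K j - (b.2 - K j)) : ℕ) : ℝ) +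
        ((∑ j, (min (k j) b.2 + (b.2 - K j)) : ℕ) : ℝ)
        = ((∑ j, (k j - l) : ℕ) : ℝ) + d * l + ((∑ j, (K' - K j) : ℕ) : ℝ) := by
      exact_mod_cast h1
    simp only [← Real.rpow_natCast, ← Real.rpow_add hp0]
    refine Real.rpow_le_rpow_of_exponent_le hp1.le ?_
    linarith
  have hall := hcount'.trans (Finset.sum_le_sum hterm)
  rw [← Finset.sum_mul] at hall
  set Q := (p : ℝ) ^ (-(d - s)) * (p : ℝ) ^ (∑ j, (k j - l)) * (p : ℝ) ^ (∑ j, (K' - K j)) with hQ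
  have hQ0 : 0 < Q := by positivity
  have hlow : Q ≤ (G.card : ℝ) * (p : ℝ) ^ (∑ j, (K' - K j)) := by rw [hQ]; gcongr
  have h5 := hlow.trans hall
  have h6 : 1 ≤ (∑ b ∈ F, (p : ℝ) ^ (-(s * b.2))) * (p : ℝ) ^ (s * l) := by
    rw [← mul_assoc] at h5
    exact (le_mul_iff_one_le_left hQ0).mp h5
  rw [Real.rpow_neg hp0.le, inv_le_iff_one_le_mul₀ (by positivity)]
  exact h6

/-! ### Local covering cost of the hit sets -/

/-- Both sides are piecewise linear in `ρ`, and the right-hand side has slope `#{j | b j ≤ ρ}`. Their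
difference is therefore controlled at a breakpoint: the largest `b i ≤ ρ` if that slope is at least
`s`, and the smallest `b i > ρ` otherwise. -/
theorem le_of_breakpoints {d : ℕ} (b : Fin d → ℝ) (E s : ℝ) (hs0 : 0 < s)
    (hsd : s ≤ d) (h : ∀ i, s * b i ≤ E + ∑ j, max (b i - b j) 0) (ρ : ℝ) :
    s * ρ ≤ E + ∑ j, max (ρ - b j) 0 := by
  set L := Finset.univ.filter (fun j => b j ≤ ρ) with hL
  have hsum : ∀ ρ' c : ℝ, (∑ j ∈ L, c : ℝ) = L.card * c := by intro _ c; simp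
  by_cases hc : s ≤ (L.card : ℝ)
  · have hne : L.Nonempty := by
      rw [← Finset.card_pos]
      have : (0 : ℝ) < L.card := hs0.trans_le hc
      exact_mod_cast this
    obtain ⟨i, hi, hmax⟩ := L.exists_max_image b hne
    have hiρ : b i ≤ ρ := (Finset.mem_filter.mp hi).2
    have h1 : ∑ j, max (ρ - b j) 0 = ∑ j, max (b i - b j) 0 + ∑ j, if b j ≤ ρ then ρ - b i else 0 := by
      rw [← Finset.sum_add_distrib]
      refine Finset.sum_congr rfl fun j _ => ?_
      split_ifs with hj
      · have := hmax j (Finset.mem_filter.mpr ⟨Finset.mem_univ _, hj⟩)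
        rw [max_eq_left (by linarith), max_eq_left (by linarith)]; ring
      · rw [max_eq_right (by linarith), max_eq_right (by linarith)]; ring
    rw [h1, ← Finset.sum_filter, Finset.sum_const, nsmul_eq_mul]
    have h2 := h i
    have h3 : s * (ρ - b i) ≤ L.card * (ρ - b i) := by
      apply mul_le_mul_of_nonneg_right hc; linarith
    linarith
  · push Not at hc
    have hne : (Finset.univ.filter (fun j => ¬ b j ≤ ρ)).Nonempty := by
      by_contra hemp
      rw [Finset.not_nonempty_iff_eq_empty, Finset.filter_eq_empty_iff] at hemp
      have : L = Finset.univ := Finset.filter_true_of_mem fun j _ => by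
        have := hemp (Finset.mem_univ j); tauto
      rw [this] at hc
      simp at hc
      linarith
    obtain ⟨i, hi, hmin⟩ := Finset.exists_min_image _ b hne
    have hiρ : ρ < b i := not_le.mp (Finset.mem_filter.mp hi).2
    have h1 : ∑ j, max (b i - b j) 0 = ∑ j, max (ρ - b j) 0 + ∑ j, if b j ≤ ρ then b i - ρ else 0 := by
      rw [← Finset.sum_add_distrib]
      refine Finset.sum_congr rfl fun j _ => ?_
      split_ifs with hj
      · rw [max_eq_left (by linarith), max_eq_left (by linarith)]; ring
      · have := hmin j (Finset.mem_filter.mpr ⟨Finset.mem_univ _, hj⟩)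
        rw [max_eq_right (by linarith), max_eq_right (by linarith)]; ring
    rw [← Finset.sum_filter, Finset.sum_const, nsmul_eq_mul] at h1
    have h2 := h i
    have h3 : (L.card : ℝ) * (b i - ρ) ≤ s * (b i - ρ) := by
      apply mul_le_mul_of_nonneg_right hc.le; linarith
    linarith

/-- The sum `∑ j, min (b j) κ` increases continuously in `κ` from `d` at `κ = 1` to `∑ j, b j`. -/
theorem exists_truncation {d : ℕ} (b : Fin d → ℝ) (hb : ∀ j, 1 < b j) (E : ℝ)
    (hE : (d : ℝ) < E) (hE' : E < ∑ j, b j) :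
    ∃ κ : ℝ, 1 < κ ∧ ∑ j, min (b j) κ = E := by
  have hcont : Continuous (fun κ : ℝ => ∑ j, min (b j) κ) := by fun_prop
  have hle : ∀ j, b j ≤ ∑ j, b j := fun j =>
    Finset.single_le_sum (f := b) (fun i _ => by linarith [hb i]) (Finset.mem_univ j)
  have hd : (∑ j, min (b j) 1) = d := by
    rw [Finset.sum_congr rfl fun j _ => min_eq_right (hb j).le]; simp
  have h1 : (1 : ℝ) ≤ ∑ j, b j := by
    have : 0 < d := by
      rcases Nat.eq_zero_or_pos d with rfl | h
      · simp at hE hE'; linarith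
      · exact h
    exact (hb ⟨0, this⟩).le.trans (hle _)
  obtain ⟨κ, hκ, hκE⟩ := intermediate_value_Icc h1 hcont.continuousOn
    (show E ∈ Set.Icc _ _ from ⟨by rw [hd]; exact hE.le, by
      rw [Finset.sum_congr rfl fun j _ => min_eq_left (hle j)]; exact hE'.le⟩)
  refine ⟨κ, lt_of_le_of_ne hκ.1 ?_, hκE⟩
  rintro rfl
  simp only at hκE
  linarith

set_option maxHeartbeats 1000000 in
/-- `local_content` for exponents `b` whose sum with `τ` exceeds `n + 1`. The exponents are truncated to
`a j = min (b j) κ`, of sum slightly less than `n + 1 - ∑ i, τ i`, so that `hit_most` applies to the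
cells of exponents `a`. The gap between `s` and `s'` absorbs the rounding of the exponents. -/
theorem local_content_eventually {p : ℕ} [Fact p.Prime] {d m : ℕ} (hd : 1 ≤ d) (hm : 1 ≤ m)
    (α : Fin m → ℤ_[p]) (hα : dioExp α = (m : ℝ) + 1) (b : Fin d → ℝ) (τ : Fin m → ℝ)
    (hb : ∀ j, 1 < b j) (hτ : ∀ i, 1 < τ i) (hS : ∑ i, τ i < (m : ℝ) + 1)
    (hsum : (d : ℝ) + m + 1 < ∑ j, b j + ∑ i, τ i) (s s' : ℝ) (hs0 : 0 ≤ s) (hss : s < s')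
    (hsd : s' ≤ d) (hs' : ∀ i, s' * b i < (d : ℝ) + m + 1 - ∑ i, τ i + ∑ j, max (b i - b j) 0)
    (l : ℕ) :
    ∃ N₀ : ℕ, ∀ N : ℕ, N₀ ≤ N → ∀ x : Fin d → ℤ_[p],
      CoverCost s ({z | Hit α N (fun j => ⌈b j * N⌉₊) (fun i => ⌈τ i * N⌉₊) z} ∩ pball (x, l))
        ((p : ℝ) ^ (-(s * l))) := by
  have hp : p.Prime := Fact.out
  have hp1 : (1 : ℝ) < p := by exact_mod_cast hp.one_lt
  have hp0 : (0 : ℝ) < p := by linarith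
  set S := ∑ i, τ i with hSd
  set D := (d : ℝ) + m + 1 - S with hD
  have : Nonempty (Fin d) := ⟨⟨0, hd⟩⟩
  obtain ⟨i₀, hi₀⟩ := Finite.exists_min (fun i => D + ∑ j, max (b i - b j) 0 - s' * b i)
  -- `η` is the loss in the sum of the exponents that leaves all inequalities at breakpoints valid
  set η := min ((D - d) / 2) (D + ∑ j, max (b i₀ - b j) 0 - s' * b i₀) with hη
  have hη0 : 0 < η := lt_min (by linarith) (by linarith [hs' i₀])
  have hη1 : η < D - d := (min_le_left _ _).trans_lt (by linarith)
  have hη2 : ∀ i, s' * b i ≤ (D - η) + ∑ j, max (b i - b j) 0 := by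
    intro i
    have := hi₀ i
    have h2 : η ≤ D + ∑ j, max (b i₀ - b j) 0 - s' * b i₀ := min_le_right _ _
    linarith
  obtain ⟨κ, hκ1, hκ⟩ := exists_truncation b hb (D - η) (by linarith) (by linarith)
  set a : Fin d → ℝ := fun j => min (b j) κ with ha
  have ha1 : ∀ j, 1 < a j := fun j => lt_min (hb j) hκ1
  have hab : ∀ j, a j ≤ b j := fun j => min_le_left _ _
  have hs'0 : 0 < s' := hs0.trans_lt hss
  -- the real form of the comparison of exponents
  have hreal : ∀ ρ : ℝ, s' * ρ ≤ ∑ j, (min (a j) ρ + max (ρ - b j) 0) ∨ ρ ≤ 0 := by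
    intro ρ
    by_cases hρ0 : ρ ≤ 0
    · exact Or.inr hρ0
    left
    push Not at hρ0
    -- below `κ` the right-hand side is `d * ρ`; above, the truncated exponents have sum `D - η`
    rcases le_total ρ κ with h | h
    · have : ∀ j, min (a j) ρ + max (ρ - b j) 0 = ρ := by
        intro j
        simp only [ha, min_assoc, min_eq_right h]
        rcases le_total (b j) ρ with h' | h'
        · rw [min_eq_left h', max_eq_left (by linarith)]; ring
        · rw [min_eq_right h', max_eq_right (by linarith)]; ring
      rw [Finset.sum_congr rfl fun j _ => this j]
      simp only [Finset.sum_const, Finset.card_univ, Fintype.card_fin, nsmul_eq_mul]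
      nlinarith
    · rw [Finset.sum_add_distrib, Finset.sum_congr rfl fun j _ =>
        (min_eq_left ((min_le_right (b j) κ).trans h) : min (a j) ρ = a j), hκ]
      exact le_of_breakpoints b _ s' hs'0 hsd hη2 ρ
  have hθ : (p : ℝ) ^ (-((d : ℝ) - s)) < 1 :=
    Real.rpow_lt_one_of_one_lt_of_neg hp1 (by linarith)
  obtain ⟨N₁, hN₁⟩ := hit_most hd hm α hα a τ ha1 hτ hS.le η hη0 (by rw [hκ]; linarith)
    ((1 - (p : ℝ) ^ (-((d : ℝ) - s))) * (p : ℝ) ^ (-(d * l : ℝ)))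
    (mul_pos (by linarith) (by positivity))
  obtain ⟨N₂, hN₂⟩ := exists_nat_gt ((2 * d + d * l) / (s' - s) : ℝ)
  refine ⟨max (max N₁ N₂) (max l 1), fun N hN x => ?_⟩
  simp only [max_le_iff] at hN
  obtain ⟨⟨h1, h2⟩, h3, h4⟩ := hN
  have hN1 : (1 : ℝ) ≤ N := by exact_mod_cast h4
  have hN0 : (0 : ℝ) < N := by linarith
  have hNk : ∀ j, N ≤ ⌈a j * N⌉₊ := fun j => by
    have : (N : ℝ) ≤ (⌈a j * N⌉₊ : ℝ) := le_trans (by have := ha1 j; nlinarith) (Nat.le_ceil _)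
    exact_mod_cast this
  have hkK : ∀ j, ⌈a j * N⌉₊ ≤ ⌈b j * N⌉₊ := fun j =>
    Nat.ceil_mono (mul_le_mul_of_nonneg_right (hab j) hN0.le)
  refine local_content α N (fun j => ⌈a j * N⌉₊) _ _ l s hs0 hkK
    (fun j => h3.trans (hNk j)) (hN₁ N h1) ?_ x
  intro r hr
  have hr' : (l : ℝ) + 1 ≤ r := by exact_mod_cast hr
  rcases le_total r N with hrN | hrN
  · have e1 : d * r ≤ ∑ j, (min ⌈a j * N⌉₊ r + (r - ⌈b j * N⌉₊)) := by
      calc d * r = ∑ _j : Fin d, r := by simp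
        _ ≤ _ := Finset.sum_le_sum fun j _ => by
          have := hNk j
          omega
    have e2 : (d : ℝ) * r ≤ ((∑ j, (min ⌈a j * N⌉₊ r + (r - ⌈b j * N⌉₊)) : ℕ) : ℝ) := by
      exact_mod_cast e1
    refine le_trans ?_ e2
    nlinarith
  · have hrN' : (N : ℝ) ≤ r := by exact_mod_cast hrN
    have e1 : s' * r - d ≤ ((∑ j, (min ⌈a j * N⌉₊ r + (r - ⌈b j * N⌉₊)) : ℕ) : ℝ) := by
      have e2 := (hreal (r / N)).resolve_right (by
        have : 0 < (r : ℝ) / N := by have : (0 : ℝ) < r := by linarith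
                                     positivity
        linarith)
      have e3 : ∑ j, (((min (a j) (r / N) + max (r / N - b j) 0) * N - 1 : ℝ)) ≤
          ((∑ j, (min ⌈a j * N⌉₊ r + (r - ⌈b j * N⌉₊)) : ℕ) : ℝ) := by
        push_cast
        refine Finset.sum_le_sum fun j _ => ?_
        have f1 : min (a j) (r / N) * N ≤ min (⌈a j * N⌉₊ : ℝ) r := by
          refine le_min ?_ ?_
          · exact (mul_le_mul_of_nonneg_right (min_le_left _ _) hN0.le).trans (Nat.le_ceil _)
          · exact (mul_le_mul_of_nonneg_right (min_le_right _ _) hN0.le).trans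
              (by rw [div_mul_cancel₀ _ hN0.ne'])
        have f2 : max (r / N - b j) 0 * N - 1 ≤ ((r - ⌈b j * N⌉₊ : ℕ) : ℝ) := by
          have g1 : (⌈b j * N⌉₊ : ℝ) < b j * N + 1 :=
            Nat.ceil_lt_add_one (by have := hb j; positivity)
          have g2 : (r : ℝ) ≤ ((r - ⌈b j * N⌉₊ : ℕ) : ℝ) + ⌈b j * N⌉₊ := by
            have : r ≤ (r - ⌈b j * N⌉₊) + ⌈b j * N⌉₊ := by omega
            exact_mod_cast this
          have g3 : (0 : ℝ) ≤ ((r - ⌈b j * N⌉₊ : ℕ) : ℝ) := by positivity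
          rcases le_total (r / N - b j : ℝ) 0 with h | h
          · rw [max_eq_right h]; linarith
          · rw [max_eq_left h, sub_mul, div_mul_cancel₀ _ hN0.ne']; linarith
        have f3 : (min (a j) (r / N) + max (r / N - b j) 0) * N - 1
          = min (a j) (r / N) * N + (max (r / N - b j) 0 * N - 1) := by ring
        rw [f3]
        exact add_le_add f1 f2
      refine le_trans ?_ e3
      rw [Finset.sum_sub_distrib, ← Finset.sum_mul]
      simp only [Finset.sum_const, Finset.card_univ, Fintype.card_fin, nsmul_eq_mul, mul_one]
      have e4 : s' * (r / N) * N = s' * r := by field_simp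
      nlinarith
    refine le_trans ?_ e1
    have e5 : 2 * d + d * l < (s' - s) * N := by
      rw [div_lt_iff₀ (by linarith)] at hN₂
      have : (N₂ : ℝ) ≤ N := by exact_mod_cast h2
      nlinarith
    have hl0 : (0 : ℝ) ≤ l := by positivity
    nlinarith

/-! ### A Cantor set and its dimension -/

theorem mem_pball_self {p : ℕ} [Fact p.Prime] {d : ℕ} (x : Fin d → ℤ_[p]) (l : ℕ) :
    x ∈ pball (x, l) := fun j => by simp

theorem mem_pball_comm {p : ℕ} [Fact p.Prime] {d : ℕ} {x y : Fin d → ℤ_[p]} {l : ℕ} :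
    x ∈ pball (y, l) ↔ y ∈ pball (x, l) := by
  constructor <;> intro h j <;> rw [dvd_sub_comm] <;> exact h j

theorem mem_pball_trans {p : ℕ} [Fact p.Prime] {d : ℕ} {x y z : Fin d → ℤ_[p]} {l l' : ℕ}
    (hxy : x ∈ pball (y, l)) (hyz : y ∈ pball (z, l')) (hl : l' ≤ l) : x ∈ pball (z, l') := by
  intro j
  have h1 : (p : ℤ_[p]) ^ l' ∣ x j - y j := (pow_dvd_pow _ hl).trans (hxy j)
  have h2 := dvd_add h1 (hyz j)
  rwa [sub_add_sub_cancel] at h2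

theorem mem_pball_iff_dist {p : ℕ} [Fact p.Prime] {d : ℕ} (x y : Fin d → ℤ_[p]) (l : ℕ) :
    x ∈ pball (y, l) ↔ dist x y ≤ (p : ℝ) ^ (-(l : ℝ)) := by
  rw [dist_pi_le_iff (by positivity)]
  refine forall_congr' fun j => ?_
  simp only
  rw [dvd_iff_norm, dist_eq_norm]

theorem isOpen_pball {p : ℕ} [Fact p.Prime] {d : ℕ} (b : (Fin d → ℤ_[p]) × ℕ) :
    IsOpen (pball b) := by
  have hp : (0 : ℝ) < p := by exact_mod_cast (Fact.out : p.Prime).pos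
  have : pball b = Metric.closedBall b.1 ((p : ℝ) ^ (-(b.2 : ℝ))) := by
    ext x
    exact mem_pball_iff_dist x b.1 b.2
  rw [this, closedBall_pi _ (by positivity)]
  refine isOpen_set_pi Set.finite_univ fun j _ => ?_
  exact IsUltrametricDist.isOpen_closedBall _ (Real.rpow_pos_of_pos hp _).ne'

/-- The canonical representative of the ball of level `l` containing `x`: the coordinates are truncated
to integers in `[0, p ^ l)`. -/
noncomputable def cellRep {p : ℕ} [Fact p.Prime] {d : ℕ} (l : ℕ) (x : Fin d → ℤ_[p]) :
    Fin d → ℤ_[p] := fun j => ((x j).appr l : ℤ_[p])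

theorem mem_pball_cellRep {p : ℕ} [Fact p.Prime] {d : ℕ} (l : ℕ) (x : Fin d → ℤ_[p]) :
    x ∈ pball (cellRep l x, l) := fun j => by
  have := PadicInt.appr_spec l (x j)
  rwa [Ideal.mem_span_singleton] at this

theorem cellRep_eq_iff {p : ℕ} [Fact p.Prime] {d : ℕ} {l : ℕ} {x y : Fin d → ℤ_[p]} :
    cellRep l x = cellRep l y ↔ x ∈ pball (y, l) := by
  constructor
  · intro h
    have h1 := mem_pball_cellRep l x
    rw [h] at h1
    exact mem_pball_trans h1 (mem_pball_comm.mp (mem_pball_cellRep l y)) le_rfl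
  · intro h
    have h1 : cellRep l x ∈ pball (cellRep l y, l) :=
      mem_pball_trans (mem_pball_comm.mp (mem_pball_cellRep l x))
        (mem_pball_trans h (mem_pball_cellRep l y) le_rfl) le_rfl
    funext j
    have h2 := h1 j
    simp only [cellRep] at h2
    rw [natCast_pow_dvd_iff, ← Nat.modEq_iff_dvd] at h2
    have h3 := Nat.ModEq.eq_of_lt_of_lt h2 (PadicInt.appr_lt _ _) (PadicInt.appr_lt _ _)
    simp only [cellRep, h3]

theorem CoverCost.mono {p : ℕ} [Fact p.Prime] {d : ℕ} {s : ℝ} {A B : Set (Fin d → ℤ_[p])} {c : ℝ}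
    (h : CoverCost s A c) (hAB : A ⊆ B) : CoverCost s B c :=
  fun F hF => h F (hAB.trans hF)

/-- A set is saturated at level `l` if it is a union of balls of level `l`. -/
def SatAt {p : ℕ} [Fact p.Prime] {d : ℕ} (A : Set (Fin d → ℤ_[p])) (l : ℕ) : Prop :=
  ∀ x ∈ A, pball (x, l) ⊆ A

theorem SatAt.isOpen {p : ℕ} [Fact p.Prime] {d : ℕ} {A : Set (Fin d → ℤ_[p])} {l : ℕ}
    (h : SatAt A l) : IsOpen A := by
  rw [isOpen_iff_mem_nhds]
  intro x hx
  exact Filter.mem_of_superset ((isOpen_pball (x, l)).mem_nhds (mem_pball_self x l)) (h x hx)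

theorem SatAt.isClosed {p : ℕ} [Fact p.Prime] {d : ℕ} {A : Set (Fin d → ℤ_[p])} {l : ℕ}
    (h : SatAt A l) : IsClosed A := by
  rw [← isOpen_compl_iff]
  refine SatAt.isOpen (l := l) fun x hx _ hy hyA => hx (h _ hyA (mem_pball_comm.mp hy))

theorem SatAt.inter {p : ℕ} [Fact p.Prime] {d : ℕ} {A B : Set (Fin d → ℤ_[p])} {l l' : ℕ}
    (hA : SatAt A l) (hB : SatAt B l') : SatAt (A ∩ B) (max l l') := fun x hx y hy =>
  ⟨hA x hx.1 (mem_pball_trans hy (mem_pball_self x l) (le_max_left _ _)),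
   hB x hx.2 (mem_pball_trans hy (mem_pball_self x l') (le_max_right _ _))⟩

/-- Given a cover of `A ∩ U`, consider a ball of level `l` contained in `A` that meets no ball of level
at most `l` of the cover. The balls of the cover inside it cover its intersection with `U`, hence
cost at least as much as the ball itself, which may replace them. The result is a cover of `A` that
is no more expensive. -/
theorem CoverCost.inter {p : ℕ} [Fact p.Prime] {d : ℕ} {s : ℝ} {A U : Set (Fin d → ℤ_[p])} {l : ℕ}
    {c : ℝ} (hA : SatAt A l) (hc : CoverCost s A c)
    (hU : ∀ x, CoverCost s (U ∩ pball (x, l)) ((p : ℝ) ^ (-(s * l)))) :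
    CoverCost s (A ∩ U) c := by
  intro F hF
  have hp : (0 : ℝ) < p := by exact_mod_cast (Fact.out : p.Prime).pos
  set F₁ := F.filter (fun b => b.2 ≤ l) with hF₁
  set F₂ := F.filter (fun b => ¬ b.2 ≤ l) with hF₂
  -- the small balls are grouped by the ball of level `l` containing them; `R` lists the ones to be
  -- replaced
  set ρ : (Fin d → ℤ_[p]) × ℕ → (Fin d → ℤ_[p]) := fun b => cellRep l b.1 with hρ
  set R := (F₂.image ρ).filter
    (fun r => (p : ℝ) ^ (-(s * l)) ≤ ∑ b ∈ F₂.filter (fun b => ρ b = r), (p : ℝ) ^ (-(s * b.2)))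
    with hR
  have hcov : A ⊆ ⋃ b ∈ F₁ ∪ R.image (fun r => (r, l)), pball b := by
    intro x hx
    by_cases h1 : ∃ b ∈ F₁, x ∈ pball b
    · obtain ⟨b, hb, hxb⟩ := h1
      exact Set.mem_biUnion (Finset.mem_union_left _ hb) hxb
    · push Not at h1
      have h2 : U ∩ pball (x, l) ⊆ ⋃ b ∈ F₂.filter (fun b => ρ b = cellRep l x), pball b := by
        intro z hz
        have hzF := hF ⟨hA x hx hz.2, hz.1⟩
        simp only [Set.mem_iUnion] at hzF
        obtain ⟨b, hb, hzb⟩ := hzF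
        have hbl : ¬ b.2 ≤ l := fun hbl => h1 b (Finset.mem_filter.mpr ⟨hb, hbl⟩)
          (mem_pball_trans (mem_pball_comm.mp hz.2) hzb hbl)
        refine Set.mem_biUnion (x := b) (Finset.mem_filter.mpr
          ⟨Finset.mem_filter.mpr ⟨hb, hbl⟩, ?_⟩) hzb
        rw [hρ, cellRep_eq_iff]
        exact mem_pball_trans (mem_pball_comm.mp hzb) hz.2 (not_le.mp hbl).le
      have h3 := hU x _ h2
      have hmem : cellRep l x ∈ R := by
        refine Finset.mem_filter.mpr ⟨?_, h3⟩
        by_contra hne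
        have : F₂.filter (fun b => ρ b = cellRep l x) = ∅ := by
          rw [Finset.filter_eq_empty_iff]
          intro b hb hb'
          exact hne (Finset.mem_image.mpr ⟨b, hb, hb'⟩)
        rw [this, Finset.sum_empty] at h3
        exact absurd h3 (not_le.mpr (Real.rpow_pos_of_pos hp _))
      exact Set.mem_biUnion (Finset.mem_union_right _ (Finset.mem_image_of_mem _ hmem))
        (mem_pball_cellRep l x)
  have h1 := hc _ hcov
  have hnn : ∀ b : (Fin d → ℤ_[p]) × ℕ, 0 ≤ (p : ℝ) ^ (-(s * b.2)) := fun b => by positivity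
  have h2 : ∑ b ∈ F₁ ∪ R.image (fun r => (r, l)), (p : ℝ) ^ (-(s * b.2))
      ≤ ∑ b ∈ F₁, (p : ℝ) ^ (-(s * b.2)) + ∑ r ∈ R, (p : ℝ) ^ (-(s * l)) := by
    have e : ∑ b ∈ R.image (fun r => (r, l)), (p : ℝ) ^ (-(s * b.2))
        = ∑ r ∈ R, (p : ℝ) ^ (-(s * l)) := by
      rw [Finset.sum_image]
      intro r _ r' _ h
      exact (Prod.mk.inj h).1
    have e' := Finset.sum_union_inter (s₁ := F₁) (s₂ := R.image (fun r => (r, l)))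
      (f := fun b : (Fin d → ℤ_[p]) × ℕ => (p : ℝ) ^ (-(s * b.2)))
    rw [← e, ← e']
    exact le_add_of_nonneg_right (Finset.sum_nonneg fun b _ => hnn b)
  have h3 : ∑ r ∈ R, (p : ℝ) ^ (-(s * l)) ≤ ∑ b ∈ F₂, (p : ℝ) ^ (-(s * b.2)) := by
    calc ∑ r ∈ R, (p : ℝ) ^ (-(s * l))
        ≤ ∑ r ∈ R, ∑ b ∈ F₂.filter (fun b => ρ b = r), (p : ℝ) ^ (-(s * b.2)) :=
          Finset.sum_le_sum fun r hr => (Finset.mem_filter.mp hr).2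
      _ ≤ ∑ r ∈ F₂.image ρ, ∑ b ∈ F₂.filter (fun b => ρ b = r), (p : ℝ) ^ (-(s * b.2)) :=
          Finset.sum_le_sum_of_subset_of_nonneg (Finset.filter_subset _ _)
            fun r _ _ => Finset.sum_nonneg fun b _ => hnn b
      _ = _ := Finset.sum_fiberwise_of_maps_to (fun b hb => Finset.mem_image_of_mem _ hb) _
  have h4 := Finset.sum_filter_add_sum_filter_not F (fun b => b.2 ≤ l)
    (fun b => (p : ℝ) ^ (-(s * b.2)))
  linarith

/-- Intersecting the sets `U N` successively, each new `N` large in terms of the level of the previous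
intersection, keeps the covering cost at least `1`. By compactness a finite cover by open balls of
the total intersection covers one of the finite intersections. -/
theorem exists_cantor {p : ℕ} [Fact p.Prime] {d : ℕ} (s : ℝ) (U : ℕ → Set (Fin d → ℤ_[p]))
    (lev : ℕ → ℕ) (hsat : ∀ N, SatAt (U N) (lev N))
    (hU : ∀ l : ℕ, ∃ N₀ : ℕ, ∀ N, N₀ ≤ N → ∀ x,
      CoverCost s (U N ∩ pball (x, l)) ((p : ℝ) ^ (-(s * l)))) :
    ∃ C : Set (Fin d → ℤ_[p]), IsCompact C ∧ CoverCost s C 1 ∧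
      ∀ x ∈ C, ∀ M, ∃ N, M ≤ N ∧ x ∈ U N := by
  choose g hg using hU
  have hp : (0 : ℝ) < p := by exact_mod_cast (Fact.out : p.Prime).pos
  -- the successive intersections, each with a level at which it is saturated
  let st : ℕ → Set (Fin d → ℤ_[p]) × ℕ := fun k => Nat.rec (Set.univ, 0)
    (fun k a => (a.1 ∩ U (g a.2 + k), max a.2 (lev (g a.2 + k)))) k
  have hst : ∀ k, st (k + 1) =
    ((st k).1 ∩ U (g (st k).2 + k), max (st k).2 (lev (g (st k).2 + k))) := fun k => rfl
  have hS : ∀ k, SatAt (st k).1 (st k).2 := by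
    intro k
    induction k with
    | zero => exact fun x _ => Set.subset_univ _
    | succ k ih => rw [hst]; exact ih.inter (hsat _)
  have hC : ∀ k, CoverCost s (st k).1 1 := by
    intro k
    induction k with
    | zero =>
      have h := hg 0 (g 0) le_rfl 0
      simp only [Nat.cast_zero, mul_zero, neg_zero, Real.rpow_zero] at h
      exact h.mono (Set.subset_univ _)
    | succ k ih =>
      rw [hst]
      exact CoverCost.inter (hS k) ih fun x => hg _ _ (Nat.le_add_right _ _) x
  have hanti : Antitone (fun k => (st k).1) := antitone_nat_of_succ_le fun k => by
    rw [hst]; exact Set.inter_subset_left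
  have hcl : ∀ k, IsCompact (st k).1 := fun k => (hS k).isClosed.isCompact
  refine ⟨⋂ k, (st k).1, ?_, ?_, ?_⟩
  · exact (isClosed_iInter fun k => (hS k).isClosed).isCompact
  · intro F hF
    obtain ⟨k, hk⟩ := exists_subset_nhds_of_isCompact (V := fun k => (st k).1)
      (hanti.directed_ge) hcl (U := ⋃ b ∈ F, pball b) fun x hx =>
        (isOpen_biUnion fun b _ => isOpen_pball b).mem_nhds (hF hx)
    exact hC k F hk
  · intro x hx M
    have := Set.mem_iInter.mp hx (M + 1)
    rw [hst] at this
    exact ⟨_, Nat.le_add_left _ _, this.2⟩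

/-- A set of diameter at most `1` lies in a ball whose cost is at most `p ^ s` times the `s`-th power of
the diameter, up to `ε`. The error `ε` is needed for sets of diameter `0`. -/
theorem exists_pball_of_ediam {p : ℕ} [Fact p.Prime] {d : ℕ} (s : ℝ) (hs : 0 < s)
    (t : Set (Fin d → ℤ_[p])) (ht : Metric.ediam t ≤ 1) (ε : ℝ) (hε : 0 < ε) :
    ∃ b : (Fin d → ℤ_[p]) × ℕ, t ⊆ pball b ∧
      ENNReal.ofReal ((p : ℝ) ^ (-(s * b.2))) ≤
        ENNReal.ofReal ((p : ℝ) ^ s) * (⨆ (_ : t.Nonempty), Metric.ediam t ^ s)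
          + ENNReal.ofReal ε := by
  have hp1 : (1 : ℝ) < p := by exact_mod_cast (Fact.out : p.Prime).one_lt
  have hp : (0 : ℝ) < p := by linarith
  obtain ⟨L, hL⟩ : ∃ L : ℕ, (p : ℝ) ^ (-(s * L)) ≤ ε := by
    have hlt : (p : ℝ) ^ (-s) < 1 := Real.rpow_lt_one_of_one_lt_of_neg hp1 (by linarith)
    obtain ⟨L, hL⟩ := exists_pow_lt_of_lt_one hε hlt
    refine ⟨L, ?_⟩
    rw [← neg_mul, Real.rpow_mul hp.le, Real.rpow_natCast]
    exact hL.le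
  rcases t.eq_empty_or_nonempty with rfl | ⟨x, hx⟩
  · exact ⟨(0, L), Set.empty_subset _, (ENNReal.ofReal_le_ofReal hL).trans le_add_self⟩
  have hne : t.Nonempty := ⟨x, hx⟩
  rw [iSup_pos hne]
  have hfin : Metric.ediam t ≠ ⊤ := ne_top_of_le_ne_top ENNReal.one_ne_top ht
  set D := (Metric.ediam t).toReal with hD
  have hDe : Metric.ediam t = ENNReal.ofReal D := (ENNReal.ofReal_toReal hfin).symm
  have hdist : ∀ y ∈ t, dist y x ≤ D := by
    intro y hy
    have := Metric.edist_le_ediam_of_mem hy hx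
    rw [edist_dist, hDe] at this
    exact (ENNReal.ofReal_le_ofReal_iff ENNReal.toReal_nonneg).mp this
  rcases (ENNReal.toReal_nonneg : 0 ≤ D).eq_or_lt with h0 | h0
  · refine ⟨(x, L), fun y hy => ?_, (ENNReal.ofReal_le_ofReal hL).trans le_add_self⟩
    rw [mem_pball_iff_dist]
    exact (hdist y hy).trans (by rw [hD, ← h0]; positivity)
  · have hD1 : D ≤ 1 := by
      have := ENNReal.toReal_mono ENNReal.one_ne_top ht
      simpa using this
    obtain ⟨n, hn1, hn2⟩ := exists_nat_pow_near_of_lt_one h0 hD1 (inv_pos.mpr hp)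
      (inv_lt_one_of_one_lt₀ hp1)
    refine ⟨(x, n), fun y hy => ?_, le_trans ?_ le_self_add⟩
    · rw [mem_pball_iff_dist]
      refine (hdist y hy).trans (hn2.trans (le_of_eq ?_))
      rw [Real.rpow_neg hp.le, Real.rpow_natCast, inv_pow]
    · rw [hDe, ENNReal.ofReal_rpow_of_pos h0, ← ENNReal.ofReal_mul (by positivity)]
      refine ENNReal.ofReal_le_ofReal ?_
      rw [← Real.mul_rpow hp.le h0.le]
      have e : (p : ℝ) ^ (-(s * n)) = ((p : ℝ)⁻¹ ^ n) ^ s := by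
        rw [← Real.rpow_natCast, Real.inv_rpow hp.le, ← Real.rpow_neg hp.le, ← Real.rpow_mul hp.le]
        congr 1; ring
      simp only
      rw [e]
      refine Real.rpow_le_rpow (by positivity) ?_ hs.le
      rw [pow_succ] at hn1
      calc (p : ℝ)⁻¹ ^ n = p * ((p : ℝ)⁻¹ ^ n * (p : ℝ)⁻¹) := by field_simp
        _ ≤ p * D := by gcongr

/-- A compact set whose finite covers by balls all cost at least `1` has positive `s`-dimensional
Hausdorff measure: countable covers by arbitrary sets are enlarged to balls, and compactness leaves
finitely many of them. -/
theorem le_dimH_of_coverCost {p : ℕ} [Fact p.Prime] {d : ℕ} (s : ℝ) (hs : 0 < s)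
    (C : Set (Fin d → ℤ_[p])) (hC : IsCompact C) (hcost : CoverCost s C 1) :
    ENNReal.ofReal s ≤ dimH C := by
  borelize (Fin d → ℤ_[p])
  have hp1 : (1 : ℝ) < p := by exact_mod_cast (Fact.out : p.Prime).one_lt
  have hp : (0 : ℝ) < p := by linarith
  refine le_dimH_of_hausdorffMeasure_ne_zero (d := s.toNNReal) ?_
  rw [Real.coe_toNNReal _ hs.le]
  intro h0
  rw [Measure.hausdorffMeasure_apply] at h0
  have h1 : (⨅ (t : ℕ → Set (Fin d → ℤ_[p])), ⨅ (_ : C ⊆ ⋃ n, t n),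
      ⨅ (_ : ∀ n, Metric.ediam (t n) ≤ 1), ∑' n, ⨆ (_ : (t n).Nonempty), Metric.ediam (t n) ^ s)
      = 0 := by
    have := (ENNReal.iSup_eq_zero.mp h0) 1
    exact (ENNReal.iSup_eq_zero.mp this) one_pos
  -- a cover of Hausdorff cost less than `p ^ (-s) / 4` gives one by balls of cost at most
  -- `1 / 4 + 1 / 2 < 1`
  set ε := ENNReal.ofReal ((p : ℝ) ^ (-s) / 4) with hε
  have hε0 : 0 < ε := ENNReal.ofReal_pos.mpr (by positivity)
  rw [← h1] at hε0
  simp only [iInf_lt_iff] at hε0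
  obtain ⟨t, htC, htd, hsum⟩ := hε0
  have hpos : ∀ n : ℕ, (0 : ℝ) < (1 / 4) * (1 / 2) ^ n := fun n => by positivity
  choose b hb hbc using fun n => exists_pball_of_ediam s hs (t n) (htd n) _ (hpos n)
  obtain ⟨I, hI⟩ := hC.elim_finite_subcover (fun n => pball (b n)) (fun n => isOpen_pball _)
    (htC.trans (Set.iUnion_mono hb))
  have h2 := hcost (I.image b) (by
    intro x hx
    obtain ⟨n, hn, hxn⟩ := Set.mem_iUnion₂.mp (hI hx)
    exact Set.mem_biUnion (Finset.mem_image_of_mem b hn) hxn)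
  have h3 : ∑ x ∈ I.image b, (p : ℝ) ^ (-(s * x.2)) ≤ ∑ n ∈ I, (p : ℝ) ^ (-(s * (b n).2)) :=
    Finset.sum_image_le_of_nonneg (fun x _ => by positivity)
  have h4 : (1 : ℝ≥0∞) ≤ ∑ n ∈ I, ENNReal.ofReal ((p : ℝ) ^ (-(s * (b n).2))) := by
    rw [← ENNReal.ofReal_sum_of_nonneg (fun n _ => by positivity), ← ENNReal.ofReal_one]
    exact ENNReal.ofReal_le_ofReal (h2.trans h3)
  have h5 : ∑ n ∈ I, ENNReal.ofReal ((p : ℝ) ^ (-(s * (b n).2)))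
      ≤ ENNReal.ofReal ((p : ℝ) ^ s) * ε + ENNReal.ofReal (1 / 2) := by
    calc ∑ n ∈ I, ENNReal.ofReal ((p : ℝ) ^ (-(s * (b n).2)))
        ≤ ∑' n, ENNReal.ofReal ((p : ℝ) ^ (-(s * (b n).2))) := ENNReal.sum_le_tsum I
      _ ≤ ∑' n, (ENNReal.ofReal ((p : ℝ) ^ s) *
            (⨆ (_ : (t n).Nonempty), Metric.ediam (t n) ^ s)
          + ENNReal.ofReal ((1 / 4) * (1 / 2) ^ n)) := ENNReal.tsum_le_tsum hbc
      _ = ENNReal.ofReal ((p : ℝ) ^ s) * (∑' n, ⨆ (_ : (t n).Nonempty), Metric.ediam (t n) ^ s)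
          + ENNReal.ofReal (1 / 2) := by
        rw [ENNReal.tsum_add, ENNReal.tsum_mul_left,
          ← ENNReal.ofReal_tsum_of_nonneg (fun n => (hpos n).le)
            (summable_geometric_two.mul_left _), tsum_mul_left, tsum_geometric_two]
        norm_num
      _ ≤ _ := by gcongr
  have h6 : ENNReal.ofReal ((p : ℝ) ^ s) * ε = ENNReal.ofReal (1 / 4) := by
    rw [hε, ← ENNReal.ofReal_mul (by positivity), Real.rpow_neg hp.le]
    congr 1
    have := Real.rpow_pos_of_pos hp s
    field_simp
  rw [h6, ← ENNReal.ofReal_add (by norm_num) (by norm_num)] at h5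
  have h7 := h4.trans h5
  rw [← ENNReal.ofReal_one, ENNReal.ofReal_le_ofReal_iff (by norm_num)] at h7
  norm_num at h7

/-! ### The lower bound for the hyperplane section -/

/-- Being hit depends on `x` only modulo `p ^ k j`. The level `∑ j, k j` is used merely because it exceeds
all `k j`. -/
theorem satAt_hit {p : ℕ} [Fact p.Prime] {d m : ℕ} (α : Fin m → ℤ_[p]) (N : ℕ) (k : Fin d → ℕ)
    (k' : Fin m → ℕ) : SatAt {z | Hit α N k k' z} (∑ j, k j) := by
  rintro x ⟨q₀, h1, h2, h3, q, h4, h5, h6⟩ y hy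
  refine ⟨q₀, h1, h2, h3, q, h4, fun j => ?_, h6⟩
  have h7 : (p : ℤ_[p]) ^ k j ∣ y j - x j :=
    (pow_dvd_pow _ (Finset.single_le_sum (fun _ _ => Nat.zero_le _) (Finset.mem_univ j))).trans
      (hy j)
  have h8 := dvd_add (h5 j) (h7.mul_left (q₀ : ℤ_[p]))
  convert h8 using 1
  ring

theorem norm_natCast_eq_one {p : ℕ} [Fact p.Prime] {q₀ : ℕ} (h : ¬ p ∣ q₀) :
    ‖(q₀ : ℚ_[p])‖ = 1 := by
  rw [Padic.norm_natCast_eq_one_iff]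
  exact ((Fact.out : p.Prime).coprime_iff_not_dvd.mpr h)

theorem norm_sub_div_eq {p : ℕ} [Fact p.Prime] {q₀ : ℕ} (h : ¬ p ∣ q₀) (x : ℤ_[p]) (q : ℤ) :
    ‖(x : ℚ_[p]) - (q : ℚ_[p]) / (q₀ : ℚ_[p])‖ = ‖(q₀ : ℤ_[p]) * x - (q : ℤ_[p])‖ := by
  have h1 := norm_natCast_eq_one h
  have h0 : (q₀ : ℚ_[p]) ≠ 0 := by
    intro h0; rw [h0, norm_zero] at h1; exact zero_ne_one h1
  rw [PadicInt.norm_def]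
  push_cast
  have h2 : (q₀ : ℚ_[p]) * x - q = q₀ * ((x : ℚ_[p]) - q / q₀) := by
    rw [mul_sub, mul_div_cancel₀ _ h0]
  rw [h2, norm_mul, h1, one_mul]

theorem eventually_rpow_lt {ψ : ℕ → ℝ} (hpos : ∀ q, 0 < ψ q) {c b : ℝ}
    (h : Filter.Tendsto (fun q : ℕ => -Real.log (ψ q) / Real.log q) Filter.atTop (nhds c))
    (hb : c < b) : ∀ᶠ q : ℕ in Filter.atTop, (q : ℝ) ^ (-b) < ψ q := by
  filter_upwards [h.eventually_lt_const hb, Filter.eventually_ge_atTop 2] with q h1 h2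
  have hq : (1 : ℝ) < q := by exact_mod_cast h2
  have hl := Real.log_pos hq
  rw [div_lt_iff₀ hl] at h1
  rw [← Real.log_lt_log_iff (Real.rpow_pos_of_pos (by linarith) _) (hpos q),
    Real.log_rpow (by linarith)]
  linarith

theorem eventually_lt_rpow {ψ : ℕ → ℝ} (hpos : ∀ q, 0 < ψ q) {c b : ℝ}
    (h : Filter.Tendsto (fun q : ℕ => -Real.log (ψ q) / Real.log q) Filter.atTop (nhds c))
    (hb : b < c) : ∀ᶠ q : ℕ in Filter.atTop, ψ q < (q : ℝ) ^ (-b) := by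
  filter_upwards [h.eventually_const_lt hb, Filter.eventually_ge_atTop 2] with q h1 h2
  have hq : (1 : ℝ) < q := by exact_mod_cast h2
  have hl := Real.log_pos hq
  rw [lt_div_iff₀ hl] at h1
  rw [← Real.log_lt_log_iff (hpos q) (Real.rpow_pos_of_pos (by linarith) _),
    Real.log_rpow (by linarith)]
  linarith

theorem isometry_append {p : ℕ} [Fact p.Prime] {d m : ℕ} (α : Fin m → ℤ_[p]) :
    Isometry (fun x : Fin d → ℤ_[p] => (Fin.append x α : Fin (d + m) → ℤ_[p])) := by
  refine Isometry.of_dist_eq fun x y => le_antisymm ?_ ?_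
  · refine (dist_pi_le_iff dist_nonneg).mpr fun i => ?_
    refine Fin.addCases (fun j => ?_) (fun j => ?_) i
    · simp only [Fin.append_left]; exact dist_le_pi_dist x y j
    · simp
  · refine (dist_pi_le_iff dist_nonneg).mpr fun j => ?_
    have := dist_le_pi_dist (Fin.append x α : Fin (d + m) → ℤ_[p]) (Fin.append y α) (Fin.castAdd m j)
    simpa only [Fin.append_left] using this

/-- The Cantor set of points hit at infinitely many scales, for exponents strictly above those of `Ψ`,
embeds isometrically into `𝔚_n(Ψ) ∩ Π_α`. -/
theorem lower_bound {p : ℕ} [Fact p.Prime] {d m : ℕ} (hd : 1 ≤ d) (hm : 1 ≤ m)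
    (Ψ : Fin (d + m) → ℕ → ℝ) (hpos : ∀ i q, 0 < Ψ i q) (Ψs : Fin (d + m) → ℝ)
    (hlimΨs : ∀ i, Filter.Tendsto
      (fun q : ℕ => -Real.log (Ψ i q) / Real.log q) Filter.atTop (nhds (Ψs i)))
    (α : Fin m → ℤ_[p]) (hα : dioExp α = (m : ℝ) + 1) (b : Fin d → ℝ) (τ : Fin m → ℝ)
    (hb : ∀ j, 1 < b j) (hτ : ∀ i, 1 < τ i) (hbΨ : ∀ j, Ψs (Fin.castAdd m j) < b j)
    (hτΨ : ∀ i, Ψs (Fin.natAdd d i) < τ i) (hS : ∑ i, τ i < (m : ℝ) + 1)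
    (hsum : (d : ℝ) + m + 1 < ∑ j, b j + ∑ i, τ i) (s s' : ℝ) (hs0 : 0 < s) (hss : s < s')
    (hsd : s' ≤ d)
    (hs' : ∀ i, s' * b i < (d : ℝ) + m + 1 - ∑ i, τ i + ∑ j, max (b i - b j) 0) :
    ENNReal.ofReal s ≤ dimH (WsetF Ψ ∩ Pialpha α) := by
  have hp1 : (1 : ℝ) < p := by exact_mod_cast (Fact.out : p.Prime).one_lt
  have hp : (0 : ℝ) < p := by linarith
  obtain ⟨C, hC, hcost, hhit⟩ := exists_cantor s
    (fun N => {z | Hit α N (fun j : Fin d => ⌈b j * N⌉₊) (fun i => ⌈τ i * N⌉₊) z})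
    (fun N => ∑ j, ⌈b j * N⌉₊) (fun N => satAt_hit _ _ _ _)
    (local_content_eventually hd hm α hα b τ hb hτ hS hsum s s' hs0.le hss hsd hs')
  refine (le_dimH_of_coverCost s hs0 C hC hcost).trans ?_
  rw [← (isometry_append α).dimH_image C]
  refine dimH_mono ?_
  rintro _ ⟨x, hx, rfl⟩
  refine ⟨?_, fun i => by simp⟩
  have hev : ∀ᶠ q : ℕ in Filter.atTop, (∀ j, (q : ℝ) ^ (-(b j)) < Ψ (Fin.castAdd m j) q) ∧
      (∀ i, (q : ℝ) ^ (-(τ i)) < Ψ (Fin.natAdd d i) q) :=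
    (Filter.eventually_all.mpr fun j => eventually_rpow_lt (hpos _) (hlimΨs _) (hbΨ j)).and
      (Filter.eventually_all.mpr fun i => eventually_rpow_lt (hpos _) (hlimΨs _) (hτΨ i))
  obtain ⟨Q₁, hQ₁⟩ := Filter.eventually_atTop.mp hev
  rw [WsetF, Set.mem_iInter]
  intro Q
  obtain ⟨N, hN, q₀, h1, h2, h3, q, h4, h5, h6⟩ := hhit x hx (max 1 (max Q Q₁))
  have hN1 : 1 ≤ N := (le_max_left _ _).trans hN
  have hNQ : Q ≤ N := ((le_max_left _ _).trans (le_max_right _ _)).trans hN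
  have hNQ₁ : Q₁ ≤ N := ((le_max_right _ _).trans (le_max_right _ _)).trans hN
  obtain ⟨e1, e2⟩ := hQ₁ q₀ (hNQ₁.trans h1)
  have hq0 : (0 : ℝ) < q₀ := by exact_mod_cast (hN1.trans h1)
  -- the precision `p ^ (-a N)` of a hit is at least `q₀ ^ (-a)`, because `q₀ ≤ p ^ N`
  have key : ∀ a : ℝ, 1 < a → ∀ y : ℤ_[p], (p : ℤ_[p]) ^ ⌈a * N⌉₊ ∣ y →
      ‖y‖ ≤ (q₀ : ℝ) ^ (-a) := by
    intro a ha y hy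
    rw [dvd_iff_norm] at hy
    refine hy.trans ?_
    have g1 : (p : ℝ) ^ (-((⌈a * N⌉₊ : ℕ) : ℝ)) ≤ (p : ℝ) ^ (-(a * N)) :=
      Real.rpow_le_rpow_of_exponent_le hp1.le (neg_le_neg (Nat.le_ceil _))
    have g2 : (p : ℝ) ^ (-(a * N)) = ((p : ℝ) ^ N) ^ (-a) := by
      rw [← Real.rpow_natCast, ← Real.rpow_mul hp.le]; congr 1; ring
    rw [g2] at g1
    refine g1.trans ?_
    exact Real.rpow_le_rpow_of_nonpos hq0 (by exact_mod_cast h2) (by linarith)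
  simp only [Set.mem_iUnion, AsetF]
  refine ⟨q₀, hNQ.trans h1, q, h4, ?_⟩
  intro i
  refine Fin.addCases (fun j => ?_) (fun j => ?_) i
  · rw [Fin.append_left, norm_sub_div_eq h3]
    exact (key _ (hb j) _ (h5 j)).trans_lt (e1 j)
  · rw [Fin.append_right, norm_sub_div_eq h3]
    exact (key _ (hτ j) _ (h6 j)).trans_lt (e2 j)

/-! ### Covering the hit sets -/

/-- A cover of the hit set by balls of level `r`: one ball for each short vector of the lattice of `α`,
which supplies the denominator, each choice of the `d` remaining numerators, and each of the
`p ^ (r - k j)` subdivisions of coordinate `j` (a truncated subtraction: there is no subdivision when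
`r ≤ k j`). -/
theorem hit_cover {p : ℕ} [Fact p.Prime] {d m : ℕ} (α : Fin m → ℤ_[p]) (N r : ℕ) (k : Fin d → ℕ)
    (k' : Fin m → ℕ) (H : ℝ) (hH : 0 < H)
    (hnsα : ∀ (v₀ : ℤ) (v : Fin m → ℤ),
      (∀ i, (p : ℤ_[p]) ^ k' i ∣ (v₀ : ℤ_[p]) * α i - (v i : ℤ_[p])) →
      (|v₀| : ℝ) ≤ H → (∀ i, (|v i| : ℝ) ≤ H) → v₀ = 0 ∧ v = 0) :
    ∃ B : Finset (Fin d → ℤ_[p]), {x | Hit α N k k' x} ⊆ ⋃ x ∈ B, pball (x, r) ∧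
      (B.card : ℝ) ≤ (2 * ((p : ℝ) ^ N / H) + 2) ^ (m + 1) *
        ∏ j, ((2 * (p : ℝ) ^ N + 1) * (p : ℝ) ^ (r - k j)) := by
  set T : Finset (Fin (m + 1) → ℤ) :=
    (Fintype.piFinset fun _ => Finset.Icc (-((p ^ N : ℕ) : ℤ)) ((p ^ N : ℕ) : ℤ)).filter
      (fun v => ∀ i, (p : ℤ_[p]) ^ k' i ∣ (v 0 : ℤ_[p]) * α i - (v i.succ : ℤ_[p])) with hT
  set Z : Finset (Fin d → ℤ) :=
    Fintype.piFinset fun _ => Finset.Icc (-((p ^ N : ℕ) : ℤ)) ((p ^ N : ℕ) : ℤ) with hZ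
  set E : Finset (Fin d → ℕ) := Fintype.piFinset fun j => Finset.range (p ^ (r - k j)) with hE
  -- the centre attached to a vector `(q₀, …)`, numerators and subdivision; `PadicInt.inv` has a junk
  -- value when `p ∣ q₀`, but only denominators prime to `p` are needed
  set cen : (Fin (m + 1) → ℤ) × (Fin d → ℤ) × (Fin d → ℕ) → (Fin d → ℤ_[p]) := fun t j =>
    PadicInt.inv (t.1 0 : ℤ_[p]) * (t.2.1 j : ℤ_[p]) + (p : ℤ_[p]) ^ k j * (t.2.2 j : ℤ_[p])
    with hcen
  refine ⟨(T ×ˢ (Z ×ˢ E)).image cen, ?_, ?_⟩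
  · rintro x ⟨q₀, -, h2, h3, q, h4, h5, h6⟩
    have hq0 : ‖(q₀ : ℤ_[p])‖ = 1 := by
      rw [PadicInt.norm_def]; push_cast; exact norm_natCast_eq_one h3
    have hinv : (q₀ : ℤ_[p]) * PadicInt.inv (q₀ : ℤ_[p]) = 1 := PadicInt.mul_inv hq0
    have hq : ∀ i, |q i| ≤ ((p ^ N : ℕ) : ℤ) := fun i =>
      (h4 i).1.trans (by exact_mod_cast h2)
    choose y hy using h5
    refine Set.mem_biUnion (x := cen (Fin.cons (q₀ : ℤ) (fun i => q (Fin.natAdd d i)),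
      (fun j => q (Fin.castAdd m j)), fun j => (y j * PadicInt.inv (q₀ : ℤ_[p])).appr (r - k j)))
      ?_ ?_
    · refine Finset.mem_coe.mpr (Finset.mem_image_of_mem _ ?_)
      refine Finset.mem_product.mpr ⟨?_, Finset.mem_product.mpr ⟨?_, ?_⟩⟩
      · refine Finset.mem_filter.mpr ⟨Fintype.mem_piFinset.mpr fun i => ?_, fun i => ?_⟩
        · rw [Finset.mem_Icc, ← abs_le]
          refine Fin.cases ?_ (fun i => ?_) i
          · simp only [Fin.cons_zero, Nat.abs_cast]; exact_mod_cast h2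
          · simp only [Fin.cons_succ]; exact hq _
        · simpa using h6 i
      · exact Fintype.mem_piFinset.mpr fun j => by
          rw [Finset.mem_Icc, ← abs_le]; exact hq _
      · exact Fintype.mem_piFinset.mpr fun j => by
          rw [Finset.mem_range]; exact PadicInt.appr_lt _ _
    · intro j
      have h7 := PadicInt.appr_spec (r - k j) (y j * PadicInt.inv (q₀ : ℤ_[p]))
      rw [Ideal.mem_span_singleton] at h7
      have h8 := mul_dvd_mul_left ((p : ℤ_[p]) ^ k j) h7
      rw [← pow_add] at h8
      refine (pow_dvd_pow _ (by simp only; omega)).trans (h8.trans (dvd_of_eq ?_))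
      simp only [hcen, Fin.cons_zero, Int.cast_natCast]
      have h9 : x j = (q₀ : ℤ_[p]) * PadicInt.inv (q₀ : ℤ_[p]) * x j := by rw [hinv, one_mul]
      have h10 : (q₀ : ℤ_[p]) * x j
        = (p : ℤ_[p]) ^ k j * y j + (q (Fin.castAdd m j) : ℤ_[p]) := by rw [← hy j]; ring
      rw [h9, mul_right_comm, h10]
      ring
  · have h1 : (T.card : ℝ) ≤ (2 * ((p : ℝ) ^ N / H) + 2) ^ (m + 1) := by
      refine card_short_le α _ H (by positivity) hH k' hnsα T fun v hv => ?_
      obtain ⟨hv1, hv2⟩ := Finset.mem_filter.mp hv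
      refine ⟨fun i => ?_, hv2⟩
      have := Fintype.mem_piFinset.mp hv1 i
      rw [Finset.mem_Icc, ← abs_le] at this
      exact_mod_cast this
    have h2 : (Z.card : ℝ) = ∏ j : Fin d, (2 * (p : ℝ) ^ N + 1) := by
      rw [hZ, Fintype.card_piFinset, Nat.cast_prod]
      refine Finset.prod_congr rfl fun j _ => ?_
      rw [Int.card_Icc]
      have : (((p ^ N : ℕ) : ℤ) + 1 - -((p ^ N : ℕ) : ℤ)).toNat = 2 * p ^ N + 1 := by omega
      rw [this]; push_cast; rfl
    have h3 : (E.card : ℝ) = ∏ j, (p : ℝ) ^ (r - k j) := by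
      rw [hE, Fintype.card_piFinset]
      push_cast
      simp
    have h4 : (((T ×ˢ (Z ×ˢ E)).image cen).card : ℝ) ≤ T.card * (Z.card * E.card) := by
      have := Finset.card_image_le (s := T ×ˢ (Z ×ˢ E)) (f := cen)
      rw [Finset.card_product, Finset.card_product] at this
      exact_mod_cast this
    refine h4.trans ?_
    rw [h2, h3, ← Finset.prod_mul_distrib]
    gcongr

/-- Hausdorff–Cantelli lemma: if the covers of `U N` by balls of level `⌈ρ * N⌉` have exponentially
small total cost, then the limsup set has dimension at most `s`. -/
theorem dimH_limsup_le {p : ℕ} [Fact p.Prime] {d : ℕ} (s : ℝ) (hs : 0 ≤ s) (ρ : ℝ) (hρ : 0 < ρ)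
    (U : ℕ → Set (Fin d → ℤ_[p])) (B : ℕ → Finset (Fin d → ℤ_[p])) (N₀ : ℕ)
    (hB : ∀ N, N₀ ≤ N → U N ⊆ ⋃ x ∈ B N, pball (x, ⌈ρ * N⌉₊))
    (A δ : ℝ) (hA : 0 ≤ A) (hδ : 0 < δ)
    (hc : ∀ N, N₀ ≤ N → ((B N).card : ℝ) * (p : ℝ) ^ (-(s * ⌈ρ * N⌉₊)) ≤ A * (p : ℝ) ^ (-(δ * N))) :
    dimH {x | ∀ M, ∃ N, M ≤ N ∧ x ∈ U N} ≤ ENNReal.ofReal s := by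
  borelize (Fin d → ℤ_[p])
  have hp1 : (1 : ℝ) < p := by exact_mod_cast (Fact.out : p.Prime).one_lt
  have hp : (0 : ℝ) < p := by linarith
  refine dimH_le_of_hausdorffMeasure_ne_top (d := s.toNNReal) ?_
  rw [Real.coe_toNNReal _ hs]
  have hdiam : ∀ (x : Fin d → ℤ_[p]) (l : ℕ),
      Metric.ediam (pball (x, l)) ≤ ENNReal.ofReal ((p : ℝ) ^ (-(l : ℝ))) := by
    intro x l
    refine Metric.ediam_le fun y hy z hz => ?_
    rw [edist_dist]
    refine ENNReal.ofReal_le_ofReal ((mem_pball_iff_dist y z l).mp ?_)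
    exact mem_pball_trans hy (mem_pball_comm.mp hz) le_rfl
  set θ : ℝ := (p : ℝ) ^ (-δ) with hθ
  have hθ0 : 0 ≤ θ := by positivity
  have hθ1 : θ < 1 := Real.rpow_lt_one_of_one_lt_of_neg hp1 (by linarith)
  have hθN : ∀ N : ℕ, (p : ℝ) ^ (-(δ * N)) = θ ^ N := fun N => by
    rw [hθ, ← Real.rpow_natCast, ← Real.rpow_mul hp.le]; congr 1; ring
  -- all balls at scales beyond `n + N₀`
  have key := Measure.hausdorffMeasure_le_liminf_tsum (β := ℕ)
    (ι := fun n => Σ N : ℕ, {x // x ∈ B (N + (n + N₀))}) s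
    {x | ∀ M, ∃ N, M ≤ N ∧ x ∈ U N} (l := Filter.atTop)
    (fun n => ENNReal.ofReal ((p : ℝ) ^ (-(ρ * n)))) (by
      rw [← ENNReal.ofReal_zero]
      refine ENNReal.tendsto_ofReal ?_
      have e : (fun n : ℕ => (p : ℝ) ^ (-(ρ * n))) = fun n => ((p : ℝ) ^ (-ρ)) ^ n := by
        funext n
        rw [← Real.rpow_natCast, ← Real.rpow_mul hp.le]; congr 1; ring
      rw [e]
      exact tendsto_pow_atTop_nhds_zero_of_lt_one (by positivity)
        (Real.rpow_lt_one_of_one_lt_of_neg hp1 (by linarith)))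
    (fun n i => pball (i.2.1, ⌈ρ * ((i.1 + (n + N₀) : ℕ) : ℝ)⌉₊))
    (Filter.Eventually.of_forall fun n i => (hdiam _ _).trans (ENNReal.ofReal_le_ofReal (by
      refine Real.rpow_le_rpow_of_exponent_le hp1.le (neg_le_neg (le_trans ?_ (Nat.le_ceil _)))
      push_cast
      have : (0 : ℝ) ≤ i.1 + N₀ := by positivity
      nlinarith)))
    (Filter.Eventually.of_forall fun n x hx => by
      obtain ⟨N, hN, hxN⟩ := hx (n + N₀)
      obtain ⟨K, rfl⟩ := Nat.exists_eq_add_of_le' hN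
      obtain ⟨z, hz, hxz⟩ := Set.mem_iUnion₂.mp (hB _ (by omega) hxN)
      exact Set.mem_iUnion.mpr ⟨⟨K, ⟨z, hz⟩⟩, hxz⟩)
  refine ne_top_of_le_ne_top ?_ key
  refine ne_top_of_le_ne_top (b := ENNReal.ofReal (A * (1 - θ)⁻¹)) ENNReal.ofReal_ne_top ?_
  refine Filter.liminf_le_of_frequently_le' (Filter.Frequently.of_forall fun n => ?_)
  rw [ENNReal.tsum_sigma']
  calc _ ≤ ∑' N : ℕ, ENNReal.ofReal (A * θ ^ N) := by
        refine ENNReal.tsum_le_tsum fun N => ?_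
        rw [tsum_fintype]
        calc _ ≤ ∑ _x : {x // x ∈ B (N + (n + N₀))},
              ENNReal.ofReal ((p : ℝ) ^ (-(s * ⌈ρ * ((N + (n + N₀) : ℕ) : ℝ)⌉₊))) := by
              refine Finset.sum_le_sum fun x _ => ?_
              refine (ENNReal.rpow_le_rpow (hdiam _ _) hs).trans (le_of_eq ?_)
              rw [ENNReal.ofReal_rpow_of_pos (Real.rpow_pos_of_pos hp _), ← Real.rpow_mul hp.le]
              congr 2; ring
          _ ≤ _ := by
              rw [Finset.sum_const, Finset.card_univ, Fintype.card_coe, nsmul_eq_mul,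
                ← ENNReal.ofReal_natCast, ← ENNReal.ofReal_mul (by positivity)]
              refine ENNReal.ofReal_le_ofReal ((hc _ (by omega)).trans ?_)
              rw [hθN]
              exact mul_le_mul_of_nonneg_left
                (pow_le_pow_of_le_one hθ0 hθ1.le (Nat.le_add_right _ _)) hA
    _ = ENNReal.ofReal (A * (1 - θ)⁻¹) := by
        rw [← ENNReal.ofReal_tsum_of_nonneg (fun n => by positivity)
          ((summable_geometric_of_lt_one hθ0 hθ1).mul_left _), tsum_mul_left,
          tsum_geometric_of_lt_one hθ0 hθ1]
    _ ≤ _ := le_rfl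

/-! ### The upper bound for the hyperplane section -/

/-- `hit_cover` at the level `⌈ρ * N⌉`, summed over `N`. Hits at scale `N + 1` with precision given by
`N` occur because a denominator is only known to lie between two consecutive powers of `p`. -/
theorem upper_bound_core {p : ℕ} [Fact p.Prime] {d m : ℕ} (hm : 1 ≤ m)
    (α : Fin m → ℤ_[p]) (hα : dioExp α = (m : ℝ) + 1) (b : Fin d → ℝ) (τ : Fin m → ℝ)
    (hτ : ∀ i, 1 < τ i) (hS : ∑ i, τ i ≤ (m : ℝ) + 1)
    (η : ℝ) (hη : 0 < η) (ρ : ℝ) (hρ : 0 < ρ) (s : ℝ) (hs : 0 ≤ s)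
    (hneg : (m : ℝ) + 1 - ∑ i, τ i + η + d + ∑ j, max (ρ - b j) 0 < s * ρ) :
    dimH {x : Fin d → ℤ_[p] | ∀ M, ∃ N, M ≤ N ∧
      Hit α (N + 1) (fun j => ⌈b j * N⌉₊) (fun i => ⌈τ i * N⌉₊) x} ≤ ENNReal.ofReal s := by
  have hp1 : (1 : ℝ) < p := by exact_mod_cast (Fact.out : p.Prime).one_lt
  have hp : (0 : ℝ) < p := by linarith
  obtain ⟨N₀, hN₀⟩ := no_short hm α hα τ hτ hS η hη
  set S := ∑ i, τ i with hSd
  set κ := S / (m + 1 + η) with hκ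
  have hm1 : (0 : ℝ) < m + 1 + η := by positivity
  have hκ1 : κ ≤ 1 := by rw [hκ, div_le_one hm1]; linarith
  have hκm : (1 - κ) * (m + 1) ≤ m + 1 - S + η := by
    have e : κ * (m + 1 + η) = S := div_mul_cancel₀ _ hm1.ne'
    nlinarith
  choose B hB1 hB2 using fun N : ℕ => fun hN : N₀ ≤ N =>
    hit_cover α (N + 1) ⌈ρ * N⌉₊ (fun j => ⌈b j * N⌉₊) (fun i => ⌈τ i * N⌉₊)
      ((p : ℝ) ^ ((N : ℝ) * κ)) (Real.rpow_pos_of_pos hp _)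
      (hN₀ N hN _ (fun i => Nat.le_ceil _))
  have h := dimH_limsup_le s hs ρ hρ
    (fun N => {x | Hit α (N + 1) (fun j => ⌈b j * N⌉₊) (fun i => ⌈τ i * N⌉₊) x})
    (fun N => if hN : N₀ ≤ N then B N hN else ∅) N₀
    (fun N hN => by simp only [hN, dif_pos]; exact hB1 N hN)
    ((2 * (p : ℝ) + 2) ^ (m + 1) * ((2 * (p : ℝ) + 1) * p) ^ d)
    (s * ρ - ((m : ℝ) + 1 - S + η + d + ∑ j, max (ρ - b j) 0)) (by positivity) (by linarith) ?_
  · exact h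
  · intro N hN
    simp only [hN, dif_pos]
    have hpN : (1 : ℝ) ≤ (p : ℝ) ^ N := one_le_pow₀ hp1.le
    have a1 : 2 * ((p : ℝ) ^ (N + 1) / (p : ℝ) ^ ((N : ℝ) * κ)) + 2
        ≤ (2 * p + 2) * (p : ℝ) ^ ((N : ℝ) * (1 - κ)) := by
      have e : (p : ℝ) ^ (N + 1) / (p : ℝ) ^ ((N : ℝ) * κ) = p * (p : ℝ) ^ ((N : ℝ) * (1 - κ)) := by
        rw [pow_succ, mul_sub, mul_one, Real.rpow_sub hp, Real.rpow_natCast]; ring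
      have g : (1 : ℝ) ≤ (p : ℝ) ^ ((N : ℝ) * (1 - κ)) :=
        Real.one_le_rpow hp1.le (mul_nonneg (Nat.cast_nonneg _) (by linarith))
      rw [e]; nlinarith
    have a2 : (2 * ((p : ℝ) ^ (N + 1) / (p : ℝ) ^ ((N : ℝ) * κ)) + 2) ^ (m + 1)
        ≤ (2 * (p : ℝ) + 2) ^ (m + 1) * (p : ℝ) ^ ((N : ℝ) * (m + 1 - S + η)) := by
      refine (pow_le_pow_left₀ (by positivity) a1 _).trans ?_
      rw [mul_pow]
      refine mul_le_mul_of_nonneg_left ?_ (by positivity)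
      rw [← Real.rpow_natCast, ← Real.rpow_mul hp.le]
      refine Real.rpow_le_rpow_of_exponent_le hp1.le ?_
      push_cast
      rw [mul_assoc]
      exact mul_le_mul_of_nonneg_left hκm (Nat.cast_nonneg _)
    have a3 : ∀ j : Fin d, (2 * (p : ℝ) ^ (N + 1) + 1) * (p : ℝ) ^ (⌈ρ * N⌉₊ - ⌈b j * N⌉₊)
        ≤ ((2 * (p : ℝ) + 1) * p) * (p : ℝ) ^ ((N : ℝ) * (1 + max (ρ - b j) 0)) := by
      intro j
      have c1 : 2 * (p : ℝ) ^ (N + 1) + 1 ≤ (2 * p + 1) * (p : ℝ) ^ N := by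
        rw [pow_succ]; nlinarith
      have c2 : (p : ℝ) ^ (⌈ρ * N⌉₊ - ⌈b j * N⌉₊) ≤ p * (p : ℝ) ^ ((N : ℝ) * max (ρ - b j) 0) := by
        have e : (p : ℝ) * (p : ℝ) ^ ((N : ℝ) * max (ρ - b j) 0)
            = (p : ℝ) ^ ((N : ℝ) * max (ρ - b j) 0 + 1) := by
          rw [Real.rpow_add hp, Real.rpow_one, mul_comm]
        rw [e, ← Real.rpow_natCast]
        refine Real.rpow_le_rpow_of_exponent_le hp1.le ?_
        have hN0 : (0 : ℝ) ≤ N := Nat.cast_nonneg _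
        rcases le_total ⌈ρ * N⌉₊ ⌈b j * N⌉₊ with hle | hle
        · rw [Nat.sub_eq_zero_of_le hle]; push_cast
          have : 0 ≤ (N : ℝ) * max (ρ - b j) 0 := mul_nonneg hN0 (le_max_right _ _)
          linarith
        · rw [Nat.cast_sub hle]
          have f1 : (⌈ρ * N⌉₊ : ℝ) < ρ * N + 1 := Nat.ceil_lt_add_one (by positivity)
          have f2 := Nat.le_ceil (b j * N)
          have f3 : (N : ℝ) * (ρ - b j) ≤ N * max (ρ - b j) 0 :=
            mul_le_mul_of_nonneg_left (le_max_left _ _) hN0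
          linarith
      calc _ ≤ ((2 * p + 1) * (p : ℝ) ^ N) * (p * (p : ℝ) ^ ((N : ℝ) * max (ρ - b j) 0)) :=
            mul_le_mul c1 c2 (by positivity) (by positivity)
        _ = _ := by
            rw [mul_add, mul_one, Real.rpow_add hp, Real.rpow_natCast]; ring
    have a4 : ∏ j : Fin d, ((2 * (p : ℝ) ^ (N + 1) + 1) * (p : ℝ) ^ (⌈ρ * N⌉₊ - ⌈b j * N⌉₊))
        ≤ ((2 * (p : ℝ) + 1) * p) ^ d * (p : ℝ) ^ ((N : ℝ) * (d + ∑ j, max (ρ - b j) 0)) := by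
      refine (Finset.prod_le_prod (fun j _ => by positivity) fun j _ => a3 j).trans (le_of_eq ?_)
      rw [Finset.prod_mul_distrib, ← Real.rpow_sum_of_pos hp, ← Finset.mul_sum,
        Finset.sum_add_distrib]
      simp
    have a5 : (p : ℝ) ^ (-(s * ⌈ρ * N⌉₊)) ≤ (p : ℝ) ^ (-(s * (ρ * N))) :=
      Real.rpow_le_rpow_of_exponent_le hp1.le
        (neg_le_neg (mul_le_mul_of_nonneg_left (Nat.le_ceil _) hs))
    have a6 := (hB2 N hN).trans (mul_le_mul a2 a4 (by positivity) (by positivity))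
    refine (mul_le_mul a6 a5 (by positivity) (by positivity)).trans (le_of_eq ?_)
    have e : (p : ℝ) ^ (-((s * ρ - ((m : ℝ) + 1 - S + η + d + ∑ j, max (ρ - b j) 0)) * N))
        = (p : ℝ) ^ ((N : ℝ) * (m + 1 - S + η)) *
          (p : ℝ) ^ ((N : ℝ) * (d + ∑ j, max (ρ - b j) 0)) * (p : ℝ) ^ (-(s * (ρ * N))) := by
      rw [← Real.rpow_add hp, ← Real.rpow_add hp]
      congr 1; ring
    rw [e]; ring

/-- A reduced fraction within distance `1` of a `p`-adic integer is itself a `p`-adic integer. -/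
theorem not_dvd_of_norm_lt {p : ℕ} [Fact p.Prime] {q₀ : ℕ} (hq₀ : q₀ ≠ 0) {q : ℤ}
    (hg : Int.gcd q q₀ = 1) (x : ℤ_[p])
    (h : ‖(x : ℚ_[p]) - (q : ℚ_[p]) / (q₀ : ℚ_[p])‖ ≤ 1) : ¬ p ∣ q₀ := by
  intro hdvd
  have h1 : ‖(q : ℚ_[p]) / (q₀ : ℚ_[p])‖ ≤ 1 := by
    have : (q : ℚ_[p]) / (q₀ : ℚ_[p]) = x + -(x - q / q₀) := by ring
    rw [this]
    refine (Padic.nonarchimedean _ _).trans (max_le (PadicInt.norm_le_one x) ?_)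
    rwa [norm_neg]
  have h0 : (q₀ : ℚ_[p]) ≠ 0 := by exact_mod_cast hq₀
  rw [norm_div, div_le_one (norm_pos_iff.mpr h0)] at h1
  have h2 : ‖(q₀ : ℚ_[p])‖ < 1 := by
    rw [Padic.norm_natCast_lt_one_iff]; exact hdvd
  have h3 : ‖(q : ℚ_[p])‖ < 1 := h1.trans_lt h2
  rw [Padic.norm_intCast_lt_one_iff] at h3
  have h4 : (p : ℤ) ∣ (Int.gcd q q₀ : ℤ) := Int.dvd_coe_gcd h3 (by exact_mod_cast hdvd)
  rw [hg] at h4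
  have := (Fact.out : p.Prime).one_lt
  have h5 := Int.le_of_dvd one_pos h4
  omega

/-- Each approximation with denominator `q₀`, where `p ^ N ≤ q₀ < p ^ (N + 1)`, is a hit at scale
`N + 1` for any exponents strictly below those of `Ψ`. -/
theorem W_subset {p : ℕ} [Fact p.Prime] {d m : ℕ} (hd : 1 ≤ d)
    (Ψ : Fin (d + m) → ℕ → ℝ) (hpos : ∀ i q, 0 < Ψ i q)
    (hlim : ∀ i, Filter.Tendsto (Ψ i) Filter.atTop (nhds 0)) (Ψs : Fin (d + m) → ℝ)
    (hlimΨs : ∀ i, Filter.Tendsto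
      (fun q : ℕ => -Real.log (Ψ i q) / Real.log q) Filter.atTop (nhds (Ψs i)))
    (α : Fin m → ℤ_[p]) (b : Fin d → ℝ) (τ : Fin m → ℝ)
    (hb : ∀ j, 0 < b j) (hτ : ∀ i, 0 < τ i) (hbΨ : ∀ j, b j < Ψs (Fin.castAdd m j))
    (hτΨ : ∀ i, τ i < Ψs (Fin.natAdd d i)) :
    WsetF Ψ ∩ Pialpha α ⊆ (fun x : Fin d → ℤ_[p] => (Fin.append x α : Fin (d + m) → ℤ_[p])) ''
      {x | ∀ M, ∃ N, M ≤ N ∧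
        Hit α (N + 1) (fun j => ⌈b j * N⌉₊) (fun i => ⌈τ i * N⌉₊) x} := by
  have hpp := (Fact.out : p.Prime)
  have hp1 : (1 : ℝ) < p := by exact_mod_cast hpp.one_lt
  have hp : (0 : ℝ) < p := by linarith
  rintro z ⟨hzW, hzα⟩
  refine ⟨fun j => z (Fin.castAdd m j), ?_, ?_⟩
  swap
  · funext i
    refine Fin.addCases (fun j => ?_) (fun j => ?_) i
    · simp
    · simp only [Fin.append_right]; exact (hzα j).symm
  -- the gap between `β` and the order `c` of `ψ` absorbs the rounding of `β * N`
  have haux : ∀ β c : ℝ, 0 < β → β < c → ∀ ψ : ℕ → ℝ, (∀ q, 0 < ψ q) →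
      Filter.Tendsto (fun q : ℕ => -Real.log (ψ q) / Real.log q) Filter.atTop (nhds c) →
      ∃ N₁ : ℕ, ∀ N, N₁ ≤ N → ∀ q₀ : ℕ, p ^ N ≤ q₀ →
        ψ q₀ ≤ (p : ℝ) ^ (-((⌈β * N⌉₊ : ℕ) : ℝ)) := by
    intro β c hβ hβc ψ hψ hc
    obtain ⟨a, ha1, ha2⟩ := exists_between hβc
    obtain ⟨Q, hQ⟩ := Filter.eventually_atTop.mp (eventually_lt_rpow hψ hc ha2)
    obtain ⟨L, hL⟩ := exists_nat_ge (1 / (a - β))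
    refine ⟨max Q L, fun N hN q₀ hq₀ => ?_⟩
    have hNq : N ≤ q₀ := (Nat.lt_pow_self hpp.one_lt).le.trans hq₀
    refine (hQ q₀ ((le_max_left _ _).trans (hN.trans hNq))).le.trans ?_
    have g1 : (q₀ : ℝ) ^ (-a) ≤ ((p : ℝ) ^ N) ^ (-a) :=
      Real.rpow_le_rpow_of_nonpos (by positivity) (by exact_mod_cast hq₀) (by linarith)
    refine g1.trans ?_
    rw [← Real.rpow_natCast, ← Real.rpow_mul hp.le]
    refine Real.rpow_le_rpow_of_exponent_le hp1.le ?_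
    have g2 : (⌈β * N⌉₊ : ℝ) < β * N + 1 := Nat.ceil_lt_add_one (by positivity)
    have g3 : 1 / (a - β) ≤ (N : ℝ) :=
      hL.trans (by exact_mod_cast (le_max_right _ _).trans hN)
    rw [div_le_iff₀ (by linarith)] at g3
    nlinarith
  choose A hA using fun j => haux _ _ (hb j) (hbΨ j) _ (hpos _) (hlimΨs (Fin.castAdd m j))
  choose A' hA' using fun i => haux _ _ (hτ i) (hτΨ i) _ (hpos _) (hlimΨs (Fin.natAdd d i))
  obtain ⟨Q₁, hQ₁⟩ := Filter.eventually_atTop.mp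
    ((hlim (Fin.castAdd m ⟨0, hd⟩)).eventually_lt_const one_pos)
  intro M
  set M' := max M (max (∑ j, A j) (∑ i, A' i)) with hM'
  obtain ⟨q₀, hq₀, hzA⟩ := Set.mem_iUnion₂.mp (Set.mem_iInter.mp hzW (max (p ^ M') (max Q₁ 1)))
  have hq1 : p ^ M' ≤ q₀ := (le_max_left _ _).trans hq₀
  have hq2 : Q₁ ≤ q₀ := ((le_max_left _ _).trans (le_max_right _ _)).trans hq₀
  have hq3 : 1 ≤ q₀ := ((le_max_right _ _).trans (le_max_right _ _)).trans hq₀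
  obtain ⟨q, hq, hzq⟩ := Set.mem_iUnion₂.mp hzA
  have hndvd : ¬ p ∣ q₀ := not_dvd_of_norm_lt (by omega) (hq (Fin.castAdd m ⟨0, hd⟩)).2 _
    ((hzq (Fin.castAdd m ⟨0, hd⟩)).trans (hQ₁ q₀ hq2)).le
  set N := Nat.log p q₀ with hN
  have hN1 : p ^ N ≤ q₀ := Nat.pow_log_le_self p (by omega)
  have hN2 : q₀ < p ^ (N + 1) := Nat.lt_pow_succ_log_self hpp.one_lt q₀
  have hMN : M' ≤ N := by
    rw [hN]; exact (Nat.le_log_iff_pow_le hpp.one_lt (by omega)).mpr hq1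
  refine ⟨N, (le_max_left _ _).trans hMN, q₀, ?_, hN2.le, hndvd, q, hq, fun j => ?_, fun i => ?_⟩
  · exact (Nat.lt_pow_self hpp.one_lt).trans_le hN1
  · rw [dvd_iff_norm, ← norm_sub_div_eq hndvd]
    refine (hzq _).le.trans (hA j N ?_ q₀ hN1)
    exact ((Finset.single_le_sum (fun _ _ => Nat.zero_le _) (Finset.mem_univ j)).trans
      ((le_max_left _ _).trans (le_max_right _ _))).trans hMN
  · rw [dvd_iff_norm, ← norm_sub_div_eq hndvd, ← hzα i]
    refine (hzq _).le.trans (hA' i N ?_ q₀ hN1)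
    exact ((Finset.single_le_sum (fun _ _ => Nat.zero_le _) (Finset.mem_univ i)).trans
      ((le_max_right _ _).trans (le_max_right _ _))).trans hMN

/-! ### Passing to the limit in the exponents -/

theorem sum_filter_sub_eq {d : ℕ} (a : Fin d → ℝ) (i : Fin d) :
    ∑ j ∈ Finset.univ.filter (fun j => a j ≤ a i), (a i - a j) = ∑ j, max (a i - a j) 0 := by
  rw [Finset.sum_filter]
  refine Finset.sum_congr rfl fun j _ => ?_
  split_ifs with h
  · rw [max_eq_left (by linarith)]
  · rw [max_eq_right (by linarith)]

theorem eventually_lt_nhdsGT {c : ℝ} (hc : 0 < c) : ∀ᶠ ε in nhdsWithin (0 : ℝ) (Set.Ioi 0), ε < c :=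
  nhdsWithin_le_nhds (Iio_mem_nhds hc)

theorem eventually_mul_lt_nhdsGT {c : ℝ} (hc : 0 < c) (k : ℝ) :
    ∀ᶠ ε in nhdsWithin (0 : ℝ) (Set.Ioi 0), ε * k < c := by
  have : Filter.Tendsto (fun ε : ℝ => ε * k) (nhds 0) (nhds 0) := by
    simpa using (Filter.tendsto_id (α := ℝ) (x := nhds 0)).mul_const k
  exact nhdsWithin_le_nhds (this.eventually_lt_const hc)

/-- The dimension is at most the `i`-th quotient: `upper_bound_core` with all exponents lowered by a
small `ε` and with covers at the scale of `ψ_i`. -/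
theorem upper_bound {p : ℕ} [Fact p.Prime] {d m : ℕ} (hd : 1 ≤ d) (hm : 1 ≤ m)
    (Ψ : Fin (d + m) → ℕ → ℝ) (hpos : ∀ i q, 0 < Ψ i q)
    (hlim : ∀ i, Filter.Tendsto (Ψ i) Filter.atTop (nhds 0)) (Ψs : Fin (d + m) → ℝ)
    (hlimΨs : ∀ i, Filter.Tendsto
      (fun q : ℕ => -Real.log (Ψ i q) / Real.log q) Filter.atTop (nhds (Ψs i)))
    (h₁ : ∑ i : Fin m, Ψs (Fin.natAdd d i) < (m : ℝ) + 1) (h₃ : ∀ i, 1 < Ψs i)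
    (α : Fin m → ℤ_[p]) (hα : dioExp α = (m : ℝ) + 1) (i : Fin d) (s : ℝ) (hs : 0 ≤ s)
    (hi : (d : ℝ) + m + 1 - ∑ i' : Fin m, Ψs (Fin.natAdd d i') +
      ∑ j, max (Ψs (Fin.castAdd m i) - Ψs (Fin.castAdd m j)) 0 < s * Ψs (Fin.castAdd m i)) :
    dimH (WsetF Ψ ∩ Pialpha α) ≤ ENNReal.ofReal s := by
  obtain ⟨ε, hε1, hε2, hε3, hε0⟩ :=
    (((Filter.eventually_all.mpr fun j : Fin (d + m) =>
      eventually_lt_nhdsGT (sub_pos.mpr (h₃ j))).and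
      ((eventually_mul_lt_nhdsGT (sub_pos.mpr hi) (m + 1 + d)).and
      ((eventually_lt_nhdsGT one_pos).and eventually_mem_nhdsWithin)))).exists
  have hε0 : 0 < ε := hε0
  have hsub := W_subset hd Ψ hpos hlim Ψs hlimΨs α (fun j => Ψs (Fin.castAdd m j) - ε)
    (fun i => Ψs (Fin.natAdd d i) - ε) (fun j => by linarith [hε1 (Fin.castAdd m j)])
    (fun j => by linarith [hε1 (Fin.natAdd d j)]) (fun j => by linarith) (fun j => by linarith)
  have hsum : ∑ i : Fin m, (Ψs (Fin.natAdd d i) - ε) = ∑ i, Ψs (Fin.natAdd d i) - m * ε := by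
    rw [Finset.sum_sub_distrib]; simp
  have hm0 : (0 : ℝ) ≤ m * ε := by positivity
  refine (dimH_mono hsub).trans ?_
  rw [(isometry_append α).dimH_image]
  refine upper_bound_core hm α hα _ _ (fun j => by linarith [hε1 (Fin.natAdd d j)])
    (by rw [hsum]; linarith) ε hε0 (Ψs (Fin.castAdd m i)) (by linarith [h₃ (Fin.castAdd m i)])
    s hs ?_
  rw [hsum]
  have hmax : ∑ j : Fin d, max (Ψs (Fin.castAdd m i) - (Ψs (Fin.castAdd m j) - ε)) 0
      ≤ ∑ j, max (Ψs (Fin.castAdd m i) - Ψs (Fin.castAdd m j)) 0 + d * ε := by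
    have : ∑ j : Fin d, max (Ψs (Fin.castAdd m i) - (Ψs (Fin.castAdd m j) - ε)) 0
        ≤ ∑ j : Fin d, (max (Ψs (Fin.castAdd m i) - Ψs (Fin.castAdd m j)) 0 + ε) := by
      refine Finset.sum_le_sum fun j _ => max_le ?_ ?_
      · linarith [le_max_left (Ψs (Fin.castAdd m i) - Ψs (Fin.castAdd m j)) 0]
      · linarith [le_max_right (Ψs (Fin.castAdd m i) - Ψs (Fin.castAdd m j)) 0]
    rw [Finset.sum_add_distrib] at this
    simpa using this
  linarith

/-- `lower_bound` with all exponents raised by a small `ε`. -/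
theorem lower_bound_perturbed {p : ℕ} [Fact p.Prime] {d m : ℕ} (hd : 1 ≤ d) (hm : 1 ≤ m)
    (Ψ : Fin (d + m) → ℕ → ℝ) (hpos : ∀ i q, 0 < Ψ i q) (Ψs : Fin (d + m) → ℝ)
    (hlimΨs : ∀ i, Filter.Tendsto
      (fun q : ℕ => -Real.log (Ψ i q) / Real.log q) Filter.atTop (nhds (Ψs i)))
    (h₁ : ∑ i : Fin m, Ψs (Fin.natAdd d i) < (m : ℝ) + 1)
    (h₂ : ((d : ℝ) + m) + 1 < ∑ i, Ψs i) (h₃ : ∀ i, 1 < Ψs i)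
    (α : Fin m → ℤ_[p]) (hα : dioExp α = (m : ℝ) + 1) (s s' : ℝ) (hs : 0 < s) (hss : s < s')
    (hs' : ∀ i : Fin d, s' * Ψs (Fin.castAdd m i) <
      (d : ℝ) + m + 1 - ∑ i' : Fin m, Ψs (Fin.natAdd d i') +
      ∑ j, max (Ψs (Fin.castAdd m i) - Ψs (Fin.castAdd m j)) 0) :
    ENNReal.ofReal s ≤ dimH (WsetF Ψ ∩ Pialpha α) := by
  rw [Fin.sum_univ_add] at h₂
  obtain ⟨ε, hε1, hε2, hε0⟩ :=
    ((Filter.eventually_all.mpr fun i : Fin d =>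
      eventually_mul_lt_nhdsGT (sub_pos.mpr (hs' i)) (s' + m)).and
      ((eventually_mul_lt_nhdsGT (sub_pos.mpr h₁) m).and eventually_mem_nhdsWithin)).exists
  have hε0 : 0 < ε := hε0
  have hsum : ∑ i : Fin m, (Ψs (Fin.natAdd d i) + ε) = ∑ i, Ψs (Fin.natAdd d i) + m * ε := by
    rw [Finset.sum_add_distrib]; simp
  have hsum' : ∑ i : Fin d, (Ψs (Fin.castAdd m i) + ε) = ∑ i, Ψs (Fin.castAdd m i) + d * ε := by
    rw [Finset.sum_add_distrib]; simp
  have hm0 : (0 : ℝ) ≤ m * ε := by positivity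
  have hd0 : (0 : ℝ) ≤ d * ε := by positivity
  -- at the largest order the formula is at most `d`
  have hsd : s' ≤ d := by
    have : Nonempty (Fin d) := ⟨⟨0, hd⟩⟩
    obtain ⟨i, hi⟩ := Finite.exists_max (fun i : Fin d => Ψs (Fin.castAdd m i))
    have e : ∑ j, max (Ψs (Fin.castAdd m i) - Ψs (Fin.castAdd m j)) 0
        = d * Ψs (Fin.castAdd m i) - ∑ j : Fin d, Ψs (Fin.castAdd m j) := by
      rw [Finset.sum_congr rfl fun j _ => max_eq_left (sub_nonneg.mpr (hi j)),
        Finset.sum_sub_distrib]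
      simp
    have h := hs' i
    rw [e] at h
    have h3 := h₃ (Fin.castAdd m i)
    by_contra hcon
    push Not at hcon
    nlinarith
  refine lower_bound hd hm Ψ hpos Ψs hlimΨs α hα (fun j => Ψs (Fin.castAdd m j) + ε)
    (fun i => Ψs (Fin.natAdd d i) + ε) (fun j => by linarith [h₃ (Fin.castAdd m j)])
    (fun i => by linarith [h₃ (Fin.natAdd d i)]) (fun j => by linarith) (fun j => by linarith)
    (by rw [hsum]; linarith) (by rw [hsum, hsum']; linarith) s s' hs hss hsd fun i => ?_
  rw [hsum]
  simp only [add_sub_add_right_eq_sub]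
  have := hε1 i
  linarith

/-- Corollary: Hausdorff dimension of `𝔚_n(Ψ) ∩ Π_α` for general approximation
functions `Ψ` whose logarithmic orders `Ψ*` exist, are positive and finite. -/
theorem dimH_WsetF_inter_hyperplane {p : ℕ} [Fact p.Prime] {d m : ℕ}
    (hd : 1 ≤ d) (hm : 1 ≤ m) (Ψ : Fin (d + m) → ℕ → ℝ)
    (hpos : ∀ i q, 0 < Ψ i q)
    (hlim : ∀ i, Filter.Tendsto (Ψ i) Filter.atTop (nhds 0))
    (Ψs : Fin (d + m) → ℝ) (hΨs : ∀ i, 0 < Ψs i)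
    (hlimΨs : ∀ i, Filter.Tendsto
      (fun q : ℕ => -Real.log (Ψ i q) / Real.log q) Filter.atTop (nhds (Ψs i)))
    (h₁ : ∑ i : Fin m, Ψs (Fin.natAdd d i) < (m : ℝ) + 1)
    (h₂ : ((d : ℝ) + m) + 1 < ∑ i, Ψs i)
    (h₃ : ∀ i, 1 < Ψs i)
    (α : Fin m → ℤ_[p]) (hα : dioExp α = (m : ℝ) + 1) :
    dimH (WsetF Ψ ∩ Pialpha α) = ENNReal.ofReal (⨅ i : Fin d,
      (((d : ℝ) + m + 1 - ∑ i' : Fin m, Ψs (Fin.natAdd d i') +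
        ∑ j ∈ Finset.univ.filter
          (fun j : Fin d => Ψs (Fin.castAdd m j) ≤ Ψs (Fin.castAdd m i)),
          (Ψs (Fin.castAdd m i) - Ψs (Fin.castAdd m j))) / Ψs (Fin.castAdd m i))) := by
  have : Nonempty (Fin d) := ⟨⟨0, hd⟩⟩
  simp only [sum_filter_sub_eq (fun j : Fin d => Ψs (Fin.castAdd m j))]
  set f : Fin d → ℝ := fun i => ((d : ℝ) + m + 1 - ∑ i' : Fin m, Ψs (Fin.natAdd d i') +
    ∑ j, max (Ψs (Fin.castAdd m i) - Ψs (Fin.castAdd m j)) 0) / Ψs (Fin.castAdd m i) with hf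
  -- an index at which the minimum is attained
  obtain ⟨i₀, hi₀⟩ := exists_eq_ciInf_of_finite (f := f)
  rw [← hi₀]
  have hmin : ∀ i, f i₀ ≤ f i := fun i => hi₀ ▸ ciInf_le (Set.finite_range f).bddBelow i
  apply le_antisymm
  · by_contra hcon
    push Not at hcon
    obtain ⟨r, hr1, hr2⟩ := ENNReal.lt_iff_exists_nnreal_btwn.mp hcon
    have h4 : f i₀ < r := by
      by_contra h
      push Not at h
      have := ENNReal.ofReal_le_ofReal h
      rw [ENNReal.ofReal_coe_nnreal] at this
      exact absurd hr1 (not_lt.mpr this)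
    rw [hf, div_lt_iff₀ (hΨs _)] at h4
    have h5 := upper_bound hd hm Ψ hpos hlim Ψs hlimΨs h₁ h₃ α hα i₀ r r.coe_nonneg h4
    rw [ENNReal.ofReal_coe_nnreal] at h5
    exact absurd hr2 (not_lt.mpr h5)
  · by_contra hcon
    push Not at hcon
    obtain ⟨r, hr1, hr2⟩ := ENNReal.lt_iff_exists_nnreal_btwn.mp hcon
    have hr0 : (0 : ℝ) < r := by
      have : (0 : ℝ≥0∞) < r := (zero_le).trans_lt hr1
      exact_mod_cast this
    have h4 : (r : ℝ) < f i₀ := by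
      by_contra h
      push Not at h
      have := ENNReal.ofReal_le_ofReal h
      rw [ENNReal.ofReal_coe_nnreal] at this
      exact absurd hr2 (not_lt.mpr this)
    obtain ⟨s', h5, h6⟩ := exists_between h4
    have h7 := lower_bound_perturbed hd hm Ψ hpos Ψs hlimΨs h₁ h₂ h₃ α hα r s' hr0 h5 fun i => by
      have := h6.trans_le (hmin i)
      rwa [hf, lt_div_iff₀ (hΨs _)] at this
    rw [ENNReal.ofReal_coe_nnreal] at h7
    exact absurd hr1 (not_lt.mpr h7)
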